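/- Let K and L be convex bodies in ℝ³, both centrally symmetric about the origin O, with L contained in the interior of K and L strictly convex. Suppose that for every point z on the boundary of K the graze Σ(L,z) is contained in a plane Δ_z, and that K is almost free with respect to L. Then for every x ∈ bd K, the set Ω_x := S(L,x) ∩ S(L,−x) is homothetic to the graze Σ(L,x) with centre of homothety at x: there exists λ > 0 such that Ω_x = {x + λ(p − x) : p ∈ Σ(L,x)}. -/

import Mathlib

open Metric Set

noncomputable section

/-- The ambient space ℝ³. -/
abbrev E3 := EuclideanSpace ℝ (Fin 3)

/-- The cone generated by `L` with apex `x`: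
`C(L,x) = {x + λ (y - x) : y ∈ L, λ ≥ 0}`. -/
def coneGen (L : Set E3) (x : E3) : Set E3 :=
  {p | ∃ y ∈ L, ∃ l : ℝ, 0 ≤ l ∧ p = x + l • (y - x)}

/-- The support cone `S(L,x)` of `L` from `x`, the boundary of `C(L,x)`. -/
def suppCone (L : Set E3) (x : E3) : Set E3 := frontier (coneGen L x)

/-- The graze `Σ(L,x) = S(L,x) ∩ bd L`. -/
def graze (L : Set E3) (x : E3) : Set E3 := suppCone L x ∩ frontier L

/-- An affine subspace of `ℝ³` is a plane if its direction is 2-dimensional. -/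
def IsPlane (P : AffineSubspace ℝ E3) : Prop :=
  Module.finrank ℝ P.direction = 2

/-- The line through two points. -/
def lineThrough (a b : E3) : Set E3 := ↑(affineSpan ℝ ({a, b} : Set E3))

/-- `K` is almost free with respect to `L` (given the planes `Δ z` containing the
grazes `Σ(L,z)` for `z ∈ bd K`): for every `z ∈ bd K` and every
`w ∈ Π_z ∩ bd K`, where `Π_z` is the plane through the origin parallel to `Δ z`,
the line through `z` and `w` does not meet `L`. -/
def AlmostFree (K L : Set E3) (Δ : E3 → AffineSubspace ℝ E3) : Prop :=
  ∀ z ∈ frontier K, ∀ w ∈ (↑(Δ z).direction : Set E3) ∩ frontier K,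
    Disjoint (lineThrough z w) L


open Filter Topology in
lemma p1_expand (H μ : ℝ → ℝ) (hsub : ∀ s1 s2, μ s1 * (s2 - s1) ≤ H s2 - H s1)
    (t R : ℝ) (hd : HasDerivAt μ R t) (η : ℝ) (hη : 0 < η) :
    ∃ δ > 0, ∀ h, |h| < δ → |μ (t + h) - μ t - R * h| ≤ η * |h| ∧
      |H (t + h) - H t - h * μ t - R / 2 * h ^ 2| ≤ 2 * η * h ^ 2 := by
  have h1 : ∀ᶠ x in 𝓝 t, |μ x - μ t - R * (x - t)| ≤ η * |x - t| := by
    have := (hasDerivAt_iff_isLittleO.1 hd).def hη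
    filter_upwards [this] with x hx
    simpa [mul_comm] using hx
  obtain ⟨δ, hδ, hb⟩ := Metric.eventually_nhds_iff.1 h1
  have hb' : ∀ h, |h| < δ → |μ (t + h) - μ t - R * h| ≤ η * |h| := by
    intro h hh
    have := @hb (t + h) (by simpa [Real.dist_eq] using hh)
    simpa using this
  refine ⟨δ, hδ, fun h hh => ⟨hb' h hh, ?_⟩⟩
  obtain ⟨n, hn⟩ := exists_nat_gt (|R| / (2 * η))
  have hnpos : (0 : ℝ) < n := lt_of_le_of_lt (by positivity) hn
  have hn0 : (n : ℝ) ≠ 0 := hnpos.ne'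
  set k := h / n with hk
  have hkn : n * k = h := by rw [hk]; field_simp
  let φ : ℝ → ℝ := fun s => H (t + s) - s * μ t - R / 2 * s ^ 2
  have habs : ∀ i : ℕ, i ≤ n → |(i : ℝ) * k| ≤ |h| := by
    intro i hi
    rw [← hkn, abs_mul, abs_mul]
    have : (i : ℝ) ≤ n := by exact_mod_cast hi
    rw [abs_of_nonneg (a := (i:ℝ)) (by positivity), abs_of_nonneg (a := (n:ℝ)) (by positivity)]
    gcongr
  have hstep : ∀ i ∈ Finset.range n, |φ ((i + 1 : ℕ) * k) - φ (i * k)| ≤ |R| / 2 * k ^ 2 + η * |h| * |k| := by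
    intro i hi
    have hi' : i < n := Finset.mem_range.1 hi
    have a1 := habs i hi'.le
    have a2 := habs (i + 1) hi'
    push_cast at a2 ⊢
    have b1 := hb' _ (lt_of_le_of_lt a1 hh)
    have b2 := hb' _ (lt_of_le_of_lt a2 hh)
    have c1 := hsub (t + i * k) (t + (i + 1) * k)
    have c2 := hsub (t + (i + 1) * k) (t + i * k)
    have d1 : |(μ (t + i * k) - μ t - R * (i * k)) * k| ≤ η * |h| * |k| := by
      rw [abs_mul]; gcongr; exact b1.trans (by gcongr)
    have d2 : |(μ (t + (i + 1) * k) - μ t - R * ((i + 1) * k)) * k| ≤ η * |h| * |k| := by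
      rw [abs_mul]; gcongr; exact b2.trans (by gcongr)
    have e1 := (abs_le.1 d1).1
    have e2 := (abs_le.1 d2).2
    have r1 : R / 2 * k ^ 2 ≤ |R| / 2 * k ^ 2 := by gcongr; exact le_abs_self R
    simp only [φ]
    rw [abs_le]
    constructor <;> nlinarith
  have hsum : |φ h - φ 0| ≤ n * (|R| / 2 * k ^ 2 + η * |h| * |k|) := by
    have := Finset.sum_range_sub (fun i : ℕ => φ (i * k)) n
    simp only [hkn] at this
    have h3 : φ h - φ 0 = ∑ i ∈ Finset.range n, (φ ((i + 1 : ℕ) * k) - φ (i * k)) := by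
      rw [this]; simp
    rw [h3]
    refine (Finset.abs_sum_le_sum_abs _ _).trans ((Finset.sum_le_sum hstep).trans ?_)
    simp [mul_add]
  have h4 : φ h - φ 0 = H (t + h) - H t - h * μ t - R / 2 * h ^ 2 := by
    simp [φ]; ring
  rw [← h4]
  refine hsum.trans ?_
  have h5 : n * (|R| / 2 * k ^ 2 + η * |h| * |k|) = |R| / (2 * n) * h ^ 2 + η * h ^ 2 := by
    have : |h| = n * |k| := by rw [← hkn, abs_mul, abs_of_pos hnpos]
    rw [this]
    have h6 : |k| * |k| = k ^ 2 := by rw [← sq, sq_abs]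
    rw [← hkn]
    have h7 : η * (n * |k|) * |k| = η * n * k ^ 2 := by rw [← h6]; ring
    rw [h7]; field_simp
  rw [h5]
  have h8 : |R| / (2 * n) ≤ η := by
    rw [div_lt_iff₀ (by positivity)] at hn
    rw [div_le_iff₀ (by positivity)]
    linarith
  nlinarith [sq_nonneg h]

/-- widths of chords of `Z` at a given level of `v + t u`. -/
def chordSet (Z : Set (ℝ × ℝ)) (t l : ℝ) : Set ℝ :=
  {w | ∃ z ∈ Z, ∃ z' ∈ Z, z.1 + t * z.2 = l ∧ z'.1 + t * z'.2 = l ∧ w = z.2 - z'.2}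

set_option maxHeartbeats 1000000 in
open Filter Topology in
lemma p1_core (Z : Set (ℝ × ℝ)) (hZ : Convex ℝ Z) (M : ℝ) 
    (hM : ∀ z ∈ Z, ∀ z' ∈ Z, z.2 - z'.2 ≤ M)
    (m : ℝ → ℝ × ℝ) (hm : ∀ t, m t ∈ Z) (hmax : ∀ t, ∀ z ∈ Z, z.1 + t * z.2 ≤ (m t).1 + t * (m t).2)
    (t R : ℝ) (hR : 0 ≤ R) (hd : HasDerivAt (fun t => (m t).2) R t)
    (d : ℝ) (hd0 : 0 < d) (W : ℝ → ℝ)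
    (hW : ∀ ε, 0 < ε → ε < d → IsGreatest (chordSet Z t ((m t).1 + t * (m t).2 - ε)) (W ε)) 
    (η : ℝ) (hη : 0 < η) :
    ∃ k > 0, ∀ ε, 0 < ε → ε < k → 0 ≤ W ε ∧ W ε / √ε ≤ 2 * √(2 * (R + 6 * η)) ∧ 
      4 * (R - η) / √(2 * (R + 6 * η)) - 4 * M / d * √ε ≤ W ε / √ε := by
  obtain ⟨δ, hδ, hex⟩ := p1_expand (fun t => (m t).1 + t * (m t).2) (fun t => (m t).2)
    (fun s1 s2 => by have := hmax s2 (m s1) (hm s1); nlinarith) t R hd η hη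
  set a := √(2 * (R + 6 * η)) with ha
  have hapos : 0 < a := Real.sqrt_pos.2 (by positivity)
  have ha2 : a ^ 2 = 2 * (R + 6 * η) := Real.sq_sqrt (by positivity)
  refine ⟨min (d / 2) ((a * δ / 2) ^ 2), by positivity, fun ε hε hεk => ?_⟩
  have hεd : ε < d / 2 := hεk.trans_le (min_le_left _ _)
  have hε2 := hεk.trans_le (min_le_right _ _)
  set σ := √ε with hσ
  have hσpos : 0 < σ := Real.sqrt_pos.2 hε
  have hσ2 : σ ^ 2 = ε := Real.sq_sqrt hε.le
  have hσl : σ < a * δ / 2 := by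
    rw [← hσ2] at hε2
    exact lt_of_pow_lt_pow_left₀ 2 (by positivity) hε2
  set h := 2 * σ / a with hh
  have hhpos : 0 < h := by positivity
  have hhδ : h < δ := by rw [hh, div_lt_iff₀ hapos]; linarith
  have hah : a * h = 2 * σ := by rw [hh]; field_simp
  have hh2 : (R / 2 + 3 * η) * h ^ 2 = ε := by
    have : (a * h) ^ 2 = 4 * ε := by rw [hah]; nlinarith
    rw [mul_pow, ha2] at this
    linarith
  obtain ⟨p1, p2⟩ := hex h (by rwa [abs_of_pos hhpos])
  obtain ⟨n1, n2⟩ := hex (-h) (by rwa [abs_neg, abs_of_pos hhpos])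
  rw [abs_neg] at n1
  rw [abs_of_pos hhpos] at p1 n1
  rw [abs_le] at p1 p2 n1 n2
  have hεd' : ε < d := by linarith
  obtain ⟨⟨z, hz, z', hz', e1, e2, e3⟩, hub⟩ := hW ε hε hεd'
  have hub' : ∀ y ∈ Z, ∀ y' ∈ Z, y.1 + t * y.2 = (m t).1 + t * (m t).2 - ε → 
    y'.1 + t * y'.2 = (m t).1 + t * (m t).2 - ε → y.2 - y'.2 ≤ W ε := 
    fun y hy y' hy' f1 f2 => hub ⟨y, hy, y', hy', f1, f2, rfl⟩
  have hW0 : 0 ≤ W ε := by simpa using hub' z hz z hz e1 e1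
  refine ⟨hW0, ?_, ?_⟩
  · rw [div_le_iff₀ hσpos, e3]
    have f1 := hmax (t + h) z hz
    have f2 := hmax (t + -h) z' hz'
    have g1 : h * (z.2 - (m t).2) ≤ 2 * ε := by nlinarith [sq_nonneg h, p2.2]
    have g2 : h * ((m t).2 - z'.2) ≤ 2 * ε := by nlinarith [sq_nonneg h, n2.2]
    have g3 : h * (z.2 - z'.2) ≤ h * (2 * a * σ) := by
      have : h * (2 * a * σ) = 4 * ε := by
        have : h * (2 * a * σ) = (a * h) * 2 * σ := by ring
        rw [this, hah, ← hσ2]; ring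
      linarith
    exact le_of_mul_le_mul_left g3 hhpos
  · -- deep point
    obtain ⟨⟨y, hy, -, -, y1, -, -⟩, -⟩ := hW (d / 2) (by linarith) (by linarith)
    have key : ∀ s, (m t).1 + t * (m t).2 - ε ≤ (m s).1 + t * (m s).2 → 
       ∃ q ∈ Z, q.1 + t * q.2 = (m t).1 + t * (m t).2 - ε ∧ |q.2 - (m s).2| ≤ 2 * M * ε / d := by
      intro s hs
      set dd := (m t).1 + t * (m t).2 - ((m s).1 + t * (m s).2) with hdd
      have hdd0 : 0 ≤ dd := by have := hmax t (m s) (hm s); linarith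
      have hddε : dd ≤ ε := by linarith
      set l := (ε - dd) / (d / 2 - dd) with hl
      have hden : 0 < d / 2 - dd := by linarith
      have hl0 : 0 ≤ l := div_nonneg (by linarith) hden.le
      have hl1 : l ≤ 1 := by rw [hl, div_le_one hden]; linarith
      have hlε : l ≤ 2 * ε / d := by
        rw [hl, div_le_div_iff₀ hden hd0]; nlinarith
      have hleq : l * (d / 2 - dd) = ε - dd := by rw [hl]; exact div_mul_cancel₀ _ hden.ne'
      refine ⟨(1 - l) • m s + l • y, hZ (hm s) hy (by linarith) hl0 (by ring), ?_, ?_⟩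
      · simp only [Prod.fst_add, Prod.snd_add, Prod.smul_fst, Prod.smul_snd, smul_eq_mul]
        linear_combination (-1 : ℝ) * hleq + l * y1 + (l - 1) * hdd
      · simp only [Prod.fst_add, Prod.snd_add, Prod.smul_fst, Prod.smul_snd, smul_eq_mul]
        have : (1 - l) * (m s).2 + l * y.2 - (m s).2 = l * (y.2 - (m s).2) := by ring
        rw [this, abs_mul, abs_of_nonneg hl0]
        have h9 : |y.2 - (m s).2| ≤ M := abs_le.2 ⟨by linarith [hM _ (hm s) _ hy], hM _ hy _ (hm s)⟩
        calc l * |y.2 - (m s).2| ≤ 2 * ε / d * M := by gcongr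
          _ = 2 * M * ε / d := by ring
    have g1 : (m t).1 + t * (m t).2 - ε ≤ (m (t + h)).1 + t * (m (t + h)).2 := by
      nlinarith [sq_nonneg h, p2.1, p1.2]
    have g2 : (m t).1 + t * (m t).2 - ε ≤ (m (t + -h)).1 + t * (m (t + -h)).2 := by
      nlinarith [sq_nonneg h, n2.1, n1.1]
    obtain ⟨q, hq, q1, q2⟩ := key _ g1
    obtain ⟨q', hq', q1', q2'⟩ := key _ g2
    have := hub' q hq q' hq' q1 q1'
    rw [abs_le] at q2 q2'
    have h10 : 2 * (R - η) * h - 4 * M * ε / d ≤ W ε := by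
      have : 4 * M * ε / d = 2 * M * ε / d + 2 * M * ε / d := by ring
      nlinarith
    rw [le_div_iff₀ hσpos]
    have h11 : (4 * (R - η) / a - 4 * M / d * σ) * σ = 2 * (R - η) * h - 4 * M * ε / d := by
      rw [← hσ2, hh]; ring
    rw [h11]; exact h10

open Filter Topology MeasureTheory in
lemma chord_ae (Z : Set (ℝ × ℝ)) (hZc : IsCompact Z) (hZ : Convex ℝ Z) (hne : Z.Nonempty) :
    ∀ᵐ t : ℝ, ∃ c : ℝ, ∀ H, IsGreatest ((fun z : ℝ × ℝ => z.1 + t * z.2) '' Z) H → 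
      ∀ d > 0, ∀ W : ℝ → ℝ, (∀ ε, 0 < ε → ε < d → IsGreatest (chordSet Z t (H - ε)) (W ε)) →
      Tendsto (fun ε => W ε / √ε) (𝓝[>] 0) (𝓝 c) := by
  have hex : ∀ t : ℝ, ∃ z ∈ Z, ∀ z' ∈ Z, z'.1 + t * z'.2 ≤ z.1 + t * z.2 := by
    intro t
    obtain ⟨z, hz, hmx⟩ := hZc.exists_isMaxOn hne (f := fun z : ℝ × ℝ => z.1 + t * z.2) (by fun_prop)
    exact ⟨z, hz, fun z' hz' => hmx hz'⟩
  choose m hm hmax using hex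
  have hmono : Monotone (fun t => (m t).2) := by
    intro s t hst
    rcases hst.eq_or_lt with rfl | hlt
    · exact le_rfl
    have h1 := hmax s (m t) (hm t)
    have h2 := hmax t (m s) (hm s)
    have : 0 ≤ (t - s) * ((m t).2 - (m s).2) := by nlinarith
    have := nonneg_of_mul_nonneg_right this (by linarith)
    simpa using this
  obtain ⟨M, hM⟩ : ∃ M, ∀ z ∈ Z, ∀ z' ∈ Z, z.2 - z'.2 ≤ M := by
    obtain ⟨M, hM⟩ := hZc.exists_bound_of_continuousOn (f := fun z : ℝ × ℝ => z.2) (by fun_prop)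
    refine ⟨M + M, fun z hz z' hz' => ?_⟩
    have := hM z hz; have := hM z' hz'
    simp only [Real.norm_eq_abs, abs_le] at *
    linarith
  filter_upwards [hmono.ae_differentiableAt] with t ht
  set R := deriv (fun t => (m t).2) t with hRdef
  have hd : HasDerivAt (fun t => (m t).2) R t := ht.hasDerivAt
  have hR : 0 ≤ R := hmono.deriv_nonneg
  refine ⟨2 * √(2 * R), fun H hH d hd0 W hW => ?_⟩
  have hHeq : H = (m t).1 + t * (m t).2 := by
    apply le_antisymm
    · obtain ⟨z, hz, rfl⟩ := hH.1
      exact hmax t z hz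
    · exact hH.2 ⟨m t, hm t, rfl⟩
  rw [hHeq] at hW
  have core := p1_core Z hZ M hM m hm hmax t R hR hd d hd0 W hW
  have core' : ∀ η > 0, ∀ᶠ ε in 𝓝[>] (0:ℝ), 0 ≤ W ε ∧ W ε / √ε ≤ 2 * √(2 * (R + 6 * η)) ∧ 
      4 * (R - η) / √(2 * (R + 6 * η)) - 4 * M / d * √ε ≤ W ε / √ε := by
    intro η hη
    obtain ⟨k, hk, hk2⟩ := core η hη
    filter_upwards [Ioo_mem_nhdsGT hk] with ε hε using hk2 ε hε.1 hε.2
  rw [tendsto_order]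
  constructor
  · intro a ha
    rcases hR.eq_or_lt with h0 | hpos
    · filter_upwards [core' 1 one_pos] with ε hε
      refine lt_of_lt_of_le ?_ (div_nonneg hε.1 (Real.sqrt_nonneg _))
      simpa [← h0] using ha
    · have hc : ContinuousAt (fun η : ℝ => 4 * (R - η) / √(2 * (R + 6 * η))) 0 := by
        apply ContinuousAt.div (by fun_prop) (by fun_prop)
        simp; positivity
      have hv : 4 * (R - 0) / √(2 * (R + 6 * 0)) = 2 * √(2 * R) := by
        have h1 : 0 < √(2 * R) := Real.sqrt_pos.2 (by positivity)
        have h2 : √(2 * R) ^ 2 = 2 * R := Real.sq_sqrt (by positivity)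
        simp only [mul_zero, add_zero, sub_zero]
        rw [div_eq_iff h1.ne']; nlinarith
      have hev : ∀ᶠ η in 𝓝 (0:ℝ), (a + 2 * √(2 * R)) / 2 < 4 * (R - η) / √(2 * (R + 6 * η)) := by
        apply hc.eventually_const_lt
        show _ < 4 * (R - 0) / √(2 * (R + 6 * 0))
        rw [hv]; linarith
      obtain ⟨η, hη1, hη2⟩ := ((hev.filter_mono nhdsWithin_le_nhds).and 
        (self_mem_nhdsWithin : ∀ᶠ η in 𝓝[>] (0:ℝ), η ∈ Ioi (0:ℝ))).exists
      have hsm : ∀ᶠ ε in 𝓝[>] (0:ℝ), 4 * M / d * √ε < (2 * √(2 * R) - a) / 2 := by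
        apply nhdsWithin_le_nhds
        have : ContinuousAt (fun ε : ℝ => 4 * M / d * √ε) 0 := by fun_prop
        apply this.eventually_lt_const
        show 4 * M / d * √0 < _
        rw [Real.sqrt_zero, mul_zero]; linarith
      filter_upwards [core' η hη2, hsm] with ε h1 h2
      linarith [h1.2.2]
  · intro a ha
    have hc : ContinuousAt (fun η : ℝ => 2 * √(2 * (R + 6 * η))) 0 := by fun_prop
    have hev : ∀ᶠ η in 𝓝 (0:ℝ), 2 * √(2 * (R + 6 * η)) < a := by
      apply hc.eventually_lt_const
      simpa using ha
    obtain ⟨η, hη1, hη2⟩ := ((hev.filter_mono nhdsWithin_le_nhds).and 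
        (self_mem_nhdsWithin : ∀ᶠ η in 𝓝[>] (0:ℝ), η ∈ Ioi (0:ℝ))).exists
    filter_upwards [core' η hη2] with ε h1
    exact h1.2.1.trans_lt hη1



section Part2
variable {E : Type*} [NormedAddCommGroup E] [NormedSpace ℝ E]

open Filter Topology in
lemma tclm {ι : Type*} {l : Filter ι} {a : ι → E →L[ℝ] ℝ} {q : ι → E} {a0 : E →L[ℝ] ℝ} {q0 : E}
    (ha : Tendsto a l (𝓝 a0)) (hq : Tendsto q l (𝓝 q0)) : Tendsto (fun t => a t (q t)) l (𝓝 (a0 q0)) := by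
  have h : Continuous (fun x : (E →L[ℝ] ℝ) × E => x.1 x.2) := isBoundedBilinearMap_apply.continuous
  exact (h.tendsto (a0, q0)).comp (ha.prodMk_nhds hq)

/-- the largest slope `s` such that `a + s c ≤ e` on `P`. -/
def Up (P : Set E) (a c : E →L[ℝ] ℝ) (e : ℝ) : ℝ := sSup {s | ∀ q ∈ P, a q + s * c q ≤ e}

lemma extend_fun {P : Set E} (hP : Convex ℝ P) (a c : E →L[ℝ] ℝ) (e : ℝ)
    (h0 : ∀ p ∈ P, c p = 0 → a p ≤ e) (hp : ∃ p ∈ P, 0 < c p) (hn : ∃ p ∈ P, c p < 0) :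
    ∃ s : ℝ, ∀ p ∈ P, a p + s * c p ≤ e := by
  have key : ∀ p ∈ P, ∀ q ∈ P, 0 < c p → c q < 0 → (e - a q) / c q ≤ (e - a p) / c p := by
    intro p hp q hq h1 h2
    have hd : 0 < c p - c q := by linarith
    have hm : (c p / (c p - c q)) • q + (-c q / (c p - c q)) • p ∈ P :=
      hP hq hp (div_nonneg h1.le hd.le) (div_nonneg (by linarith) hd.le) 
        (by rw [← add_div, ← sub_eq_add_neg, div_self hd.ne'])
    have h3 := h0 _ hm (by simp; ring)
    simp only [map_add, map_smul, smul_eq_mul] at h3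
    have h4 : (c p / (c p - c q)) * a q + (-c q / (c p - c q)) * a p = (c p * a q - c q * a p) / (c p - c q) := by ring
    rw [h4, div_le_iff₀ hd] at h3
    rw [div_le_iff_of_neg h2, div_mul_eq_mul_div, div_le_iff₀ h1]
    nlinarith
  obtain ⟨p0, hp0, hp1⟩ := hp
  obtain ⟨q0, hq0, hq1⟩ := hn
  let S : Set ℝ := {r | ∃ p ∈ P, 0 < c p ∧ r = (e - a p) / c p}
  have hne : S.Nonempty := ⟨_, p0, hp0, hp1, rfl⟩
  have hbdd : BddBelow S := ⟨(e - a q0) / c q0, by rintro r ⟨p, hp, h1, rfl⟩; exact key p hp q0 hq0 h1 hq1⟩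
  refine ⟨sInf S, fun p hp => ?_⟩
  rcases lt_trichotomy (c p) 0 with h | h | h
  · have : (e - a p) / c p ≤ sInf S := le_csInf hne (by
      rintro r ⟨p', hp', h1, rfl⟩; exact key p' hp' p hp h1 h)
    rw [div_le_iff_of_neg h] at this
    linarith
  · rw [h]; simpa using h0 p hp h
  · have : sInf S ≤ (e - a p) / c p := csInf_le hbdd ⟨p, hp, h, rfl⟩
    rw [le_div_iff₀ h] at this
    linarith

lemma Up_eq {P : Set E} {a c : E →L[ℝ] ℝ} {e V : ℝ} {p : E} (hle : ∀ q ∈ P, a q + V * c q ≤ e) 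
    (hp : p ∈ P) (heq : a p + V * c p = e) (hc : 0 < c p) : Up P a c e = V := by
  apply IsGreatest.csSup_eq
  refine ⟨hle, fun s hs => ?_⟩
  have := hs p hp
  by_contra hcon
  push Not at hcon
  nlinarith

lemma Up_spec {P : Set E} (hPc : IsCompact P) (hP : Convex ℝ P) (a c : E →L[ℝ] ℝ) (e : ℝ)
    (h0 : ∀ p ∈ P, c p = 0 → a p < e) (hp : ∃ p ∈ P, 0 < c p) (hn : ∃ p ∈ P, c p < 0) :
    (∀ q ∈ P, a q + Up P a c e * c q ≤ e) ∧ ∃ p ∈ P, a p + Up P a c e * c p = e ∧ 0 < c p := by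
  obtain ⟨s0, hs0⟩ := extend_fun hP a c e (fun p hp h => (h0 p hp h).le) hp hn
  set S : Set ℝ := {s | ∀ q ∈ P, a q + s * c q ≤ e} with hS
  have hne : S.Nonempty := ⟨s0, hs0⟩
  obtain ⟨p0, hp0, hp1⟩ := hp
  have hbdd : BddAbove S := by
    refine ⟨(e - a p0) / c p0, fun s hs => ?_⟩
    rw [le_div_iff₀ hp1]; linarith [hs p0 hp0]
  have hcl : IsClosed S := by
    have : S = ⋂ q ∈ P, {s | a q + s * c q ≤ e} := by ext; simp [hS]
    rw [this]
    exact isClosed_biInter fun q _ => isClosed_le (by fun_prop) (by fun_prop)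
  have hmem : Up P a c e ∈ S := hcl.csSup_mem hne hbdd
  refine ⟨hmem, ?_⟩
  by_contra hcon
  push Not at hcon
  set V := Up P a c e with hV
  have hlt : ∀ q ∈ P, 0 ≤ c q → a q + V * c q < e := by
    intro q hq hcq
    rcases hcq.eq_or_lt with h | h
    · rw [← h]; simpa using h0 q hq h.symm
    · refine lt_of_le_of_ne (hmem q hq) (fun h' => ?_)
      exact absurd (hcon q hq h') (by linarith)
  let P' := P ∩ {q | 0 ≤ c q}
  have hP'c : IsCompact P' := hPc.inter_right (isClosed_le (by fun_prop) (by fun_prop))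
  obtain ⟨q1, hq1, hq2⟩ := hP'c.exists_isMaxOn ⟨p0, hp0, hp1.le⟩ (f := fun q => a q + V * c q) (by fun_prop)
  obtain ⟨C, hC⟩ := hP'c.exists_bound_of_continuousOn (f := fun q => c q) (by fun_prop)
  have hη := hlt q1 hq1.1 hq1.2
  set η := e - (a q1 + V * c q1) with hηd
  have hη0 : 0 < η := by linarith
  have hCp : 0 < C + 1 := by have := (norm_nonneg _).trans (hC q1 hq1); linarith
  have hnew : V + η / (C + 1) ∈ S := by
    intro q hq
    have hpos : 0 < η / (C + 1) := div_pos hη0 hCp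
    rcases lt_or_ge (c q) 0 with h | h
    · have := hmem q hq; nlinarith
    · have h1 : a q + V * c q ≤ a q1 + V * c q1 := hq2 ⟨hq, h⟩
      have h2 := hC q ⟨hq, h⟩
      rw [Real.norm_eq_abs, abs_of_nonneg h] at h2
      have h3 : η / (C + 1) * c q ≤ η := by
        rw [div_mul_eq_mul_div, div_le_iff₀ hCp]; nlinarith
      linarith
  have := le_csSup hbdd hnew
  have hpos : 0 < η / (C + 1) := div_pos hη0 hCp
  have : V + η / (C + 1) ≤ V := this
  linarith

open Filter Topology in
lemma env_cont {P : Set E} (hPc : IsCompact P) (a c : ℝ → E →L[ℝ] ℝ) (e V : ℝ → ℝ) (p : ℝ → E) (t0 : ℝ)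
    (hp : ∀ t, p t ∈ P) (hle : ∀ t, ∀ q ∈ P, a t q + V t * c t q ≤ e t)
    (heq : ∀ t, a t (p t) + V t * c t (p t) = e t) (hc : ∀ t, 0 < c t (p t))
    (huniq : ∀ q ∈ P, a t0 q + V t0 * c t0 q = e t0 → q = p t0)
    (hneg : ∃ q ∈ P, c t0 q < 0)
    (ha : ContinuousAt a t0) (hcc : ContinuousAt c t0) (he : ContinuousAt e t0) :
    ContinuousAt V t0 ∧ ContinuousAt p t0 := by
  -- local bounds
  have hub : ∀ᶠ t in 𝓝 t0, V t ≤ (e t0 - a t0 (p t0)) / c t0 (p t0) + 1 := by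
    have h1 : ContinuousAt (fun t => (e t - a t (p t0)) / c t (p t0)) t0 := 
      (he.sub (ha.clm_apply continuousAt_const)).div (hcc.clm_apply continuousAt_const) (hc t0).ne'
    have h2 : ContinuousAt (fun t => c t (p t0)) t0 := hcc.clm_apply continuousAt_const
    filter_upwards [h1.eventually_lt_const (lt_add_one _), h2.eventually_const_lt (hc t0)] with t h3 h4
    refine le_trans ?_ h3.le
    rw [le_div_iff₀ h4]; linarith [hle t _ (hp t0)]
  have hlb : ∃ B, ∀ᶠ t in 𝓝 t0, B ≤ V t := by
    obtain ⟨q, hq, hq1⟩ := hneg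
    refine ⟨(e t0 - a t0 q) / c t0 q - 1, ?_⟩
    have h1 : ContinuousAt (fun t => (e t - a t q) / c t q) t0 := 
      (he.sub (ha.clm_apply continuousAt_const)).div (hcc.clm_apply continuousAt_const) hq1.ne
    have h2 : ContinuousAt (fun t => c t q) t0 := hcc.clm_apply continuousAt_const
    filter_upwards [h1.eventually_const_lt (sub_one_lt _), h2.eventually_lt_const hq1] with t h3 h4
    refine le_trans h3.le ?_
    rw [div_le_iff_of_neg h4]; linarith [hle t _ hq]
  obtain ⟨B, hB⟩ := hlb
  have key : Tendsto (fun t => (V t, p t)) (𝓝 t0) (𝓝 (V t0, p t0)) := by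
    refine (isCompact_Icc.prod hPc).tendsto_nhds_of_unique_mapClusterPt 
      (s := Icc B ((e t0 - a t0 (p t0)) / c t0 (p t0) + 1) ×ˢ P) ?_ ?_
    · filter_upwards [hub, hB] with t h1 h2
      exact ⟨⟨h2, h1⟩, hp t⟩
    · rintro ⟨V', p'⟩ ⟨-, hp'⟩ hcl
      rw [mapClusterPt_iff_ultrafilter] at hcl
      obtain ⟨U, hU, hUt⟩ := hcl
      have hV : Tendsto V U (𝓝 V') := (continuous_fst.tendsto _).comp hUt
      have hpt : Tendsto p U (𝓝 p') := (continuous_snd.tendsto _).comp hUt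
      have ha' := ha.tendsto.mono_left hU
      have hc' := hcc.tendsto.mono_left hU
      have he' := he.tendsto.mono_left hU
      have i1 : ∀ q ∈ P, a t0 q + V' * c t0 q ≤ e t0 := fun q hq => 
        le_of_tendsto_of_tendsto' ((tclm ha' tendsto_const_nhds).add (hV.mul (tclm hc' tendsto_const_nhds)))
          he' (fun t => hle t q hq)
      have i2 : a t0 p' + V' * c t0 p' = e t0 := 
        tendsto_nhds_unique (((tclm ha' hpt).add (hV.mul (tclm hc' hpt))).congr heq) he'
      have i3 : 0 ≤ c t0 p' := ge_of_tendsto' (tclm hc' hpt) (fun t => (hc t).le)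
      have j1 := i1 _ (hp t0)
      have j2 := heq t0
      have j3 := hle t0 p' hp'
      have hVle : V' ≤ V t0 := by
        by_contra h; push Not at h
        nlinarith [hc t0]
      have hVeq : V' = V t0 := by
        by_contra hne
        have hlt := lt_of_le_of_ne hVle hne
        have : c t0 p' = 0 := by
          apply le_antisymm _ i3
          by_contra h; push Not at h
          nlinarith
        have h6 := huniq p' hp' (by rw [this] at i2 ⊢; simpa using i2)
        have := hc t0
        rw [← h6] at this; linarith
      subst hVeq
      rw [huniq p' hp' i2]
  exact ⟨(continuous_fst.tendsto _).comp key, (continuous_snd.tendsto _).comp key⟩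

open Filter Topology in
lemma env_deriv {P : Set E} (a c : ℝ → E →L[ℝ] ℝ) (e V : ℝ → ℝ) (p : ℝ → E) (t0 : ℝ)
    (hp : ∀ t, p t ∈ P) (hle : ∀ t, ∀ q ∈ P, a t q + V t * c t q ≤ e t)
    (heq : ∀ t, a t (p t) + V t * c t (p t) = e t) (hc : ∀ t, 0 < c t (p t))
    (hpc : ContinuousAt p t0) (a' c' : E →L[ℝ] ℝ) (e' : ℝ)
    (ha : HasDerivWithinAt a a' (Ici t0) t0) (hcd : HasDerivWithinAt c c' (Ici t0) t0) 
    (he : HasDerivWithinAt e e' (Ici t0) t0) :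
    HasDerivWithinAt V ((e' - a' (p t0) - V t0 * c' (p t0)) / c t0 (p t0)) (Ici t0) t0 := by
  have hcc : Tendsto c (𝓝[>] t0) (𝓝 (c t0)) := 
    (hcd.continuousWithinAt.tendsto).mono_left (nhdsWithin_mono _ Ioi_subset_Ici_self)
  have hpc' : Tendsto p (𝓝[>] t0) (𝓝 (p t0)) := hpc.tendsto.mono_left nhdsWithin_le_nhds
  rw [← hasDerivWithinAt_Ioi_iff_Ici] at *
  rw [hasDerivWithinAt_iff_tendsto_slope' self_notMem_Ioi] at *
  have hF : ∀ q : ℝ → E, Tendsto q (𝓝[>] t0) (𝓝 (p t0)) → 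
      Tendsto (fun t => (slope e t0 t - slope a t0 t (q t) - V t0 * slope c t0 t (q t)) / c t (q t)) 
      (𝓝[>] t0) (𝓝 ((e' - a' (p t0) - V t0 * c' (p t0)) / c t0 (p t0))) := by
    intro q hq
    refine Tendsto.div ((he.sub (tclm ha hq)).sub ((tclm hcd hq).const_mul _)) (tclm hcc hq) (hc t0).ne'
  refine tendsto_of_tendsto_of_tendsto_of_le_of_le' (hF p hpc') (hF (fun _ => p t0) tendsto_const_nhds) ?_ ?_
  · filter_upwards [self_mem_nhdsWithin] with t ht
    have ht' : 0 < t - t0 := sub_pos.2 ht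
    rw [div_le_iff₀ (hc t)]
    simp only [slope, vsub_eq_sub, smul_apply, sub_apply, smul_eq_mul]
    have h1 := heq t
    have h2 := hle t0 _ (hp t)
    have : 0 ≤ (t - t0)⁻¹ := by positivity
    have h3 : (e t - e t0) - (a t (p t) - a t0 (p t)) - V t0 * (c t (p t) - c t0 (p t)) ≤ (V t - V t0) * c t (p t) := by
      linarith
    have := mul_le_mul_of_nonneg_left h3 this
    linarith
  · have hev : ∀ᶠ t in 𝓝[>] t0, 0 < c t (p t0) := 
      (tclm hcc (tendsto_const_nhds (x := p t0))).eventually_const_lt (hc t0)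
    filter_upwards [self_mem_nhdsWithin, hev] with t ht hct
    have ht' : 0 < t - t0 := sub_pos.2 ht
    rw [le_div_iff₀ hct]
    simp only [slope, vsub_eq_sub, smul_apply, sub_apply, smul_eq_mul]
    have h1 := hle t _ (hp t0)
    have h2 := heq t0
    have : 0 ≤ (t - t0)⁻¹ := by positivity
    have h3 : (V t - V t0) * c t (p t0) ≤ (e t - e t0) - (a t (p t0) - a t0 (p t0)) - V t0 * (c t (p t0) - c t0 (p t0)) := by
      linarith
    have := mul_le_mul_of_nonneg_left h3 this
    linarith
end Part2


section Part3a

open Filter Topology in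
lemma convex_right (G : ℝ → ℝ) (hG : ConvexOn ℝ univ G) : Continuous G ∧ ∃ γ : ℝ → ℝ, Monotone γ ∧
    (∀ t, HasDerivWithinAt G (γ t) (Ici t) t) ∧ (∀ t s, G t + γ t * (s - t) ≤ G s) ∧
    (∀ t, ContinuousWithinAt γ (Ici t) t) := by
  have hcont : Continuous G := by
    rw [← continuousOn_univ]; exact hG.continuousOn isOpen_univ
  let γ : ℝ → ℝ := fun t => derivWithin G (Ioi t) t
  have hmono : Monotone γ := by
    have := hG.monotoneOn_rightDeriv
    simpa [monotoneOn_univ] using this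
  have hder : ∀ t, HasDerivWithinAt G (γ t) (Ici t) t := by
    intro t
    rw [← hasDerivWithinAt_Ioi_iff_Ici]
    exact hG.hasDerivWithinAt_rightDeriv_of_mem_interior (by simp)
  have hsub : ∀ t s, G t + γ t * (s - t) ≤ G s := by
    intro t s
    rcases lt_trichotomy t s with h | h | h
    · have := hG.rightDeriv_le_slope_of_mem_interior (x := t) (y := s) (by simp) (by simp) h
      rw [slope_def_field, le_div_iff₀ (by linarith)] at this
      change γ t * (s - t) ≤ _ at this
      linarith
    · subst h; simp
    · have h1 := hG.slope_le_leftDeriv_of_mem_interior (x := s) (y := t) (by simp) (by simp) h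
      have h2 := hG.leftDeriv_le_rightDeriv_of_mem_interior (x := t) (by simp)
      have := h1.trans h2
      rw [slope_def_field, div_le_iff₀ (by linarith)] at this
      change _ ≤ γ t * (t - s) at this
      linarith
  refine ⟨hcont, γ, hmono, hder, hsub, fun t => ?_⟩
  rw [← continuousWithinAt_Ioi_iff_Ici]
  unfold ContinuousWithinAt
  rw [tendsto_order]
  constructor
  · intro a ha
    filter_upwards [self_mem_nhdsWithin] with s hs
    exact ha.trans_le (hmono (le_of_lt hs))
  · intro a ha
    have h1 := hder t
    rw [← hasDerivWithinAt_Ioi_iff_Ici, hasDerivWithinAt_iff_tendsto_slope' self_notMem_Ioi] at h1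
    obtain ⟨s, hs1, hs2⟩ := ((h1.eventually_lt_const ha).and self_mem_nhdsWithin).exists
    have hs2' : t < s := hs2
    have h2 : ContinuousAt (fun x => (G s - G x) / (s - x)) t := by
      apply ContinuousAt.div <;> first | fun_prop | linarith
    have h3 : ∀ᶠ x in 𝓝 t, (G s - G x) / (s - x) < a := by
      apply h2.eventually_lt_const
      simpa [slope_def_field] using hs1
    filter_upwards [h3.filter_mono nhdsWithin_le_nhds, Ioo_mem_nhdsGT hs2'] with x hx1 hx2
    refine lt_of_le_of_lt ?_ hx1
    rw [le_div_iff₀ (by linarith [hx2.2])]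
    linarith [hsub x s]

open MeasureTheory intervalIntegral Filter Topology in
/-- exponential of the primitive of a right-continuous function -/
lemma exp_prim (ρ : ℝ → ℝ) (hi : ∀ a b, IntervalIntegrable ρ volume a b) (hm : Measurable ρ)
    (hc : ∀ t, ContinuousWithinAt ρ (Ici t) t) (hpos : ∀ t, 0 ≤ ρ t) :
    ∃ r : ℝ → ℝ, Continuous r ∧ (∀ t, 0 < r t) ∧ r 0 = 1 ∧ 
      (∀ t, HasDerivWithinAt r (-(r t * ρ t)) (Ici t) t) ∧ r 1 ≤ 1 ∧ (0 < ρ 0 → r 1 < 1) := by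
  let F : ℝ → ℝ := fun t => ∫ x in (0:ℝ)..t, ρ x
  have hF : ∀ t, HasDerivWithinAt F (ρ t) (Ici t) t := by
    intro t
    exact integral_hasDerivWithinAt_right (hi 0 t) (t := Ioi t)
      (hm.stronglyMeasurable.stronglyMeasurableAtFilter) ((hc t).mono Ioi_subset_Ici_self)
  have hFc : Continuous F := continuous_primitive hi 0
  refine ⟨fun t => Real.exp (-F t), by fun_prop, fun t => Real.exp_pos _, by simp [F], ?_, ?_, ?_⟩
  · intro t
    have := (hF t).neg.exp
    simpa using this
  · have : 0 ≤ F 1 := integral_nonneg zero_le_one (fun u _ => hpos u)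
    simpa using this
  · intro h0
    have h1 : ∀ᶠ t in 𝓝[>] (0:ℝ), ρ 0 / 2 < ρ t := 
      ((hc 0).mono Ioi_subset_Ici_self).eventually_const_lt (by linarith)
    obtain ⟨δ, hδ, hδ2⟩ := mem_nhdsGT_iff_exists_Ioo_subset.1 h1
    have hδ0 : (0:ℝ) < δ := hδ
    set κ := min δ 1 with hκ
    have hκ0 : 0 < κ := by positivity
    have e1 : F 1 = F κ + ∫ x in κ..1, ρ x := (integral_add_adjacent_intervals (hi 0 κ) (hi κ 1)).symm
    have e2 : 0 ≤ ∫ x in κ..1, ρ x := integral_nonneg (min_le_right _ _) (fun u _ => hpos u)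
    have e3 : ∫ x in (0:ℝ)..κ, ρ 0 / 2 ≤ F κ := by
      apply integral_mono_on_of_le_Ioo hκ0.le (by simp) (hi 0 κ)
      intro x hx
      have : x ∈ Ioo 0 δ := ⟨hx.1, hx.2.trans_le (min_le_left _ _)⟩
      exact le_of_lt (hδ2 this)
    have e4 : 0 < F 1 := by
      rw [intervalIntegral.integral_const] at e3
      have : 0 < (κ - 0) • (ρ 0 / 2) := by simp; positivity
      linarith
    simpa using e4
end Part3a


section Part3b
variable {E : Type*} [NormedAddCommGroup E] [NormedSpace ℝ E]

/-- `(y,b)` describes the plane containing all the contact points seen from `(z1,z2,0)`. -/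
def PlaneAt (L : Set E) (p1 p2 p3 : E →L[ℝ] ℝ) (z1 z2 y1 y2 y3 b : ℝ) : Prop :=
  y1 * z1 + y2 * z2 - b = 1 ∧ ∀ p ∈ L, ∀ m1 m2 m3 : ℝ, (m1 ≠ 0 ∨ m2 ≠ 0 ∨ m3 ≠ 0) →
    (∀ q ∈ L, m1 * p1 q + m2 * p2 q + m3 * p3 q ≤ m1 * z1 + m2 * z2) →
    m1 * p1 p + m2 * p2 p + m3 * p3 p = m1 * z1 + m2 * z2 → 
    y1 * p1 p + y2 * p2 p + y3 * p3 p = b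

structure PData (L : Set E) (p1 p2 p3 : E →L[ℝ] ℝ) (g : ℝ → ℝ → ℝ) : Prop where
  comp : IsCompact L
  conv : Convex ℝ L
  symm : ∀ p ∈ L, -p ∈ L
  uniq : ∀ m1 m2 m3 e : ℝ, (m1 ≠ 0 ∨ m2 ≠ 0 ∨ m3 ≠ 0) → ∀ p ∈ L, ∀ p' ∈ L,
    (∀ q ∈ L, m1 * p1 q + m2 * p2 q + m3 * p3 q ≤ e) →
    m1 * p1 p + m2 * p2 p + m3 * p3 p = e → m1 * p1 p' + m2 * p2 p' + m3 * p3 p' = e → p = p'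
  surj : ∀ a b c : ℝ, ∃ ε > 0, ∃ p ∈ L, p1 p = ε * a ∧ p2 p = ε * b ∧ p3 p = ε * c
  gadd : ∀ a a' b b', g (a + a') (b + b') ≤ g a b + g a' b'
  ghom : ∀ l a b, 0 ≤ l → g (l * a) (l * b) = l * g a b
  geven : ∀ a b, g (-a) (-b) = g a b
  gpos : ∀ a b, (a ≠ 0 ∨ b ≠ 0) → 0 < g a b
  glt : ∀ p ∈ L, p3 p = 0 → g (p1 p) (p2 p) < 1
  plane : ∀ z1 z2, g z1 z2 = 1 → ∃ y1 y2 y3 b, PlaneAt L p1 p2 p3 z1 z2 y1 y2 y3 b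

/-- the section by the plane `p3 = 0` -/
def LQ (L : Set E) (p3 : E →L[ℝ] ℝ) : Set E := {p | p ∈ L ∧ p3 p = 0}

variable {L : Set E} {p1 p2 p3 : E →L[ℝ] ℝ} {g : ℝ → ℝ → ℝ}

lemma LQ_comp (hL : IsCompact L) : IsCompact (LQ L p3) := 
  hL.inter_right (isClosed_eq (by fun_prop) (by fun_prop))

lemma LQ_conv (hL : Convex ℝ L) : Convex ℝ (LQ L p3) := by
  intro x hx y hy a b ha hb hab
  refine ⟨hL hx.1 hy.1 ha hb hab, ?_⟩
  simp [hx.2, hy.2]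

lemma PData.extend (D : PData L p1 p2 p3 g) (m1 m2 e : ℝ) 
    (h : ∀ q ∈ LQ L p3, m1 * p1 q + m2 * p2 q ≤ e) : 
    ∃ s : ℝ, ∀ q ∈ L, m1 * p1 q + m2 * p2 q + s * p3 q ≤ e := by
  obtain ⟨s, hs⟩ := extend_fun D.conv (m1 • p1 + m2 • p2) p3 e
    (fun p hp h0 => by simpa using h p ⟨hp, h0⟩)
    (by obtain ⟨ε, hε, p, hp, -, -, h3⟩ := D.surj 0 0 1; exact ⟨p, hp, by rw [h3]; simpa using hε⟩)
    (by obtain ⟨ε, hε, p, hp, -, -, h3⟩ := D.surj 0 0 (-1); exact ⟨p, hp, by rw [h3]; linarith⟩)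
  exact ⟨s, fun q hq => by simpa using hs q hq⟩

lemma PData.uniqQ (D : PData L p1 p2 p3 g) (m1 m2 e : ℝ) (hm : m1 ≠ 0 ∨ m2 ≠ 0) 
    (p : E) (hp : p ∈ LQ L p3) (p' : E) (hp' : p' ∈ LQ L p3)
    (h : ∀ q ∈ LQ L p3, m1 * p1 q + m2 * p2 q ≤ e) (h1 : m1 * p1 p + m2 * p2 p = e)
    (h2 : m1 * p1 p' + m2 * p2 p' = e) : p = p' := by
  obtain ⟨s, hs⟩ := D.extend m1 m2 e h
  refine D.uniq m1 m2 s e (by tauto) p hp.1 p' hp'.1 hs ?_ ?_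
  · rw [hp.2]; linarith
  · rw [hp'.2]; linarith

/-- contact points in the section lie in the plane -/
lemma PlaneAt.contactQ (D : PData L p1 p2 p3 g) {z1 z2 y1 y2 y3 b : ℝ} 
    (hy : PlaneAt L p1 p2 p3 z1 z2 y1 y2 y3 b) (m1 m2 : ℝ) (hm : m1 ≠ 0 ∨ m2 ≠ 0)
    (p : E) (hp : p ∈ LQ L p3) (h : ∀ q ∈ LQ L p3, m1 * p1 q + m2 * p2 q ≤ m1 * z1 + m2 * z2) 
    (h1 : m1 * p1 p + m2 * p2 p = m1 * z1 + m2 * z2) : y1 * p1 p + y2 * p2 p = b := by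
  obtain ⟨s, hs⟩ := D.extend m1 m2 _ h
  have := hy.2 p hp.1 m1 m2 s (by tauto) hs (by rw [hp.2]; linarith)
  rw [hp.2] at this; linarith

/-- static description of the two tangents from the boundary point in direction `(1-t,t)`. -/
structure Stat (L : Set E) (p1 p2 p3 : E →L[ℝ] ℝ) (G γ t T S : ℝ) (q1 q2 : E) : Prop where
  m1 : q1 ∈ LQ L p3
  m2 : q2 ∈ LQ L p3
  leT : ∀ q ∈ LQ L p3, G * (p1 q + p2 q) + T * (-t * p1 q + (1 - t) * p2 q) ≤ 1
  leS : ∀ q ∈ LQ L p3, G * (p1 q + p2 q) + S * (-t * p1 q + (1 - t) * p2 q) ≤ 1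
  eqT : G * (p1 q1 + p2 q1) + T * (-t * p1 q1 + (1 - t) * p2 q1) = 1
  eqS : G * (p1 q2 + p2 q2) + S * (-t * p1 q2 + (1 - t) * p2 q2) = 1
  pos : 0 < -t * p1 q1 + (1 - t) * p2 q1
  neg : -t * p1 q2 + (1 - t) * p2 q2 < 0
  lt1 : S < γ
  lt2 : γ < T

lemma PData.G_le (D : PData L p1 p2 p3 g) (t h : ℝ) (q : E) (hq : q ∈ LQ L p3)
    (k : ℝ) (hk : k * (-t * p1 q + (1 - t) * p2 q) = h) (hk0 : 0 < k) (hk1 : k * (p1 q + p2 q) ≤ 1) :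
    g (1 - (t + h)) (t + h) < (1 - k * (p1 q + p2 q)) * g (1 - t) t + k := by
  have e1 : 1 - (t + h) = (1 - k * (p1 q + p2 q)) * (1 - t) + k * p1 q := by rw [← hk]; ring
  have e2 : t + h = (1 - k * (p1 q + p2 q)) * t + k * p2 q := by rw [← hk]; ring
  have h1 := D.gadd ((1 - k * (p1 q + p2 q)) * (1 - t)) (k * p1 q) ((1 - k * (p1 q + p2 q)) * t) (k * p2 q)
  rw [← e1, ← e2, D.ghom _ _ _ (by linarith), D.ghom _ _ _ hk0.le] at h1
  have h2 := D.glt q hq.1 hq.2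
  nlinarith

lemma exists_small (P : ℝ) : ∃ k > 0, k * P ≤ 1 := by
  refine ⟨1 / (|P| + 1), by positivity, ?_⟩
  rw [div_mul_eq_mul_div, div_le_one (by positivity)]
  linarith [le_abs_self P]

lemma PData.exists_stat (D : PData L p1 p2 p3 g) (γ : ℝ → ℝ) 
    (hγ : ∀ t s, g (1 - t) t + γ t * (s - t) ≤ g (1 - s) s) (t : ℝ) :
    ∃ T S q1 q2, Stat L p1 p2 p3 (g (1 - t) t) (γ t) t T S q1 q2 := by
  set G := g (1 - t) t with hG
  have hGpos : 0 < G := D.gpos _ _ (by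
    by_cases h : t = 0
    · left; rw [h]; norm_num
    · right; exact h)
  have hzero : ∀ p ∈ LQ L p3, -t * p1 p + (1 - t) * p2 p = 0 → G * (p1 p + p2 p) < 1 := by
    intro p hp h0
    rcases le_or_gt 0 (p1 p + p2 p) with h | h
    · have h1 := D.glt p hp.1 hp.2
      have e1 : p1 p = (p1 p + p2 p) * (1 - t) := by linear_combination -h0
      have e2 : p2 p = (p1 p + p2 p) * t := by linear_combination h0
      have h2 := D.ghom _ (1 - t) t h
      rw [← e1, ← e2, ← hG] at h2
      linarith
    · nlinarith
  have hex : ∃ p ∈ LQ L p3, 0 < -t * p1 p + (1 - t) * p2 p := by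
    obtain ⟨ε, hε, p, hp, h1, h2, h3⟩ := D.surj (-t) (1 - t) 0
    refine ⟨p, ⟨hp, by simpa using h3⟩, ?_⟩
    rw [h1, h2]
    have : -t * (ε * -t) + (1 - t) * (ε * (1 - t)) = ε * (t ^ 2 + (1 - t) ^ 2) := by ring
    rw [this]
    have : 0 < t ^ 2 + (1 - t) ^ 2 := by nlinarith [sq_nonneg (2 * t - 1)]
    positivity
  have hex' : ∃ p ∈ LQ L p3, -t * p1 p + (1 - t) * p2 p < 0 := by
    obtain ⟨p, hp, h⟩ := hex
    refine ⟨-p, ⟨D.symm p hp.1, by simp [hp.2]⟩, ?_⟩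
    simp only [map_neg]; linarith
  have s1 := Up_spec (LQ_comp D.comp (p3 := p3)) (LQ_conv D.conv) (G • (p1 + p2)) ((-t) • p1 + (1 - t) • p2) 1
    (fun p hp h0 => hzero p hp h0) (by simpa using hex) (by simpa using hex')
  have s2 := Up_spec (LQ_comp D.comp (p3 := p3)) (LQ_conv D.conv) (G • (p1 + p2)) (-((-t) • p1 + (1 - t) • p2)) 1
    (fun p hp h0 => by 
      have h0' : -((-t) * p1 p + (1 - t) * p2 p) = 0 := h0
      exact hzero p hp (by linarith)) 
    (by obtain ⟨p, hp, h⟩ := hex'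
        refine ⟨p, hp, ?_⟩
        show 0 < -((-t) * p1 p + (1 - t) * p2 p)
        linarith) 
    (by obtain ⟨p, hp, h⟩ := hex
        refine ⟨p, hp, ?_⟩
        show -((-t) * p1 p + (1 - t) * p2 p) < 0
        linarith) 
  set T := Up (LQ L p3) (G • (p1 + p2)) ((-t) • p1 + (1 - t) • p2) 1
  set S' := Up (LQ L p3) (G • (p1 + p2)) (-((-t) • p1 + (1 - t) • p2)) 1
  obtain ⟨leT, q1, m1, eqT, pos⟩ := s1
  obtain ⟨leS, q2, m2, eqS, neg⟩ := s2
  replace leT : ∀ q ∈ LQ L p3, G * (p1 q + p2 q) + T * (-t * p1 q + (1 - t) * p2 q) ≤ 1 := leT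
  replace leS : ∀ q ∈ LQ L p3, G * (p1 q + p2 q) + S' * -(-t * p1 q + (1 - t) * p2 q) ≤ 1 := leS
  replace eqT : G * (p1 q1 + p2 q1) + T * (-t * p1 q1 + (1 - t) * p2 q1) = 1 := eqT
  replace eqS : G * (p1 q2 + p2 q2) + S' * -(-t * p1 q2 + (1 - t) * p2 q2) = 1 := eqS
  replace pos : 0 < -t * p1 q1 + (1 - t) * p2 q1 := pos
  replace neg : 0 < -(-t * p1 q2 + (1 - t) * p2 q2) := neg
  refine ⟨T, -S', q1, q2, m1, m2, leT, ?_, eqT, ?_, pos, by linarith, ?_, ?_⟩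
  · intro q hq; linarith [leS q hq]
  · linarith
  · obtain ⟨k, hk, hk1⟩ := exists_small (p1 q2 + p2 q2)
    have h1 := D.G_le t _ q2 m2 k rfl hk hk1
    have h2 := hγ t (t + k * (-t * p1 q2 + (1 - t) * p2 q2))
    set R := -t * p1 q2 + (1 - t) * p2 q2
    set P := p1 q2 + p2 q2
    have h3 : k * (γ t * R) < k * (1 - P * G) := by rw [← hG] at h1 h2; nlinarith
    have h4 := lt_of_mul_lt_mul_left h3 hk.le
    have h5 : γ t * R < -S' * R := by linarith
    by_contra hcon
    push Not at hcon
    nlinarith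
  · obtain ⟨k, hk, hk1⟩ := exists_small (p1 q1 + p2 q1)
    have h1 := D.G_le t _ q1 m1 k rfl hk hk1
    have h2 := hγ t (t + k * (-t * p1 q1 + (1 - t) * p2 q1))
    set R := -t * p1 q1 + (1 - t) * p2 q1
    set P := p1 q1 + p2 q1
    have h3 : k * (γ t * R) < k * (1 - P * G) := by rw [← hG] at h1 h2; nlinarith
    have h4 := lt_of_mul_lt_mul_left h3 hk.le
    have h5 : γ t * R < T * R := by linarith
    exact lt_of_mul_lt_mul_right h5 pos.le

/-- the coefficient vector of `G v0 + T d` is nonzero -/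
lemma coef_ne {G t T : ℝ} (hG : 0 < G) : G - T * t ≠ 0 ∨ G + T * (1 - t) ≠ 0 := by
  by_contra h
  push Not at h
  have : (G - T * t) * (1 - t) + (G + T * (1 - t)) * t = G := by ring
  rw [h.1, h.2] at this
  linarith

variable {G γ t T S : ℝ} {q1 q2 : E}

lemma Stat.uniqT (D : PData L p1 p2 p3 g) (hG : 0 < G) (h : Stat L p1 p2 p3 G γ t T S q1 q2) 
    (q : E) (hq : q ∈ LQ L p3) (he : G * (p1 q + p2 q) + T * (-t * p1 q + (1 - t) * p2 q) = 1) : q = q1 := by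
  refine D.uniqQ (G - T * t) (G + T * (1 - t)) 1 (coef_ne hG) q hq q1 h.m1 ?_ ?_ ?_
  · intro q' hq'; linarith [h.leT q' hq']
  · linarith
  · linarith [h.eqT]

lemma Stat.uniqS (D : PData L p1 p2 p3 g) (hG : 0 < G) (h : Stat L p1 p2 p3 G γ t T S q1 q2) 
    (q : E) (hq : q ∈ LQ L p3) (he : G * (p1 q + p2 q) + S * (-t * p1 q + (1 - t) * p2 q) = 1) : q = q2 := by
  refine D.uniqQ (G - S * t) (G + S * (1 - t)) 1 (coef_ne hG) q hq q2 h.m2 ?_ ?_ ?_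
  · intro q' hq'; linarith [h.leS q' hq']
  · linarith
  · linarith [h.eqS]

/-- the relations between the plane through the contact points and the tangents -/
lemma Stat.plane (D : PData L p1 p2 p3 g) (hG : 0 < G) (h : Stat L p1 p2 p3 G γ t T S q1 q2) 
    {y1 y2 y3 b : ℝ} (hy : PlaneAt L p1 p2 p3 ((1 - t) / G) (t / G) y1 y2 y3 b) :
    (-t * p1 q1 + (1 - t) * p2 q1) * ((1 + b) * T - (y2 - y1)) = 1 ∧ 
    (-t * p1 q2 + (1 - t) * p2 q2) * ((1 + b) * S - (y2 - y1)) = 1 ∧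
    y1 * (1 - t) + y2 * t = (1 + b) * G := by
  have e0 : y1 * (1 - t) + y2 * t = (1 + b) * G := by
    have := hy.1
    field_simp at this
    linarith
  have hX : ∀ τ, (G - τ * t) * ((1 - t) / G) + (G + τ * (1 - t)) * (t / G) = 1 := by
    intro τ; field_simp; ring
  have a1 := hy.contactQ D (G - T * t) (G + T * (1 - t)) (coef_ne hG) q1 h.m1 
    (fun q hq => by rw [hX]; linarith [h.leT q hq]) (by rw [hX]; linarith [h.eqT])
  have a2 := hy.contactQ D (G - S * t) (G + S * (1 - t)) (coef_ne hG) q2 h.m2 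
    (fun q hq => by rw [hX]; linarith [h.leS q hq]) (by rw [hX]; linarith [h.eqS])
  refine ⟨?_, ?_, e0⟩
  · linear_combination (1 + b) * h.eqT - a1 + (p1 q1 + p2 q1) * e0
  · linear_combination (1 + b) * h.eqS - a2 + (p1 q2 + p2 q2) * e0

/-- the explicit form of `b`. -/
def bfun (T S R1 R2 : ℝ) : ℝ := 1 / ((T - S) * R1) - 1 / ((T - S) * R2) - 1

lemma Stat.b_eq (D : PData L p1 p2 p3 g) (hG : 0 < G) (h : Stat L p1 p2 p3 G γ t T S q1 q2) 
    {y1 y2 y3 b : ℝ} (hy : PlaneAt L p1 p2 p3 ((1 - t) / G) (t / G) y1 y2 y3 b) :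
    b = bfun T S (-t * p1 q1 + (1 - t) * p2 q1) (-t * p1 q2 + (1 - t) * p2 q2) := by
  obtain ⟨h1, h2, -⟩ := h.plane D hG hy
  have hp := h.pos
  have hn := h.neg
  have hT : 0 < T - S := by linarith [h.lt1, h.lt2]
  set R1 := -t * p1 q1 + (1 - t) * p2 q1
  set R2 := -t * p1 q2 + (1 - t) * p2 q2
  unfold bfun
  have i1 : 1 / R1 = (1 + b) * T - (y2 - y1) := by rw [div_eq_iff hp.ne']; linarith
  have i2 : 1 / R2 = (1 + b) * S - (y2 - y1) := by rw [div_eq_iff hn.ne]; linarith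
  have i3 : 1 / ((T - S) * R1) - 1 / ((T - S) * R2) = (1 / R1 - 1 / R2) / (T - S) := by
    field_simp
  rw [i3, i1, i2]
  field_simp
  ring

lemma Stat.b_nonneg (D : PData L p1 p2 p3 g) (h : Stat L p1 p2 p3 G γ t T S q1 q2) :
    0 ≤ bfun T S (-t * p1 q1 + (1 - t) * p2 q1) (-t * p1 q2 + (1 - t) * p2 q2) := by
  have hp := h.pos
  have hn := h.neg
  have hT : 0 < T - S := by linarith [h.lt1, h.lt2]
  have n1 := h.leS (-q1) ⟨D.symm _ h.m1.1, by simp [h.m1.2]⟩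
  have n2 := h.leT (-q2) ⟨D.symm _ h.m2.1, by simp [h.m2.2]⟩
  simp only [map_neg] at n1 n2
  have eT := h.eqT
  have eS := h.eqS
  have j1 : (T - S) * (-t * p1 q1 + (1 - t) * p2 q1) ≤ 2 := by linarith
  have j2 : (T - S) * -(-t * p1 q2 + (1 - t) * p2 q2) ≤ 2 := by linarith
  set R1 := -t * p1 q1 + (1 - t) * p2 q1
  set R2 := -t * p1 q2 + (1 - t) * p2 q2
  unfold bfun
  have k1 : 1 / 2 ≤ 1 / ((T - S) * R1) := one_div_le_one_div_of_le (by positivity) j1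
  have k2 : 1 / 2 ≤ 1 / ((T - S) * -R2) := one_div_le_one_div_of_le (mul_pos hT (by linarith)) j2
  have k3 : 1 / ((T - S) * -R2) = - (1 / ((T - S) * R2)) := by
    rw [mul_neg, div_neg]
  linarith

end Part3b


section Part3c
variable {E : Type*} [NormedAddCommGroup E] [NormedSpace ℝ E]
variable {L : Set E} {p1 p2 p3 : E →L[ℝ] ℝ} {g : ℝ → ℝ → ℝ}

/-- the functional `e G v0 + Θ d(t)` -/
def Nf (p1 p2 : E →L[ℝ] ℝ) (x Θ t : ℝ) : E →L[ℝ] ℝ := x • (p1 + p2) + Θ • ((-t) • p1 + (1 - t) • p2)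

lemma Nf_apply (x Θ t : ℝ) (q : E) : 
  Nf p1 p2 x Θ t q = x * (p1 q + p2 q) + Θ * (-t * p1 q + (1 - t) * p2 q) := rfl

lemma Nf_cont {x Θ : ℝ → ℝ} (hx : Continuous x) (hΘ : Continuous Θ) : 
    Continuous (fun t => Nf p1 p2 (x t) (Θ t) t) := by
  unfold Nf
  fun_prop

lemma dd_deriv (s : Set ℝ) (t : ℝ) : 
    HasDerivWithinAt (fun t : ℝ => (-t) • p1 + (1 - t) • p2) (-(p1 + p2)) s t := by
  have h1 : HasDerivWithinAt (fun t : ℝ => -t) (-1) s t := (hasDerivWithinAt_id t s).neg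
  have h2 : HasDerivWithinAt (fun t : ℝ => 1 - t) (-1) s t := (hasDerivWithinAt_id t s).const_sub 1
  have := (h1.smul_const p1).add (h2.smul_const p2)
  exact this.congr_deriv (by module)

lemma Nf_deriv {x Θ : ℝ → ℝ} {x' Θ' t : ℝ} {s : Set ℝ} (hx : HasDerivWithinAt x x' s t)
    (hΘ : HasDerivWithinAt Θ Θ' s t) : 
    HasDerivWithinAt (fun t => Nf p1 p2 (x t) (Θ t) t) (Nf p1 p2 (x' - Θ t) Θ' t) s t := by
  have := (hx.smul_const (p1 + p2)).add (hΘ.smul (dd_deriv (p1 := p1) (p2 := p2) s t))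
  refine this.congr_deriv ?_
  unfold Nf
  module

lemma U_lemma (D : PData L p1 p2 p3 g) (G e Θ : ℝ → ℝ) (hG : Continuous G) (he : Continuous e) (hΘ : Continuous Θ)
    (hGpos : ∀ t, 0 < G t) (hepos : ∀ t, 0 < e t) 
    (hstrict : ∀ t, ∀ q ∈ LQ L p3, Nf p1 p2 (e t * G t) (Θ t) t q < e t) (σ : ℝ) (hσ : σ = 1 ∨ σ = -1) :
    Continuous (fun t => Up L (Nf p1 p2 (e t * G t) (Θ t) t) (σ • p3) (e t)) ∧
    ∀ t γ e' Θ' y1 y2 y3 b, HasDerivWithinAt G γ (Ici t) t → HasDerivWithinAt e e' (Ici t) t → 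
      HasDerivWithinAt Θ Θ' (Ici t) t → PlaneAt L p1 p2 p3 ((1 - t) / G t) (t / G t) y1 y2 y3 b → 
      e' = -b * ((Θ t - γ * e t) / G t) → Θ' = -(y2 - y1) * ((Θ t - γ * e t) / G t) →
      HasDerivWithinAt (fun t => Up L (Nf p1 p2 (e t * G t) (Θ t) t) (σ • p3) (e t)) 
        (-σ * ((Θ t - γ * e t) / G t) * y3) (Ici t) t := by
  have hσ2 : σ * σ = 1 := by rcases hσ with h | h <;> rw [h] <;> norm_num
  have hσ0 : σ ≠ 0 := by rcases hσ with h | h <;> rw [h] <;> norm_num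
  have hp : ∃ p ∈ L, 0 < (σ • p3) p := by
    obtain ⟨ε, hε, p, hp, -, -, h3⟩ := D.surj 0 0 σ
    refine ⟨p, hp, ?_⟩
    show 0 < σ * p3 p
    rw [h3]; nlinarith
  have hn : ∃ p ∈ L, (σ • p3) p < 0 := by
    obtain ⟨p, hp, h⟩ := hp
    exact ⟨-p, D.symm p hp, by rw [map_neg]; linarith⟩
  have spec := fun t => Up_spec D.comp D.conv (Nf p1 p2 (e t * G t) (Θ t) t) (σ • p3) (e t)
    (fun p hp h0 => hstrict t p ⟨hp, by
      have : σ * p3 p = 0 := h0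
      simpa [hσ0] using this⟩) hp hn
  set V : ℝ → ℝ := fun t => Up L (Nf p1 p2 (e t * G t) (Θ t) t) (σ • p3) (e t) with hV
  have hle : ∀ t, ∀ q ∈ L, Nf p1 p2 (e t * G t) (Θ t) t q + V t * (σ • p3) q ≤ e t := fun t => (spec t).1
  choose p hpL heq hpos using fun t => (spec t).2
  replace heq : ∀ t, Nf p1 p2 (e t * G t) (Θ t) t (p t) + V t * (σ • p3) (p t) = e t := heq
  have hleX : ∀ t, ∀ q ∈ L, (e t * G t - Θ t * t) * p1 q + (e t * G t + Θ t * (1 - t)) * p2 q + (V t * σ) * p3 q ≤ e t := by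
    intro t q hq
    have := hle t q hq
    rw [Nf_apply] at this
    change _ + V t * (σ * p3 q) ≤ _ at this
    linarith
  have heqX : ∀ t, ∀ q, Nf p1 p2 (e t * G t) (Θ t) t q + V t * (σ • p3) q = e t → 
      (e t * G t - Θ t * t) * p1 q + (e t * G t + Θ t * (1 - t)) * p2 q + (V t * σ) * p3 q = e t := by
    intro t q this
    rw [Nf_apply] at this
    change _ + V t * (σ * p3 q) = _ at this
    linarith
  have hcoef : ∀ t, e t * G t - Θ t * t ≠ 0 ∨ e t * G t + Θ t * (1 - t) ≠ 0 ∨ V t * σ ≠ 0 := by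
    intro t
    have := coef_ne (t := t) (T := Θ t) (mul_pos (hepos t) (hGpos t))
    tauto
  have huniq : ∀ t, ∀ q ∈ L, Nf p1 p2 (e t * G t) (Θ t) t q + V t * (σ • p3) q = e t → q = p t := by
    intro t q hq h
    exact D.uniq _ _ _ (e t) (hcoef t) q hq (p t) (hpL t) (hleX t) (heqX t q h) (heqX t _ (heq t))
  have hNc : Continuous (fun t => Nf p1 p2 (e t * G t) (Θ t) t) := Nf_cont (he.mul hG) hΘ
  have hcont : ∀ t, ContinuousAt V t ∧ ContinuousAt p t := fun t =>
    env_cont D.comp (fun t => Nf p1 p2 (e t * G t) (Θ t) t) (fun _ => σ • p3) e V p t hpL hle heq hpos 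
      (huniq t) hn hNc.continuousAt continuousAt_const he.continuousAt
  refine ⟨continuous_iff_continuousAt.2 fun t => (hcont t).1, ?_⟩
  intro t γ e' Θ' y1 y2 y3 b hGd hed hΘd hy hee hΘe
  have hd := env_deriv (fun t => Nf p1 p2 (e t * G t) (Θ t) t) (fun _ => σ • p3) e V p t hpL hle heq hpos 
    (hcont t).2 (Nf p1 p2 (e' * G t + e t * γ - Θ t) Θ' t) 0 e' (Nf_deriv (hed.mul hGd) hΘd) 
    (hasDerivWithinAt_const _ _ _) hed
  have hGt := (hGpos t).ne'
  have h1 := hy.2 (p t) (hpL t) _ _ _ (hcoef t) (fun q hq => (hleX t q hq).trans_eq (by field_simp; ring)) 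
    ((heqX t _ (heq t)).trans (by field_simp; ring))
  have e0 : y1 * (1 - t) + y2 * t = (1 + b) * G t := by
    have := hy.1
    field_simp at this
    linarith
  convert hd using 1
  have hpt := hpos t
  rw [eq_div_iff hpt.ne', Nf_apply]
  have hz : (0 : E →L[ℝ] ℝ) (p t) = 0 := rfl
  have hs : (σ • p3) (p t) = σ * p3 (p t) := rfl
  rw [hz, hs, hee, hΘe]
  have h2 : (1 + b) * G t * (p1 (p t) + p2 (p t)) + (y2 - y1) * (-t * p1 (p t) + (1 - t) * p2 (p t)) + y3 * p3 (p t) = b := by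
    rw [← e0]; linear_combination h1
  set ω := (Θ t - γ * e t) / G t with hω
  have hω2 : Θ t - γ * e t = ω * G t := by rw [hω]; field_simp
  linear_combination (-ω) * h2 + (-ω * y3 * p3 (p t)) * hσ2 - (p1 (p t) + p2 (p t)) * hω2

/-- the width function -/
def DD (L : Set E) (p1 p2 p3 : E →L[ℝ] ℝ) (n1 n2 e : ℝ) : ℝ :=
  Up L (n1 • p1 + n2 • p2) p3 e + Up L (n1 • p1 + n2 • p2) (-p3) e

lemma DD_Nf (x Θ t e : ℝ) : DD L p1 p2 p3 (x - Θ * t) (x + Θ * (1 - t)) e = 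
    Up L (Nf p1 p2 x Θ t) ((1 : ℝ) • p3) e + Up L (Nf p1 p2 x Θ t) ((-1 : ℝ) • p3) e := by
  unfold DD
  have : (x - Θ * t) • p1 + (x + Θ * (1 - t)) • p2 = Nf p1 p2 x Θ t := by unfold Nf; module
  have h2 : (-1 : ℝ) • p3 = -p3 := by module
  rw [this, one_smul, h2]
end Part3c


section Part3d
variable {E : Type*} [NormedAddCommGroup E] [NormedSpace ℝ E]
variable {L : Set E} {p1 p2 p3 : E →L[ℝ] ℝ} {g : ℝ → ℝ → ℝ}

lemma PData.G_convex (D : PData L p1 p2 p3 g) : ConvexOn ℝ univ (fun t => g (1 - t) t) := by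
  refine ⟨convex_univ, fun x _ y _ a b ha hb hab => ?_⟩
  have h := D.gadd (a * (1 - x)) (b * (1 - y)) (a * x) (b * y)
  rw [D.ghom _ _ _ ha, D.ghom _ _ _ hb] at h
  have e1 : a * (1 - x) + b * (1 - y) = 1 - (a * x + b * y) := by linear_combination hab
  rw [e1] at h
  exact h

open MeasureTheory in
set_option maxHeartbeats 1000000 in
lemma piece (D : PData L p1 p2 p3 g) (hg1 : g 1 0 = 1) (hg2 : g 0 1 = 1) :
    ∃ r s : ℝ, 0 < r ∧ 0 < s ∧ r ≤ 1 ∧ 1 ≤ s ∧ 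
      (∀ y1 y2 y3 b, PlaneAt L p1 p2 p3 1 0 y1 y2 y3 b → 0 < b → r < 1 ∧ 1 < s) ∧
      ∀ α β : ℝ, 0 < α → 0 < β → 
        DD L p1 p2 p3 (-(r * α) * Up (LQ L p3) p2 (-p1) 1 + (s * β) * Up (LQ L p3) p2 p1 1) (r * α + s * β) (r * α + s * β)
        = DD L p1 p2 p3 (α + β) (α * Up (LQ L p3) p1 p2 1 - β * Up (LQ L p3) p1 (-p2) 1) (α + β) := by
  obtain ⟨hGc, γ, hγm, hγd, hγs, hγc⟩ := convex_right _ D.G_convex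
  set G : ℝ → ℝ := fun t => g (1 - t) t with hGdef
  have hGpos : ∀ t, 0 < G t := fun t => D.gpos _ _ (by
    by_cases h : t = 0
    · left; rw [h]; norm_num
    · right; exact h)
  choose T S q1 q2 hst using D.exists_stat γ hγs
  replace hst : ∀ t, Stat L p1 p2 p3 (G t) (γ t) t (T t) (S t) (q1 t) (q2 t) := hst
  have hLQc := LQ_comp D.comp (p3 := p3)
  have hac : Continuous (fun t => G t • (p1 + p2)) := by fun_prop
  have hdc : Continuous (fun t : ℝ => (-t) • p1 + (1 - t) • p2) := by fun_prop
  have hTc : ∀ t, ContinuousAt T t ∧ ContinuousAt q1 t := fun t => 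
    env_cont hLQc (fun t => G t • (p1 + p2)) (fun t : ℝ => (-t) • p1 + (1 - t) • p2) (fun _ => 1) T q1 t
      (fun t => (hst t).m1) (fun t => (hst t).leT) (fun t => (hst t).eqT) (fun t => (hst t).pos) 
      (fun q hq h => (hst t).uniqT D (hGpos t) q hq h) ⟨q2 t, (hst t).m2, (hst t).neg⟩ hac.continuousAt 
      hdc.continuousAt continuousAt_const
  have hnegd : ∀ t : ℝ, ∀ q, (-((-t) • p1 + (1 - t) • p2)) q = -(-t * p1 q + (1 - t) * p2 q) := fun t q => rfl
  have haq : ∀ t : ℝ, ∀ q, (G t • (p1 + p2)) q = G t * (p1 q + p2 q) := fun t q => rfl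
  have leS' : ∀ t, ∀ q ∈ LQ L p3, (G t • (p1 + p2)) q + -S t * (-((-t) • p1 + (1 - t) • p2)) q ≤ 1 := by
    intro t q hq; rw [hnegd, haq]; linarith [(hst t).leS q hq]
  have eqS' : ∀ t, (G t • (p1 + p2)) (q2 t) + -S t * (-((-t) • p1 + (1 - t) • p2)) (q2 t) = 1 := by
    intro t; rw [hnegd, haq]; linarith [(hst t).eqS]
  have posS' : ∀ t, 0 < (-((-t) • p1 + (1 - t) • p2)) (q2 t) := by
    intro t; rw [hnegd]; linarith [(hst t).neg]
  have hSc' : ∀ t, ContinuousAt (fun t => -S t) t ∧ ContinuousAt q2 t := fun t => 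
    env_cont hLQc (fun t => G t • (p1 + p2)) (fun t : ℝ => -((-t) • p1 + (1 - t) • p2)) (fun _ => 1) (fun t => -S t) q2 t
      (fun t => (hst t).m2) leS' eqS' posS'
      (fun q hq h => (hst t).uniqS D (hGpos t) q hq (by rw [hnegd, haq] at h; linarith)) 
      ⟨q1 t, (hst t).m1, by rw [hnegd]; linarith [(hst t).pos]⟩ hac.continuousAt 
      hdc.neg.continuousAt continuousAt_const
  have hTcont : Continuous T := continuous_iff_continuousAt.2 fun t => (hTc t).1
  have hq1cont : Continuous q1 := continuous_iff_continuousAt.2 fun t => (hTc t).2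
  have hScont : Continuous S := by
    have : Continuous (fun t => -S t) := continuous_iff_continuousAt.2 fun t => (hSc' t).1
    have h2 := this.neg
    have h3 : (-fun t => -S t) = S := by ext; simp
    rwa [h3] at h2
  have hq2cont : Continuous q2 := continuous_iff_continuousAt.2 fun t => (hSc' t).2
  set P1 : ℝ → ℝ := fun t => p1 (q1 t) + p2 (q1 t) with hP1
  set R1 : ℝ → ℝ := fun t => -t * p1 (q1 t) + (1 - t) * p2 (q1 t) with hR1
  set P2 : ℝ → ℝ := fun t => p1 (q2 t) + p2 (q2 t) with hP2
  set R2 : ℝ → ℝ := fun t => -t * p1 (q2 t) + (1 - t) * p2 (q2 t) with hR2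
  have hR1c : Continuous R1 := by fun_prop
  have hR2c : Continuous R2 := by fun_prop
  have hR1pos : ∀ t, 0 < R1 t := fun t => (hst t).pos
  have hR2neg : ∀ t, R2 t < 0 := fun t => (hst t).neg
  have had : ∀ t, HasDerivWithinAt (fun t => G t • (p1 + p2)) (γ t • (p1 + p2)) (Ici t) t := 
    fun t => by
      have := (hγd t).smul_const (p1 + p2)
      exact this
  have hTd : ∀ t, HasDerivWithinAt T ((T t - γ t) * P1 t / R1 t) (Ici t) t := by
    intro t
    have := env_deriv (fun t => G t • (p1 + p2)) (fun t : ℝ => (-t) • p1 + (1 - t) • p2) (fun _ => 1) T q1 t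
      (fun t => (hst t).m1) (fun t => (hst t).leT) (fun t => (hst t).eqT) (fun t => (hst t).pos) (hTc t).2
      _ _ _ (had t) (dd_deriv _ t) (hasDerivWithinAt_const _ _ _)
    refine this.congr_deriv ?_
    change (0 - γ t * P1 t - T t * -(P1 t)) / R1 t = _
    ring
  have hSd : ∀ t, HasDerivWithinAt S ((S t - γ t) * P2 t / R2 t) (Ici t) t := by
    intro t
    have := env_deriv (fun t => G t • (p1 + p2)) (fun t : ℝ => -((-t) • p1 + (1 - t) • p2)) (fun _ => 1) 
      (fun t => -S t) q2 t
      (fun t => (hst t).m2) leS' eqS' posS' (hSc' t).2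
      _ _ _ (had t) (dd_deriv _ t).neg (hasDerivWithinAt_const _ _ _)
    have h2 := this.neg
    have h3 : (-fun t => -S t) = S := by ext; simp
    rw [h3] at h2
    refine h2.congr_deriv ?_
    change -((0 - γ t * P2 t - -S t * -(-(P2 t))) / -(R2 t)) = _
    rw [div_neg, neg_neg]
    ring
  set bb : ℝ → ℝ := fun t => bfun (T t) (S t) (R1 t) (R2 t) with hbb
  have hTS : ∀ t, 0 < T t - S t := fun t => by linarith [(hst t).lt1, (hst t).lt2]
  have hbc : Continuous bb := by
    rw [hbb]
    unfold bfun
    refine ((continuous_const.div ((hTcont.sub hScont).mul hR1c) ?_).sub 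
      (continuous_const.div ((hTcont.sub hScont).mul hR2c) ?_)).sub continuous_const
    · intro t; exact (mul_pos (hTS t) (hR1pos t)).ne'
    · intro t; exact (mul_neg_of_pos_of_neg (hTS t) (hR2neg t)).ne
  have hb0 : ∀ t, 0 ≤ bb t := fun t => (hst t).b_nonneg D
  have hGne : ∀ t, G t ≠ 0 := fun t => (hGpos t).ne'
  have hkc : Continuous (fun t => bb t / G t) := hbc.div hGc hGne
  have hk0 : ∀ t, 0 ≤ bb t / G t := fun t => div_nonneg (hb0 t) (hGpos t).le
  have hγi : ∀ a b, IntervalIntegrable γ volume a b := fun a b => hγm.intervalIntegrable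
  obtain ⟨r, hrc, hrpos, hr0, hrd, hr1, hr2⟩ := exp_prim (fun t => (T t - γ t) * (bb t / G t)) 
    (fun a b => ((hTcont.intervalIntegrable a b).sub (hγi a b)).mul_continuousOn hkc.continuousOn)
    ((hTcont.measurable.sub hγm.measurable).mul hkc.measurable)
    (fun t => (hTcont.continuousWithinAt.sub (hγc t)).mul hkc.continuousWithinAt)
    (fun t => mul_nonneg (by linarith [(hst t).lt2]) (hk0 t))
  obtain ⟨w, hwc, hwpos, hw0, hwd, hw1, hw2⟩ := exp_prim (fun t => (γ t - S t) * (bb t / G t)) 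
    (fun a b => ((hγi a b).sub (hScont.intervalIntegrable a b)).mul_continuousOn hkc.continuousOn)
    ((hγm.measurable.sub hScont.measurable).mul hkc.measurable)
    (fun t => ((hγc t).sub hScont.continuousWithinAt).mul hkc.continuousWithinAt)
    (fun t => mul_nonneg (by linarith [(hst t).lt1]) (hk0 t))
  set s : ℝ → ℝ := fun t => (w t)⁻¹ with hs
  have hsc : Continuous s := hwc.inv₀ (fun t => (hwpos t).ne')
  have hspos : ∀ t, 0 < s t := fun t => inv_pos.2 (hwpos t)
  have hsd : ∀ t, HasDerivWithinAt s (s t * ((γ t - S t) * (bb t / G t))) (Ici t) t := by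
    intro t
    refine ((hwd t).inv (hwpos t).ne').congr_deriv ?_
    have := (hwpos t).ne'
    simp only [hs]
    field_simp
  have hs0 : s 0 = 1 := by simp [hs, hw0]
  have hG0 : G 0 = 1 := by simp [hGdef, hg1]
  have hG1 : G 1 = 1 := by simp [hGdef, hg2]
  refine ⟨r 1, s 1, hrpos 1, hspos 1, hr1, (one_le_inv₀ (hwpos 1)).2 hw1, ?_, ?_⟩
  · intro y1 y2 y3 b hy hb
    have hbe : b = bb 0 := (hst 0).b_eq D (hGpos 0) (y3 := y3) (y1 := y1) (y2 := y2) (by simpa [hG0] using hy)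
    have hkk : 0 < bb 0 / G 0 := by rw [hG0, ← hbe]; simpa using hb
    exact ⟨hr2 (mul_pos (by linarith [(hst 0).lt2]) hkk), 
      (one_lt_inv₀ (hwpos 1)).2 (hw2 (mul_pos (by linarith [(hst 0).lt1]) hkk))⟩
  · intro α β hα hβ
    set e : ℝ → ℝ := fun t => α * r t + β * s t with he
    set Θ : ℝ → ℝ := fun t => α * r t * T t + β * s t * S t with hΘ
    have hec : Continuous e := by fun_prop
    have hΘc : Continuous Θ := by fun_prop
    have hαr : ∀ t, 0 < α * r t := fun t => mul_pos hα (hrpos t)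
    have hβs : ∀ t, 0 < β * s t := fun t => mul_pos hβ (hspos t)
    have hepos : ∀ t, 0 < e t := fun t => add_pos (hαr t) (hβs t)
    have hstrict : ∀ t, ∀ q ∈ LQ L p3, Nf p1 p2 (e t * G t) (Θ t) t q < e t := by
      intro t q hq
      rw [Nf_apply]
      have h1 := (hst t).leT q hq
      have h2 := (hst t).leS q hq
      have e1 : e t * G t * (p1 q + p2 q) + Θ t * (-t * p1 q + (1 - t) * p2 q) = 
        α * r t * (G t * (p1 q + p2 q) + T t * (-t * p1 q + (1 - t) * p2 q)) + 
        β * s t * (G t * (p1 q + p2 q) + S t * (-t * p1 q + (1 - t) * p2 q)) := by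
        simp only [he, hΘ]; ring
      rw [e1]
      rcases h1.eq_or_lt with h1' | h1'
      · rcases h2.eq_or_lt with h2' | h2'
        · exfalso
          have i1 := (hst t).uniqT D (hGpos t) q hq h1'
          have i2 := (hst t).uniqS D (hGpos t) q hq h2'
          have j1 := (hst t).pos
          have j2 := (hst t).neg
          rw [← i1] at j1; rw [← i2] at j2; linarith
        · have := mul_lt_mul_of_pos_left h2' (hβs t)
          have := mul_le_mul_of_nonneg_left h1 (hαr t).le
          simp only [he]; linarith
      · have := mul_le_mul_of_nonneg_left h2 (hβs t).le
        have := mul_lt_mul_of_pos_left h1' (hαr t)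
        simp only [he]; linarith
    obtain ⟨c1, d1⟩ := U_lemma D G e Θ hGc hec hΘc hGpos hepos hstrict 1 (Or.inl rfl)
    obtain ⟨c2, d2⟩ := U_lemma D G e Θ hGc hec hΘc hGpos hepos hstrict (-1) (Or.inr rfl)
    have hder : ∀ t, HasDerivWithinAt (fun t => Up L (Nf p1 p2 (e t * G t) (Θ t) t) ((1:ℝ) • p3) (e t) + 
        Up L (Nf p1 p2 (e t * G t) (Θ t) t) ((-1:ℝ) • p3) (e t)) 0 (Ici t) t := by
      intro t
      have hGX : g ((1 - t) / G t) (t / G t) = 1 := by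
        have := D.ghom (1 / G t) (1 - t) t (by have := hGpos t; positivity)
        rw [one_div_mul_eq_div, one_div_mul_eq_div] at this
        rw [this]
        show 1 / G t * G t = 1
        field_simp [hGne t]
      obtain ⟨y1, y2, y3, b, hy⟩ := D.plane _ _ hGX
      have hbe : b = bb t := (hst t).b_eq D (hGpos t) hy
      obtain ⟨hy1, hy2, -⟩ := (hst t).plane D (hGpos t) hy
      replace hy1 : R1 t * ((1 + b) * T t - (y2 - y1)) = 1 := hy1
      replace hy2 : R2 t * ((1 + b) * S t - (y2 - y1)) = 1 := hy2
      have hed := ((hrd t).const_mul α).add ((hsd t).const_mul β)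
      have hTe : HasDerivWithinAt T ((T t - γ t) * (b * T t - (y2 - y1)) / G t) (Ici t) t := by
        refine (hTd t).congr_deriv ?_
        rw [div_eq_div_iff (hR1pos t).ne' (hGne t)]
        have eqT : G t * P1 t + T t * R1 t = 1 := (hst t).eqT
        linear_combination (T t - γ t) * eqT - (T t - γ t) * hy1
      have hSe : HasDerivWithinAt S ((S t - γ t) * (b * S t - (y2 - y1)) / G t) (Ici t) t := by
        refine (hSd t).congr_deriv ?_
        rw [div_eq_div_iff (hR2neg t).ne (hGne t)]
        have eqS : G t * P2 t + S t * R2 t = 1 := (hst t).eqS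
        linear_combination (S t - γ t) * eqS - (S t - γ t) * hy2
      have hΘd := (((hrd t).const_mul α).mul hTe).add (((hsd t).const_mul β).mul hSe)
      have f1 := d1 t (γ t) _ _ y1 y2 y3 b (hγd t) hed hΘd hy 
        (by rw [← hbe]; have := hGne t; simp only [he, hΘ]; field_simp; ring)
        (by rw [← hbe]; have := hGne t; simp only [he, hΘ]; field_simp; ring)
      have f2 := d2 t (γ t) _ _ y1 y2 y3 b (hγd t) hed hΘd hy 
        (by rw [← hbe]; have := hGne t; simp only [he, hΘ]; field_simp; ring)
        (by rw [← hbe]; have := hGne t; simp only [he, hΘ]; field_simp; ring)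
      refine (f1.add f2).congr_deriv (by ring)
    have hconst := constant_of_has_deriv_right_zero (a := 0) (b := 1) (c1.add c2).continuousOn 
      (fun t _ => hder t) 1 (by simp)
    simp only [Pi.add_apply] at hconst
    rw [← DD_Nf, ← DD_Nf] at hconst
    have u1 : Up (LQ L p3) p1 p2 1 = 1 + T 0 := by
      have a1 := (hst 0).leT
      have a2 := (hst 0).eqT
      have a3 := (hst 0).pos
      rw [hG0] at a1 a2
      refine Up_eq (p := q1 0) (fun q hq => ?_) (hst 0).m1 ?_ ?_
      · linarith [a1 q hq]
      · linarith
      · linarith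
    have u2 : Up (LQ L p3) p1 (-p2) 1 = -(1 + S 0) := by
      have a1 := (hst 0).leS
      have a2 := (hst 0).eqS
      have a3 := (hst 0).neg
      rw [hG0] at a1 a2
      refine Up_eq (p := q2 0) (fun q hq => ?_) (hst 0).m2 ?_ ?_
      · show _ + _ * -(p2 q) ≤ 1
        linarith [a1 q hq]
      · show _ + _ * -(p2 _) = 1
        linarith
      · show 0 < -(p2 _)
        linarith
    have u3 : Up (LQ L p3) p2 p1 1 = 1 - S 1 := by
      have a1 := (hst 1).leS
      have a2 := (hst 1).eqS
      have a3 := (hst 1).neg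
      rw [hG1] at a1 a2
      refine Up_eq (p := q2 1) (fun q hq => ?_) (hst 1).m2 ?_ ?_
      · linarith [a1 q hq]
      · linarith
      · linarith
    have u4 : Up (LQ L p3) p2 (-p1) 1 = -(1 - T 1) := by
      have a1 := (hst 1).leT
      have a2 := (hst 1).eqT
      have a3 := (hst 1).pos
      rw [hG1] at a1 a2
      refine Up_eq (p := q1 1) (fun q hq => ?_) (hst 1).m1 ?_ ?_
      · show _ + _ * -(p1 q) ≤ 1
        linarith [a1 q hq]
      · show _ + _ * -(p1 _) = 1
        linarith
      · show 0 < -(p1 _)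
        linarith
    rw [u1, u2, u3, u4]
    convert hconst using 2
    · rw [hG1]; simp only [he, hΘ]; ring
    · rw [hG1]; simp only [he, hΘ]; ring
    · simp only [he]; ring
    · rw [hG0]; simp only [he, hΘ, hr0, hs0]; ring
    · rw [hG0]; simp only [he, hΘ, hr0, hs0]; ring
    · simp only [he, hr0, hs0]; ring
end Part3d


section Part3e
variable {E : Type*} [NormedAddCommGroup E] [NormedSpace ℝ E]
variable {L : Set E} {p1 p2 p3 : E →L[ℝ] ℝ} {g : ℝ → ℝ → ℝ}

lemma Up_neg {P : Set E} (hP : ∀ p ∈ P, -p ∈ P) (a c : E →L[ℝ] ℝ) (e : ℝ) : Up P (-a) c e = Up P a (-c) e := by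
  unfold Up
  congr 1
  ext s
  constructor
  · intro h q hq
    have := h (-q) (hP q hq)
    have e1 : (-a) (-q) = a q := by simp
    have e2 : (-c) q = c (-q) := by simp
    rw [e2, ← e1]; exact this
  · intro h q hq
    have := h (-q) (hP q hq)
    have e1 : (-a) q = a (-q) := by simp
    have e2 : (-c) (-q) = c q := by simp
    rw [e1, ← e2]; exact this

lemma Up_smul {P : Set E} (a c : E →L[ℝ] ℝ) (e l : ℝ) (hl : 0 < l) : Up P (l • a) c (l * e) = l * Up P a c e := by
  unfold Up
  have : {s : ℝ | ∀ q ∈ P, (l • a) q + s * c q ≤ l * e} = (fun s => l * s) '' {s : ℝ | ∀ q ∈ P, a q + s * c q ≤ e} := by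
    ext s
    simp only [mem_image, mem_ofPred_eq]
    constructor
    · intro h
      refine ⟨s / l, fun q hq => ?_, by field_simp⟩
      have h1 : l * a q + s * c q ≤ l * e := h q hq
      have e1 : a q + s / l * c q = (l * a q + s * c q) / l := by field_simp
      rw [e1, div_le_iff₀ hl]; linarith
    · rintro ⟨s', h, rfl⟩ q hq
      have e1 : (l • a) q = l * a q := rfl
      have := mul_le_mul_of_nonneg_left (h q hq) hl.le
      rw [e1]; linarith
  rw [this]
  have := Real.sSup_smul_of_nonneg hl.le {s : ℝ | ∀ q ∈ P, a q + s * c q ≤ e}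
  exact this

lemma DD_smul (n1 n2 e l : ℝ) (hl : 0 < l) : DD L p1 p2 p3 (l * n1) (l * n2) (l * e) = l * DD L p1 p2 p3 n1 n2 e := by
  unfold DD
  have : (l * n1) • p1 + (l * n2) • p2 = l • (n1 • p1 + n2 • p2) := by module
  rw [this, Up_smul _ _ _ _ hl, Up_smul _ _ _ _ hl]; ring

lemma DD_neg (hL : ∀ p ∈ L, -p ∈ L) (n1 n2 e : ℝ) : DD L p1 p2 p3 (-n1) (-n2) e = DD L p1 p2 p3 n1 n2 e := by
  unfold DD
  have : (-n1) • p1 + (-n2) • p2 = -(n1 • p1 + n2 • p2) := by module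
  rw [this, Up_neg hL, Up_neg hL, neg_neg, add_comm]

lemma DD_rot (n1 n2 e : ℝ) : DD L p2 (-p1) p3 n1 n2 e = DD L p1 p2 p3 (-n2) n1 e := by
  unfold DD
  have : n1 • p2 + n2 • (-p1) = (-n2) • p1 + n1 • p2 := by module
  rw [this]

lemma PData.rot (D : PData L p1 p2 p3 g) : PData L p2 (-p1) p3 (fun a b => g (-b) a) where
  comp := D.comp
  conv := D.conv
  symm := D.symm
  uniq := by
    intro m1 m2 m3 e hm p hp p' hp' h1 h2 h3
    have hn : ∀ q, (-p1) q = -(p1 q) := fun q => rfl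
    simp only [hn] at h1 h2 h3
    refine D.uniq (-m2) m1 m3 e ?_ p hp p' hp' (fun q hq => ?_) ?_ ?_
    · rcases hm with h | h | h
      · right; left; exact h
      · left; exact neg_ne_zero.2 h
      · right; right; exact h
    · linarith [h1 q hq]
    · linarith
    · linarith
  surj := by
    intro a b c
    obtain ⟨ε, hε, p, hp, h1, h2, h3⟩ := D.surj (-b) a c
    refine ⟨ε, hε, p, hp, h2, ?_, h3⟩
    show -(p1 p) = _
    rw [h1]; ring
  gadd := by
    intro a a' b b'
    have := D.gadd (-b) (-b') a a'
    have e : -(b + b') = -b + -b' := by ring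
    rw [e]; exact this
  ghom := by
    intro l a b hl
    have := D.ghom l (-b) a hl
    have e : -(l * b) = l * (-b) := by ring
    rw [e]; exact this
  geven := by
    intro a b
    exact D.geven (-b) a
  gpos := by
    intro a b h
    refine D.gpos _ _ ?_
    rcases h with h | h
    · right; exact h
    · left; exact neg_ne_zero.2 h
  glt := by
    intro p hp h
    have := D.glt p hp h
    have e : -((-p1) p) = p1 p := by simp
    rw [e]; exact this
  plane := by
    intro z1 z2 hz
    obtain ⟨y1, y2, y3, b, h1, h2⟩ := D.plane _ _ hz
    refine ⟨y2, -y1, y3, b, by linarith, ?_⟩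
    intro p hp m1 m2 m3 hm h3 h4
    have hn : ∀ q, (-p1) q = -(p1 q) := fun q => rfl
    simp only [hn] at h3 h4 ⊢
    have := h2 p hp (-m2) m1 m3 (by
      rcases hm with h | h | h
      · right; left; exact h
      · left; exact neg_ne_zero.2 h
      · right; right; exact h) (fun q hq => by linarith [h3 q hq]) (by linarith)
    linarith

lemma LQ_symm (hL : ∀ p ∈ L, -p ∈ L) : ∀ p ∈ LQ L p3, -p ∈ LQ L p3 := 
  fun p hp => ⟨hL p hp.1, by simp [hp.2]⟩

/-- width function on the first pencil -/
def f0 (L : Set E) (p1 p2 p3 : E →L[ℝ] ℝ) (α β : ℝ) : ℝ := 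
  DD L p1 p2 p3 (α + β) (α * Up (LQ L p3) p1 p2 1 - β * Up (LQ L p3) p1 (-p2) 1) (α + β)

/-- width function on the second pencil -/
def f1 (L : Set E) (p1 p2 p3 : E →L[ℝ] ℝ) (α β : ℝ) : ℝ := 
  DD L p1 p2 p3 (-α * Up (LQ L p3) p2 (-p1) 1 + β * Up (LQ L p3) p2 p1 1) (α + β) (α + β)

lemma f0_rot (α β : ℝ) : f0 L p2 (-p1) p3 α β = f1 L p1 p2 p3 α β := by
  unfold f0 f1
  rw [DD_rot, neg_neg]
  congr 1; ring

lemma f1_rot (hL : ∀ p ∈ L, -p ∈ L) (α β : ℝ) : f1 L p2 (-p1) p3 α β = f0 L p1 p2 p3 α β := by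
  unfold f0 f1
  rw [DD_rot, Up_neg (LQ_symm hL), Up_neg (LQ_symm hL), neg_neg, ← DD_neg hL, neg_neg]
  congr 1; ring

lemma cycle (D : PData L p1 p2 p3 g) (hg1 : g 1 0 = 1) (hg2 : g 0 1 = 1) :
    ∃ r s R S : ℝ, 0 < r ∧ 0 < s ∧ 0 < R ∧ 0 < S ∧ 
      (∀ y1 y2 y3 b, PlaneAt L p1 p2 p3 1 0 y1 y2 y3 b → 0 < b → R < S) ∧
      (∀ α β : ℝ, 0 < α → 0 < β → f1 L p1 p2 p3 (r * α) (s * β) = f0 L p1 p2 p3 α β) ∧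
      (∀ α β : ℝ, 0 < α → 0 < β → f0 L p1 p2 p3 (R * α) (S * β) = f0 L p1 p2 p3 α β) := by
  obtain ⟨r, s, hr, hs, hr1, hs1, hst, h⟩ := piece D hg1 hg2
  obtain ⟨r', s', hr', hs', hr1', hs1', -, h'⟩ := piece D.rot (by simpa using hg2) 
    (by have := D.geven 1 0; simpa [hg1] using this)
  have k1 : ∀ α β : ℝ, 0 < α → 0 < β → f1 L p1 p2 p3 (r * α) (s * β) = f0 L p1 p2 p3 α β := by
    intro α β hα hβ
    exact h α β hα hβ
  have k2 : ∀ α β : ℝ, 0 < α → 0 < β → f0 L p1 p2 p3 (r' * α) (s' * β) = f1 L p1 p2 p3 α β := by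
    intro α β hα hβ
    exact (f1_rot D.symm _ _).symm.trans ((h' α β hα hβ).trans (f0_rot _ _))
  refine ⟨r, s, r' * r, s' * s, hr, hs, by positivity, by positivity, ?_, k1, ?_⟩
  · intro y1 y2 y3 b hy hb
    obtain ⟨a1, a2⟩ := hst y1 y2 y3 b hy hb
    nlinarith
  · intro α β hα hβ
    rw [mul_assoc, mul_assoc, k2 _ _ (by positivity) (by positivity), k1 _ _ hα hβ]

lemma DD_spec (D : PData L p1 p2 p3 g) (n1 n2 e : ℝ) (h : ∀ q ∈ LQ L p3, n1 * p1 q + n2 * p2 q < e) : 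
    ∃ U V : ℝ, DD L p1 p2 p3 n1 n2 e = U + V ∧ 0 < U + V ∧ 
      (∀ q ∈ L, n1 * p1 q + n2 * p2 q + U * p3 q ≤ e) ∧ (∀ q ∈ L, n1 * p1 q + n2 * p2 q - V * p3 q ≤ e) ∧ 
      (∃ p ∈ L, n1 * p1 p + n2 * p2 p + U * p3 p = e ∧ 0 < p3 p) ∧ 
      (∃ p ∈ L, n1 * p1 p + n2 * p2 p - V * p3 p = e ∧ p3 p < 0) := by
  obtain ⟨ε, hε, p, hp, -, -, hp3⟩ := D.surj 0 0 1
  obtain ⟨ε', hε', p', hp', -, -, hp3'⟩ := D.surj 0 0 (-1)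
  have hn : ∀ q, (-p3) q = -(p3 q) := fun q => rfl
  have ha : ∀ q, (n1 • p1 + n2 • p2) q = n1 * p1 q + n2 * p2 q := fun q => rfl
  obtain ⟨s1, P, hP, s2, s3⟩ := Up_spec D.comp D.conv (n1 • p1 + n2 • p2) p3 e (fun p hp h0 => h p ⟨hp, h0⟩) 
    ⟨p, hp, by rw [hp3]; linarith⟩ ⟨p', hp', by rw [hp3']; linarith⟩
  obtain ⟨t1, Q, hQ, t2, t3⟩ := Up_spec D.comp D.conv (n1 • p1 + n2 • p2) (-p3) e 
    (fun p hp h0 => h p ⟨hp, by rw [hn] at h0; linarith⟩) 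
    ⟨p', hp', by rw [hn, hp3']; linarith⟩ ⟨p, hp, by rw [hn, hp3]; linarith⟩
  set U := Up L (n1 • p1 + n2 • p2) p3 e with hU
  set V := Up L (n1 • p1 + n2 • p2) (-p3) e with hV
  simp only [hn, ha] at s1 s2 s3 t1 t2 t3
  refine ⟨U, V, rfl, ?_, s1, fun q hq => by linarith [t1 q hq], ⟨P, hP, s2, s3⟩, ⟨Q, hQ, by linarith, by linarith⟩⟩
  have hd : 0 < p3 P - p3 Q := by linarith
  have hm : (-p3 Q / (p3 P - p3 Q)) • P + (p3 P / (p3 P - p3 Q)) • Q ∈ L := 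
    D.conv hP hQ (div_nonneg (by linarith) hd.le) (div_nonneg s3.le hd.le) (by field_simp; ring)
  have := h _ ⟨hm, by simp only [map_add, map_smul, smul_eq_mul]; field_simp; ring⟩
  simp only [map_add, map_smul, smul_eq_mul] at this
  have e1 : n1 * (-p3 Q / (p3 P - p3 Q) * p1 P + p3 P / (p3 P - p3 Q) * p1 Q) + 
    n2 * (-p3 Q / (p3 P - p3 Q) * p2 P + p3 P / (p3 P - p3 Q) * p2 Q) = 
    (-p3 Q * (n1 * p1 P + n2 * p2 P) + p3 P * (n1 * p1 Q + n2 * p2 Q)) / (p3 P - p3 Q) := by field_simp; ring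
  rw [e1, div_lt_iff₀ hd] at this
  have e2 : n1 * p1 P + n2 * p2 P = e - U * p3 P := by linarith
  have e3 : n1 * p1 Q + n2 * p2 Q = e + V * p3 Q := by linarith
  rw [e2, e3] at this
  have h3 : 0 < (U + V) * (p3 P * (-p3 Q)) := by nlinarith
  exact (mul_pos_iff_of_pos_right (mul_pos s3 (by linarith))).1 h3

end Part3e


section Part4
open Filter Topology
variable {E : Type*} [NormedAddCommGroup E] [NormedSpace ℝ E]
variable {L : Set E} {p1 p2 p3 : E →L[ℝ] ℝ} {g : ℝ → ℝ → ℝ}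

lemma pow_le_of_tendsto {ρ A c : ℝ} (hA : 0 < A) (h : Tendsto (fun n : ℕ => ρ ^ n * A) atTop (𝓝 c)) : ρ ≤ 1 := by
  by_contra hc
  push Not at hc
  have := (tendsto_pow_atTop_atTop_of_one_lt hc).atTop_mul_const hA
  exact not_tendsto_nhds_of_tendsto_atTop this c h

lemma iter_half {F : ℝ → ℝ} {R q c : ℝ} (hq : 0 < q) (hq1 : q < 1) (hR : 0 < R)
    (hF : ∀ β, 0 < β → F (q * β) = R * F β) 
    (h1 : Tendsto (fun β => F β / √β) (𝓝[>] 0) (𝓝 c)) (β : ℝ) (hβ : 0 < β) :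
    Tendsto (fun n : ℕ => (R / √q) ^ n * (F β / √β)) atTop (𝓝 c) := by
  have hp : ∀ n : ℕ, F (q ^ n * β) = R ^ n * F β := by
    intro n
    induction n with
    | zero => simp
    | succ n ih => 
      rw [pow_succ', mul_assoc, hF _ (by positivity), ih]; ring
  have h2 : Tendsto (fun n : ℕ => q ^ n * β) atTop (𝓝[>] 0) := by
    refine tendsto_nhdsWithin_iff.2 ⟨?_, Eventually.of_forall fun n => ?_⟩
    · simpa using (tendsto_pow_atTop_nhds_zero_of_lt_one hq.le hq1).mul_const β
    · exact mul_pos (pow_pos hq n) hβ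
  refine (h1.comp h2).congr fun n => ?_
  simp only [Function.comp]
  rw [hp, Real.sqrt_mul (by positivity), div_pow]
  have : √(q ^ n) = √q ^ n := by
    rw [Real.sqrt_eq_iff_mul_self_eq (by positivity) (by positivity), ← mul_pow, Real.mul_self_sqrt hq.le]
  rw [this]
  have := Real.sqrt_pos.2 hq
  have := Real.sqrt_pos.2 hβ
  field_simp

lemma iter_lemma (f : ℝ → ℝ → ℝ) (hhom : ∀ l α β, 0 < l → 0 < α → 0 < β → f (l * α) (l * β) = l * f α β)
    (hpos : ∀ α β, 0 < α → 0 < β → 0 < f α β) (R S : ℝ) (hR : 0 < R) (hRS : R < S)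
    (hinv : ∀ α β, 0 < α → 0 < β → f (R * α) (S * β) = f α β)
    (c c' : ℝ) (h1 : Tendsto (fun β => f 1 β / √β) (𝓝[>] 0) (𝓝 c)) 
    (h2 : Tendsto (fun α => f α 1 / √α) (𝓝[>] 0) (𝓝 c')) :
    0 < c ∧ ∀ α β, 0 < α → 0 < β → f α β = c * √(α * β) := by
  have hS : 0 < S := hR.trans hRS
  have hq : 0 < R / S := by positivity
  have hq1 : R / S < 1 := (div_lt_one hS).2 hRS
  have F1 : ∀ β, 0 < β → f 1 (R / S * β) = R * f 1 β := by
    intro β hβ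
    rw [← hinv 1 (R / S * β) one_pos (by positivity), ← hhom _ _ _ hR one_pos hβ]
    congr 1; field_simp
  have F2 : ∀ α, 0 < α → f (R / S * α) 1 = 1 / S * f α 1 := by
    intro α hα
    rw [← hinv α 1 hα one_pos, ← hhom _ _ _ (by positivity) (by positivity) (by positivity)]
    congr 1 <;> field_simp
  have t1 := iter_half hq hq1 hR F1 h1
  have t2 := iter_half hq hq1 (by positivity) F2 h2 1 one_pos
  have p1 := pow_le_of_tendsto (by have := hpos 1 1 one_pos one_pos; positivity) (t1 1 one_pos)
  have p2 := pow_le_of_tendsto (by have := hpos 1 1 one_pos one_pos; positivity) t2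
  have hsq := Real.sqrt_pos.2 hq
  rw [div_le_one hsq] at p1 p2
  have p1' : R ^ 2 ≤ R / S := by rw [← Real.sq_sqrt hq.le]; gcongr
  have p2' : (1 / S) ^ 2 ≤ R / S := by rw [← Real.sq_sqrt hq.le]; gcongr
  have p3 : R * S ≤ 1 := by
    rw [le_div_iff₀ hS] at p1'; nlinarith
  have p4 : 1 ≤ R * S := by
    rw [div_pow, one_pow, div_le_div_iff₀ (by positivity) hS] at p2'; nlinarith
  have p5 : R * S = 1 := le_antisymm p3 p4
  have p6 : R / √(R / S) = 1 := by
    rw [div_eq_one_iff_eq hsq.ne', eq_comm, Real.sqrt_eq_iff_mul_self_eq hq.le hR.le, div_eq_iff hS.ne']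
    linear_combination (-R) * p5
  have hc : ∀ β, 0 < β → f 1 β = c * √β := by
    intro β hβ
    have := t1 β hβ
    rw [p6] at this
    simp only [one_pow, one_mul] at this
    have e := tendsto_nhds_unique this tendsto_const_nhds
    have := Real.sqrt_pos.2 hβ
    rw [e]; field_simp
  refine ⟨?_, fun α β hα hβ => ?_⟩
  · have := hc 1 one_pos
    rw [Real.sqrt_one, mul_one] at this
    rw [← this]; exact hpos 1 1 one_pos one_pos
  · have h3 := hhom α 1 (β / α) hα one_pos (by positivity)
    rw [hc _ (by positivity)] at h3
    have e1 : α * (β / α) = β := by field_simp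
    rw [mul_one, e1] at h3
    rw [h3]
    have e2 : α * β = α ^ 2 * (β / α) := by field_simp
    rw [e2, Real.sqrt_mul (by positivity), Real.sqrt_sq hα.le]; ring

lemma PData.b_nonneg (D : PData L p1 p2 p3 g) (hg1 : g 1 0 = 1) {y1 y2 y3 b : ℝ} 
    (hy : PlaneAt L p1 p2 p3 1 0 y1 y2 y3 b) : 0 ≤ b := by
  obtain ⟨hGc, γ, hγm, hγd, hγs, hγc⟩ := convex_right _ D.G_convex
  obtain ⟨T, S, q1, q2, hst⟩ := D.exists_stat γ hγs 0
  have := hst.b_eq D (D.gpos _ _ (by simp)) (y1 := y1) (y2 := y2) (y3 := y3) (b := b) (by simpa [hg1] using hy)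
  rw [this]
  exact hst.b_nonneg D

lemma hk_spec (D : PData L p1 p2 p3 g) (hg1 : g 1 0 = 1) (a1 : ∀ q ∈ LQ L p3, p1 q + p2 q < 1)
    (a2 : ∀ q ∈ LQ L p3, p1 q - p2 q < 1) :
    ∃ h k : ℝ, Up (LQ L p3) p1 p2 1 = h ∧ Up (LQ L p3) p1 (-p2) 1 = k ∧ 1 < h ∧ 1 < k ∧ 
      (∀ τ, -k < τ → τ < h → ∀ q ∈ LQ L p3, p1 q + τ * p2 q < 1) ∧
      (∀ q ∈ LQ L p3, p1 q + h * p2 q ≤ 1) ∧ (∀ q ∈ LQ L p3, p1 q - k * p2 q ≤ 1) ∧ 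
      (∃ q ∈ LQ L p3, p1 q + h * p2 q = 1 ∧ 0 < p2 q) ∧ (∃ q ∈ LQ L p3, p1 q - k * p2 q = 1 ∧ p2 q < 0) := by
  have hz : ∀ p ∈ LQ L p3, p2 p = 0 → p1 p < 1 := by
    intro p hp h; have := a1 p hp; linarith
  obtain ⟨ε, hε, p, hp, -, hp2, hp3⟩ := D.surj 0 1 0
  obtain ⟨ε', hε', p', hp', -, hp2', hp3'⟩ := D.surj 0 (-1) 0
  have hm : p ∈ LQ L p3 := ⟨hp, by rw [hp3]; ring⟩
  have hm' : p' ∈ LQ L p3 := ⟨hp', by rw [hp3']; ring⟩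
  have hn : ∀ q, (-p2) q = -(p2 q) := fun q => rfl
  obtain ⟨s1, P, hP, s2, s3⟩ := Up_spec (LQ_comp D.comp (p3 := p3)) (LQ_conv D.conv) p1 p2 1 hz 
    ⟨p, hm, by rw [hp2]; linarith⟩ ⟨p', hm', by rw [hp2']; linarith⟩
  obtain ⟨t1, Q, hQ, t2, t3⟩ := Up_spec (LQ_comp D.comp (p3 := p3)) (LQ_conv D.conv) p1 (-p2) 1 
    (fun q hq h => hz q hq (by rw [hn] at h; linarith))
    ⟨p', hm', by rw [hn, hp2']; linarith⟩ ⟨p, hm, by rw [hn, hp2]; linarith⟩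
  set h := Up (LQ L p3) p1 p2 1
  set k := Up (LQ L p3) p1 (-p2) 1
  simp only [hn] at t1 t2 t3
  have h1 : 1 < h := by
    have := a1 P hP
    by_contra hc; push Not at hc; nlinarith
  have k1 : 1 < k := by
    have := a2 Q hQ
    by_contra hc; push Not at hc; nlinarith
  refine ⟨h, k, rfl, rfl, h1, k1, ?_, s1, fun q hq => by linarith [t1 q hq], ⟨P, hP, s2, s3⟩, 
    ⟨Q, hQ, by linarith, by linarith⟩⟩
  intro τ hτ1 hτ2 q hq
  have i1 := s1 q hq
  have i2 := t1 q hq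
  rcases lt_trichotomy (p2 q) 0 with hh | hh | hh
  · nlinarith
  · have := hz q hq hh; rw [hh]; linarith
  · nlinarith

lemma tang (D : PData L p1 p2 p3 g) {y1 y3 b : ℝ} (hy : PlaneAt L p1 p2 p3 1 0 y1 0 y3 b) (τ : ℝ) 
    (hτ : ∀ q ∈ LQ L p3, p1 q + τ * p2 q < 1) : 
    ∃ D1 D2 : ℝ, D1 = -b * (DD L p1 p2 p3 1 τ 1 - τ * D2) ∧ ∀ n1 n2 : ℝ, 
      (∀ q ∈ LQ L p3, n1 * p1 q + n2 * p2 q < 1) → 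
      DD L p1 p2 p3 n1 n2 1 ≤ DD L p1 p2 p3 1 τ 1 + (n1 - 1) * D1 + (n2 - τ) * D2 := by
  obtain ⟨U, V, hD, -, u1, v1, ⟨P, hP, P1, P2⟩, ⟨Q, hQ, Q1, Q2⟩⟩ := DD_spec D 1 τ 1 (by simpa using hτ)
  have c1 := hy.2 P hP 1 τ U (by simp) (by simpa using u1) (by linarith)
  have c2 := hy.2 Q hQ 1 τ (-V) (by simp) (fun q hq => by linarith [v1 q hq]) (by linarith)
  have c0 := hy.1
  refine ⟨p1 Q / p3 Q - p1 P / p3 P, p2 Q / p3 Q - p2 P / p3 P, ?_, ?_⟩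
  · rw [hD]
    have hp := P2.ne'
    have hq := Q2.ne
    have e0 : y1 = 1 + b := by linarith
    rw [e0] at c1 c2
    have d1 : (1 + b) * (p1 P / p3 P) + y3 = b * (p1 P / p3 P + τ * (p2 P / p3 P) + U) := by
      field_simp
      linear_combination c1 - b * P1
    have d2 : (1 + b) * (p1 Q / p3 Q) + y3 = b * (p1 Q / p3 Q + τ * (p2 Q / p3 Q) - V) := by
      field_simp
      linear_combination c2 - b * Q1
    linear_combination d2 - d1
  · intro n1 n2 hn
    obtain ⟨U', V', hD', -, u1', v1', -, -⟩ := DD_spec D n1 n2 1 hn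
    rw [hD, hD']
    have i1 := u1' P hP
    have i2 := v1' Q hQ
    have j1 : U' ≤ U - (n1 - 1) * (p1 P / p3 P) - (n2 - τ) * (p2 P / p3 P) := by
      have e : U - (n1 - 1) * (p1 P / p3 P) - (n2 - τ) * (p2 P / p3 P) = 
        (U * p3 P - (n1 - 1) * p1 P - (n2 - τ) * p2 P) / p3 P := by field_simp
      rw [e, le_div_iff₀ P2]; linarith
    have j2 : V' ≤ V + (n1 - 1) * (p1 Q / p3 Q) + (n2 - τ) * (p2 Q / p3 Q) := by
      have hq := Q2.ne
      have e : V + (n1 - 1) * (p1 Q / p3 Q) + (n2 - τ) * (p2 Q / p3 Q) = 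
        (-(V * p3 Q + (n1 - 1) * p1 Q + (n2 - τ) * p2 Q)) / (-p3 Q) := by field_simp
      rw [e, le_div_iff₀ (by linarith)]; linarith
    linarith

/-- a positive function which is the square root of a quadratic, touched from above by a line -/
lemma sqrt_tang (φ : ℝ → ℝ) (C h k τ d : ℝ) (h1 : -k < τ) (h2 : τ < h) (hC : 0 < C)
    (hφ : ∀ s, -k < s → s < h → φ s = C * √((h - s) * (k + s))) 
    (hle : ∀ s, -k < s → s < h → φ s ≤ φ τ + (s - τ) * d) :
    2 * φ τ * d = C ^ 2 * (h - k - 2 * τ) := by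
  have hp : 0 < (h - τ) * (k + τ) := mul_pos (by linarith) (by linarith)
  have hder : HasDerivAt (fun s => C * √((h - s) * (k + s)) - (s - τ) * d) 
      (C * (((0 - 1) * (k + τ) + (h - τ) * (0 + 1)) / (2 * √((h - τ) * (k + τ)))) - (1 - 0) * d) τ := by
    refine HasDerivAt.sub (HasDerivAt.const_mul _ (HasDerivAt.sqrt ?_ hp.ne')) 
      (HasDerivAt.mul_const ((hasDerivAt_id τ).sub (hasDerivAt_const _ _)) _)
    exact ((hasDerivAt_const _ _).sub (hasDerivAt_id τ)).mul ((hasDerivAt_const _ _).add (hasDerivAt_id τ))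
  have hmax : IsLocalMax (fun s => C * √((h - s) * (k + s)) - (s - τ) * d) τ := by
    have hnb : Ioo (-k) h ∈ 𝓝 τ := Ioo_mem_nhds h1 h2
    filter_upwards [hnb] with s hs
    have := hle s hs.1 hs.2
    rw [hφ s hs.1 hs.2, hφ τ h1 h2] at this
    simp only [sub_self]
    linarith
  have e := hmax.hasDerivAt_eq_zero hder
  have hs := Real.sqrt_pos.2 hp
  have hss := Real.sq_sqrt hp.le
  rw [hφ τ h1 h2]
  set w := √((h - τ) * (k + τ))
  have e2 : d = C * (((0 - 1) * (k + τ) + (h - τ) * (0 + 1)) / (2 * w)) := by linarith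
  rw [e2]
  field_simp
  ring

lemma f0_hom (l α β : ℝ) (hl : 0 < l) : f0 L p1 p2 p3 (l * α) (l * β) = l * f0 L p1 p2 p3 α β := by
  unfold f0
  rw [← DD_smul _ _ _ _ hl]
  congr 1 <;> ring

set_option maxHeartbeats 1000000 in
theorem sym_lemma (D : PData L p1 p2 p3 g) (hg1 : g 1 0 = 1) (hg2 : g 0 1 = 1) {y1 y3 b : ℝ} 
    (hy : PlaneAt L p1 p2 p3 1 0 y1 0 y3 b) 
    (a1 : ∀ q ∈ LQ L p3, p1 q + p2 q < 1) (a2 : ∀ q ∈ LQ L p3, p1 q - p2 q < 1)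
    (c c' : ℝ) (hc : Tendsto (fun β => f0 L p1 p2 p3 1 β / √β) (𝓝[>] 0) (𝓝 c)) 
    (hc' : Tendsto (fun α => f0 L p1 p2 p3 α 1 / √α) (𝓝[>] 0) (𝓝 c')) : 
    Up (LQ L p3) p1 p2 1 = Up (LQ L p3) p1 (-p2) 1 := by
  obtain ⟨h, k, eh, ek, h1, k1, hst, hle, kle, ⟨P, hP, P1, P2⟩, ⟨Q, hQ, Q1, Q2⟩⟩ := hk_spec D hg1 a1 a2
  have hb0 := D.b_nonneg hg1 hy
  rcases hb0.eq_or_lt with hb | hb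
  · -- the plane passes through the origin
    have hy1 := hy.1
    have i1 := hy.contactQ D 1 h (by simp) P hP (by simpa using hle) (by linarith)
    have i2 := hy.contactQ D 1 (-k) (by simp) Q hQ (fun q hq => by linarith [kle q hq]) (by linarith)
    have e0 : y1 = 1 := by linarith
    rw [e0, ← hb] at i1 i2
    have j1 := kle (-P) (LQ_symm D.symm P hP)
    have j2 := hle (-Q) (LQ_symm D.symm Q hQ)
    simp only [map_neg] at j1 j2
    rw [eh, ek]
    have p1P : p1 P = 0 := by linarith
    have p1Q : p1 Q = 0 := by linarith
    rw [p1P] at P1 j1; rw [p1Q] at Q1 j2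
    apply le_antisymm
    · by_contra hcc; push Not at hcc; nlinarith
    · by_contra hcc; push Not at hcc; nlinarith
  obtain ⟨r, s, R, S, hr, hs, hR, hS, hRS, k1', k0'⟩ := cycle D hg1 hg2
  have hf0 : ∀ α β, f0 L p1 p2 p3 α β = DD L p1 p2 p3 (α + β) (α * h - β * k) (α + β) := by
    intro α β; unfold f0; rw [eh, ek]
  have hDf : ∀ α β, 0 < α → 0 < β → 0 < f0 L p1 p2 p3 α β := by
    intro α β hα hβ
    rw [hf0]
    obtain ⟨U, V, e, pos, -⟩ := DD_spec D (α + β) (α * h - β * k) (α + β) (fun q hq => by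
      have := hst ((α * h - β * k) / (α + β)) (by rw [lt_div_iff₀ (by positivity)]; nlinarith) 
        (by rw [div_lt_iff₀ (by positivity)]; nlinarith) q hq
      have e : (α + β) * p1 q + (α * h - β * k) * p2 q = (α + β) * (p1 q + (α * h - β * k) / (α + β) * p2 q) := by
        field_simp
      rw [e]
      nlinarith)
    rw [e]; exact pos
  obtain ⟨hcpos, hf⟩ := iter_lemma (f0 L p1 p2 p3) (fun l α β hl _ _ => f0_hom l α β hl) hDf R S hR 
    (hRS _ _ _ _ hy hb) k0' c c' hc hc'
  obtain ⟨k', h', ek', eh', hk1', hh1', hst', -⟩ := hk_spec D.rot (by simpa using hg2) 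
    (fun q hq => by
      have := a2 (-q) (LQ_symm D.symm q hq)
      simp only [map_neg] at this
      show p2 q + -(p1 q) < 1
      linarith)
    (fun q hq => by 
      have := a1 q hq
      show p2 q - -(p1 q) < 1
      linarith)
  rw [neg_neg] at eh'
  have hstr : ∀ τ, -k' < τ → τ < h' → ∀ q ∈ LQ L p3, τ * p1 q + 1 * p2 q < 1 := by
    intro τ i1 i2 q hq
    have : p2 q + -τ * -(p1 q) < 1 := hst' (-τ) (by linarith) (by linarith) q hq
    linarith
  -- explicit formulas
  have F0 : ∀ τ, -k < τ → τ < h → DD L p1 p2 p3 1 τ 1 = c / (h + k) * √((h - τ) * (k + τ)) := by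
    intro τ i1 i2
    have e := hf ((k + τ) / (h + k)) ((h - τ) / (h + k)) (div_pos (by linarith) (by linarith)) 
      (div_pos (by linarith) (by linarith))
    rw [hf0] at e
    have hk : 0 < h + k := by linarith
    have s1 : (k + τ) / (h + k) + (h - τ) / (h + k) = 1 := by field_simp; ring
    have s2 : (k + τ) / (h + k) * h - (h - τ) / (h + k) * k = τ := by field_simp; ring
    have s3 : (k + τ) / (h + k) * ((h - τ) / (h + k)) = (h - τ) * (k + τ) / (h + k) ^ 2 := by field_simp
    rw [s1, s2, s3, Real.sqrt_div' _ (by positivity), Real.sqrt_sq hk.le] at e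
    rw [e]; ring
  have F1 : ∀ τ, -k' < τ → τ < h' → DD L p1 p2 p3 τ 1 1 = c / √(r * s) / (h' + k') * √((h' - τ) * (k' + τ)) := by
    intro τ i1 i2
    have hk : 0 < h' + k' := by linarith
    have e := k1' ((h' - τ) / (h' + k') / r) ((k' + τ) / (h' + k') / s) 
      (div_pos (div_pos (by linarith) (by linarith)) hr) (div_pos (div_pos (by linarith) (by linarith)) hs)
    rw [mul_div_cancel₀ _ hr.ne', mul_div_cancel₀ _ hs.ne', hf _ _ 
      (div_pos (div_pos (by linarith) (by linarith)) hr) (div_pos (div_pos (by linarith) (by linarith)) hs)] at e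
    unfold f1 at e
    rw [eh', ek'] at e
    have s1 : (h' - τ) / (h' + k') + (k' + τ) / (h' + k') = 1 := by field_simp; ring
    have s2 : -((h' - τ) / (h' + k')) * k' + (k' + τ) / (h' + k') * h' = τ := by field_simp; ring
    have s3 : (h' - τ) / (h' + k') / r * ((k' + τ) / (h' + k') / s) = ((h' - τ) * (k' + τ)) / ((h' + k') ^ 2 * (r * s)) := by 
      field_simp
    rw [s1, s2, s3, Real.sqrt_div' _ (by positivity), Real.sqrt_mul (sq_nonneg (h' + k')), Real.sqrt_sq hk.le] at e
    rw [e]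
    have := Real.sqrt_pos.2 (mul_pos hr hs)
    field_simp
  have hCpos : 0 < c / (h + k) := div_pos hcpos (by linarith)
  have hCpos' : 0 < c / √(r * s) / (h' + k') := div_pos (div_pos hcpos (Real.sqrt_pos.2 (mul_pos hr hs))) (by linarith)
  set C := c / (h + k)
  set C' := c / √(r * s) / (h' + k')
  obtain ⟨D1, D2, hD1, hD2⟩ := tang D hy 1 (hst 1 (by linarith) h1)
  obtain ⟨D1', D2', hD1', hD2'⟩ := tang D hy (-1) (hst (-1) (by linarith) (by linarith))
  have hEv : ∀ s, DD L p1 p2 p3 (-s) (-1) 1 = DD L p1 p2 p3 s 1 1 := fun s => DD_neg D.symm s 1 1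
  have w1 := sqrt_tang (fun τ => DD L p1 p2 p3 1 τ 1) C h k 1 D2 (by linarith) (by linarith) hCpos F0 
    (fun s i1 i2 => by
      have := hD2 1 s (by simpa using hst s i1 i2)
      linarith)
  have w2 := sqrt_tang (fun τ => DD L p1 p2 p3 1 τ 1) C h k (-1) D2' (by linarith) (by linarith) hCpos F0 
    (fun s i1 i2 => by
      have := hD2' 1 s (by simpa using hst s i1 i2)
      linarith)
  have w3 := sqrt_tang (fun τ => DD L p1 p2 p3 τ 1 1) C' h' k' 1 D1 (by linarith) (by linarith) hCpos' F1 
    (fun s i1 i2 => by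
      have := hD2 s 1 (hstr s i1 i2)
      linarith)
  have w4 := sqrt_tang (fun τ => DD L p1 p2 p3 τ 1 1) C' h' k' (-1) (-D1') (by linarith) (by linarith) hCpos' F1 
    (fun s i1 i2 => by
      have := hD2' (-s) (-1) (fun q hq => by
        have := hstr s i1 i2 (-q) (LQ_symm D.symm q hq)
        simp only [map_neg] at this
        linarith)
      rw [hEv] at this
      have e := hEv (-1)
      rw [neg_neg] at e
      rw [← e]
      linarith)
  have ee := hEv (-1)
  rw [neg_neg] at ee
  rw [← ee] at w4
  have v1 := F0 1 (by linarith) h1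
  have v2 := F0 (-1) (by linarith) (by linarith)
  have v3 := F1 1 (by linarith) (by linarith)
  have v4 := F1 (-1) (by linarith) (by linarith)
  rw [← ee] at v4
  set X := DD L p1 p2 p3 1 1 1
  set Y := DD L p1 p2 p3 1 (-1) 1
  have sq : ∀ A B Z : ℝ, 0 ≤ B → Z = A * √B → Z ^ 2 = A ^ 2 * B := by
    intro A B Z hB h; rw [h, mul_pow, Real.sq_sqrt hB]
  replace v1 := sq _ _ _ (mul_nonneg (by linarith) (by linarith)) v1
  replace v2 := sq _ _ _ (mul_nonneg (by linarith) (by linarith)) v2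
  replace v3 := sq _ _ _ (mul_nonneg (by linarith) (by linarith)) v3
  replace v4 := sq _ _ _ (mul_nonneg (by linarith) (by linarith)) v4
  rw [eh, ek]
  have z1 : C' ^ 2 * (h' - k' - 2) = -b * (C ^ 2 * (2 * (h * k) + (h - k))) := by
    rw [hD1] at w3
    linear_combination -w3 - 2 * b * v1 + b * w1
  have z2 : C' ^ 2 * (h' - k' + 2) = b * (C ^ 2 * (2 * (h * k) - (h - k))) := by
    rw [hD1'] at w4
    linear_combination -w4 + 2 * b * v2 + b * w2
  have z3 : C ^ 2 * (h - k) = C' ^ 2 * (h' - k') := by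
    linear_combination (v3 - v1) / 2 - (v4 - v2) / 2
  have z4 : C ^ 2 * ((1 + b) * (h - k)) = 0 := by linear_combination z3 + (z1 + z2) / 2
  have z5 : h - k = 0 := by
    rcases mul_eq_zero.1 z4 with h | h
    · exact absurd h (by positivity)
    · rcases mul_eq_zero.1 h with h | h
      · linarith
      · exact h
  linarith
end Part4


section Part5a
open Filter Topology
variable {E : Type*} [NormedAddCommGroup E] [NormedSpace ℝ E]
variable {L : Set E} {p1 p2 p3 : E →L[ℝ] ℝ} {g : ℝ → ℝ → ℝ}

/-- The regularity of chords at depth `ε` below the top level, for slope `t`. -/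
def GoodSlope (Z : Set (ℝ × ℝ)) (t : ℝ) : Prop :=
  ∃ c, ∀ H, IsGreatest ((fun z : ℝ × ℝ => z.1 + t * z.2) '' Z) H → ∀ d > 0, ∀ W : ℝ → ℝ, 
    (∀ ε, 0 < ε → ε < d → IsGreatest (chordSet Z t (H - ε)) (W ε)) → 
    Tendsto (fun ε => W ε / √ε) (𝓝[>] 0) (𝓝 c)

lemma lim_bridge {Z : Set (ℝ × ℝ)} {t : ℝ} (hch : GoodSlope Z t) (φ : ℝ → ℝ) (κ h k : ℝ) (hκ : 0 < κ) (hhk : 0 < h + k)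
    (hH : IsGreatest ((fun z : ℝ × ℝ => z.1 + t * z.2) '' Z) (κ * h))
    (hφ : ∀ τ, -k < τ → τ < h → IsGreatest (chordSet Z t (κ * τ)) (φ τ)) : 
    ∃ c', Tendsto (fun β => (1 + β) * φ ((h - β * k) / (1 + β)) / √β) (𝓝[>] 0) (𝓝 c') := by
  obtain ⟨c, hc⟩ := hch
  have h1 := hc _ hH (κ * (h + k)) (by positivity) (fun ε => φ (h - ε / κ)) (fun ε hε hε2 => by
    have e : κ * h - ε = κ * (h - ε / κ) := by field_simp
    rw [e]
    have hpos : 0 < ε / κ := by positivity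
    have hlt : ε / κ < h + k := by rw [div_lt_iff₀ hκ]; linarith
    exact hφ _ (by linarith) (by linarith))
  have hid : Tendsto (fun β : ℝ => β) (𝓝[>] 0) (𝓝 0) := tendsto_nhdsWithin_of_tendsto_nhds tendsto_id
  have hpos : ∀ᶠ β : ℝ in 𝓝[>] 0, 0 < β := self_mem_nhdsWithin
  have h1b : Tendsto (fun β : ℝ => 1 + β) (𝓝[>] 0) (𝓝 1) := by simpa using hid.const_add 1
  have h2 : Tendsto (fun β : ℝ => κ * β * (h + k) / (1 + β)) (𝓝[>] 0) (𝓝[>] 0) := by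
    refine tendsto_nhdsWithin_iff.2 ⟨?_, ?_⟩
    · have := ((hid.const_mul κ).mul_const (h + k)).div h1b one_ne_zero
      have e : κ * 0 * (h + k) / 1 = 0 := by simp
      rw [e] at this
      exact this
    · filter_upwards [hpos] with β hβ
      have : 0 < κ * β * (h + k) / (1 + β) := by positivity
      exact this
  have h3 : Tendsto (fun β : ℝ => √(κ * (h + k) / (1 + β))) (𝓝[>] 0) (𝓝 (√(κ * (h + k) / 1))) := 
    (tendsto_const_nhds.div h1b one_ne_zero).sqrt
  refine ⟨_, ((h1b.mul (h1.comp h2)).mul h3).congr' ?_⟩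
  filter_upwards [hpos] with β hβ
  simp only [Function.comp]
  have e1 : h - κ * β * (h + k) / (1 + β) / κ = (h - β * k) / (1 + β) := by field_simp; ring
  have e2 : κ * β * (h + k) / (1 + β) = β * (κ * (h + k) / (1 + β)) := by ring
  rw [e1, e2, Real.sqrt_mul hβ.le]
  have : 0 < √(κ * (h + k) / (1 + β)) := Real.sqrt_pos.2 (by positivity)
  have := Real.sqrt_pos.2 hβ
  field_simp

def Z2 (L : Set E) (πx π0 π1 : E →L[ℝ] ℝ) : Set (ℝ × ℝ) := {z | ∀ p ∈ L, πx p + z.1 * π0 p + z.2 * π1 p ≤ 1}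

def negZ (Z : Set (ℝ × ℝ)) : Set (ℝ × ℝ) := {z | -z ∈ Z}

lemma Z2_chord {πx π0 π1 : E →L[ℝ] ℝ} {κ t : ℝ} (D : PData L πx (κ • π0) (π1 - t • π0) g) (τ : ℝ) 
    (h : ∀ q ∈ LQ L (π1 - t • π0), πx q + τ * (κ • π0) q < 1) : 
    IsGreatest (chordSet (Z2 L πx π0 π1) t (κ * τ)) (DD L πx (κ • π0) (π1 - t • π0) 1 τ 1) := by
  obtain ⟨U, V, e, -, u, v, ⟨P, hP, P1, P2⟩, ⟨Q, hQ, Q1, Q2⟩⟩ := DD_spec D 1 τ 1 (by simpa using h)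
  have h2 : ∀ q, (κ • π0) q = κ * π0 q := fun q => rfl
  have h3 : ∀ q, (π1 - t • π0) q = π1 q - t * π0 q := fun q => rfl
  simp only [h2, h3] at *
  rw [e]
  refine ⟨⟨(κ * τ - t * U, U), fun p hp => ?_, (κ * τ + t * V, -V), fun p hp => ?_, ?_, ?_, ?_⟩, ?_⟩
  · show πx p + (κ * τ - t * U) * π0 p + U * π1 p ≤ 1
    linarith [u p hp]
  · show πx p + (κ * τ + t * V) * π0 p + (-V) * π1 p ≤ 1
    linarith [v p hp]
  · ring
  · ring
  · ring
  · rintro w ⟨z, hz, z', hz', e1, e2, rfl⟩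
    have i1 := hz P hP
    have i2 := hz' Q hQ
    have j1 : z.1 = κ * τ - t * z.2 := by linarith
    have j2 : z'.1 = κ * τ - t * z'.2 := by linarith
    rw [j1] at i1; rw [j2] at i2
    have k1 : z.2 ≤ U := by by_contra hc; push Not at hc; nlinarith
    have k2 : -V ≤ z'.2 := by by_contra hc; push Not at hc; nlinarith
    linarith

lemma chord_negZ (Z : Set (ℝ × ℝ)) (t l : ℝ) : chordSet (negZ Z) t l = chordSet Z t (-l) := by
  ext w
  constructor
  · rintro ⟨z, hz, z', hz', e1, e2, e3⟩
    refine ⟨-z', hz', -z, hz, ?_, ?_, ?_⟩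
    · simp only [Prod.fst_neg, Prod.snd_neg]; linarith
    · simp only [Prod.fst_neg, Prod.snd_neg]; linarith
    · simp only [Prod.snd_neg]; linarith
  · rintro ⟨z, hz, z', hz', e1, e2, e3⟩
    refine ⟨-z', by simpa [negZ] using hz', -z, by simpa [negZ] using hz, ?_, ?_, ?_⟩
    · simp only [Prod.fst_neg, Prod.snd_neg]; linarith
    · simp only [Prod.fst_neg, Prod.snd_neg]; linarith
    · simp only [Prod.snd_neg]; linarith

/-- symmetry of the central section in a good direction -/
lemma sym_dir {πx π0 π1 : E →L[ℝ] ℝ} {κ t : ℝ} (hκ : 0 < κ) (D : PData L πx (κ • π0) (π1 - t • π0) g) 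
    (hg1 : g 1 0 = 1) (hg2 : g 0 1 = 1) {y1 y3 b : ℝ} 
    (hy : PlaneAt L πx (κ • π0) (π1 - t • π0) 1 0 y1 0 y3 b) 
    (a1 : ∀ q ∈ LQ L (π1 - t • π0), πx q + (κ • π0) q < 1) (a2 : ∀ q ∈ LQ L (π1 - t • π0), πx q - (κ • π0) q < 1)
    (good1 : GoodSlope (Z2 L πx π0 π1) t) (good2 : GoodSlope (negZ (Z2 L πx π0 π1)) t) :
    ∃ h > 0, (∀ q ∈ LQ L (π1 - t • π0), πx q + h * (κ • π0) q ≤ 1) ∧ 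
      (∀ q ∈ LQ L (π1 - t • π0), πx q - h * (κ • π0) q ≤ 1) ∧ 
      (∃ q ∈ LQ L (π1 - t • π0), πx q + h * (κ • π0) q = 1 ∧ 0 < (κ • π0) q) ∧ 
      (∃ q ∈ LQ L (π1 - t • π0), πx q - h * (κ • π0) q = 1 ∧ (κ • π0) q < 0) := by
  obtain ⟨h, k, eh, ek, h1, k1, hst, hle, kle, ⟨P, hP, P1, P2⟩, ⟨Q, hQ, Q1, Q2⟩⟩ := hk_spec D hg1 a1 a2
  have h2 : ∀ q, (κ • π0) q = κ * π0 q := fun q => rfl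
  have h3 : ∀ q, (π1 - t • π0) q = π1 q - t * π0 q := fun q => rfl
  have hup : ∀ z ∈ Z2 L πx π0 π1, ∀ q ∈ LQ L (π1 - t • π0), πx q + (z.1 + t * z.2) * π0 q ≤ 1 := by
    intro z hz q hq
    have i1 := hz q hq.1
    have i2 := hq.2
    rw [h3] at i2
    have e : π1 q = t * π0 q := by linarith
    rw [e] at i1; linarith
  have H1 : IsGreatest ((fun z : ℝ × ℝ => z.1 + t * z.2) '' (Z2 L πx π0 π1)) (κ * h) := by
    constructor
    · obtain ⟨s, hs⟩ := D.extend 1 h 1 (by simpa using hle)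
      refine ⟨(κ * h - t * s, s), fun p hp => ?_, by ring⟩
      have := hs p hp
      rw [h2, h3] at this
      show πx p + (κ * h - t * s) * π0 p + s * π1 p ≤ 1
      linarith
    · rintro _ ⟨z, hz, rfl⟩
      have i := hup z hz P hP
      rw [h2] at P1 P2
      have : 0 < π0 P := (mul_pos_iff_of_pos_left hκ).1 P2
      show z.1 + t * z.2 ≤ κ * h
      by_contra hc; push Not at hc; nlinarith
  have H2 : IsGreatest ((fun z : ℝ × ℝ => z.1 + t * z.2) '' (negZ (Z2 L πx π0 π1))) (κ * k) := by
    constructor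
    · obtain ⟨s, hs⟩ := D.extend 1 (-k) 1 (fun q hq => by linarith [kle q hq])
      refine ⟨(κ * k + t * s, -s), fun p hp => ?_, by ring⟩
      have := hs p hp
      rw [h2, h3] at this
      show πx p + -(κ * k + t * s) * π0 p + - -s * π1 p ≤ 1
      linarith
    · rintro _ ⟨z, hz, rfl⟩
      have i := hup (-z) hz Q hQ
      rw [h2] at Q1 Q2
      have : π0 Q < 0 := by by_contra hc; push Not at hc; nlinarith
      simp only [Prod.fst_neg, Prod.snd_neg] at i
      show z.1 + t * z.2 ≤ κ * k
      by_contra hc; push Not at hc; nlinarith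
  obtain ⟨c, hc⟩ := lim_bridge good1 (fun τ => DD L πx (κ • π0) (π1 - t • π0) 1 τ 1) κ h k hκ (by linarith) H1
    (fun τ i1 i2 => Z2_chord D τ (hst τ i1 i2))
  obtain ⟨c', hc'⟩ := lim_bridge good2 (fun τ => DD L πx (κ • π0) (π1 - t • π0) 1 (-τ) 1) κ k h hκ (by linarith) H2
    (fun τ i1 i2 => by
      rw [chord_negZ, ← mul_neg]
      exact Z2_chord D (-τ) (hst (-τ) (by linarith) (by linarith)))
  have hpos : ∀ᶠ β : ℝ in 𝓝[>] 0, 0 < β := self_mem_nhdsWithin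
  have key := sym_lemma D hg1 hg2 hy a1 a2 c c' (hc.congr' ?_) (hc'.congr' ?_)
  · rw [eh, ek] at key
    rw [← key] at kle Q1
    exact ⟨h, by linarith, hle, kle, ⟨P, hP, P1, P2⟩, ⟨Q, hQ, Q1, Q2⟩⟩
  · filter_upwards [hpos] with β hβ
    rw [← DD_smul _ _ _ _ (by positivity : 0 < 1 + β)]
    unfold f0
    rw [eh, ek]
    congr 2
    · ring
    · field_simp
    · ring
  · filter_upwards [hpos] with β hβ
    rw [← DD_smul _ _ _ _ (by positivity : 0 < 1 + β)]
    unfold f0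
    rw [eh, ek]
    congr 2
    · ring
    · field_simp; ring
    · ring

lemma Z2_comp {πx π0 π1 : E →L[ℝ] ℝ} (hs : ∀ a b c : ℝ, ∃ ε > 0, ∃ p ∈ L, πx p = ε * a ∧ π0 p = ε * b ∧ π1 p = ε * c) :
    IsCompact (Z2 L πx π0 π1) := by
  have hcl : IsClosed (Z2 L πx π0 π1) := by
    have : Z2 L πx π0 π1 = ⋂ p ∈ L, {z : ℝ × ℝ | πx p + z.1 * π0 p + z.2 * π1 p ≤ 1} := by
      ext z; simp [Z2]
    rw [this]
    exact isClosed_biInter fun p _ => isClosed_le (by fun_prop) (by fun_prop)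
  have bd : ∀ b c : ℝ, ∃ M, ∀ z ∈ Z2 L πx π0 π1, z.1 * b + z.2 * c ≤ M := by
    intro b c
    obtain ⟨ε, hε, p, hp, e1, e2, e3⟩ := hs 0 b c
    refine ⟨1 / ε, fun z hz => ?_⟩
    have := hz p hp
    rw [e1, e2, e3] at this
    rw [le_div_iff₀ hε]; linarith
  obtain ⟨M1, h1⟩ := bd 1 0
  obtain ⟨M2, h2⟩ := bd (-1) 0
  obtain ⟨M3, h3⟩ := bd 0 1
  obtain ⟨M4, h4⟩ := bd 0 (-1)
  refine IsCompact.of_isClosed_subset (isCompact_Icc (a := ((-M2, -M4) : ℝ × ℝ)) (b := (M1, M3))) hcl ?_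
  intro z hz
  have i1 := h1 z hz
  have i2 := h2 z hz
  have i3 := h3 z hz
  have i4 := h4 z hz
  exact ⟨⟨by show -M2 ≤ z.1; linarith, by show -M4 ≤ z.2; linarith⟩, ⟨by show z.1 ≤ M1; linarith, by show z.2 ≤ M3; linarith⟩⟩

lemma Z2_conv {πx π0 π1 : E →L[ℝ] ℝ} : Convex ℝ (Z2 L πx π0 π1) := by
  intro z hz z' hz' a b ha hb hab p hp
  have i1 := hz p hp
  have i2 := hz' p hp
  show πx p + (a * z.1 + b * z'.1) * π0 p + (a * z.2 + b * z'.2) * π1 p ≤ 1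
  have e : πx p + (a * z.1 + b * z'.1) * π0 p + (a * z.2 + b * z'.2) * π1 p = 
    a * (πx p + z.1 * π0 p + z.2 * π1 p) + b * (πx p + z'.1 * π0 p + z'.2 * π1 p) := by
    linear_combination (-πx p) * hab
  rw [e]
  nlinarith

lemma good_dense {πx π0 π1 : E →L[ℝ] ℝ} (hs : ∀ a b c : ℝ, ∃ ε > 0, ∃ p ∈ L, πx p = ε * a ∧ π0 p = ε * b ∧ π1 p = ε * c)
    (hne : (Z2 L πx π0 π1).Nonempty) :
    Dense {t : ℝ | GoodSlope (Z2 L πx π0 π1) t ∧ GoodSlope (negZ (Z2 L πx π0 π1)) t} := by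
  have hc := Z2_comp hs
  have e : negZ (Z2 L πx π0 π1) = -(Z2 L πx π0 π1) := rfl
  have a1 := chord_ae _ hc Z2_conv hne
  have a2 := chord_ae (negZ (Z2 L πx π0 π1)) (by rw [e]; exact hc.neg) (by rw [e]; exact Z2_conv.neg) 
    (by rw [e]; exact hne.neg)
  apply MeasureTheory.Measure.dense_of_ae (μ := MeasureTheory.volume)
  filter_upwards [a1, a2] with t h1 h2
  exact ⟨h1, h2⟩
end Part5a


section Part5b
open Filter Topology

lemma coneGen_mem {L : Set E3} {x q : E3} (h : q ∈ L) : q ∈ coneGen L x := ⟨q, h, 1, zero_le_one, by simp⟩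

lemma coneGen_closed {L : Set E3} {x : E3} (hL : IsCompact L) (hx : x ∉ L) : IsClosed (coneGen L x) := by
  rcases L.eq_empty_or_nonempty with hne | hne
  · have : coneGen L x = ∅ := by
      ext p; simp [coneGen, hne]
    rw [this]; exact isClosed_empty
  obtain ⟨δ, hδ, hd⟩ : ∃ δ > 0, ∀ q ∈ L, δ ≤ ‖q - x‖ := by
    refine ⟨infDist x L, (hL.isClosed.notMem_iff_infDist_pos hne).1 hx, fun q hq => ?_⟩
    rw [← dist_eq_norm, dist_comm]
    exact infDist_le_dist_of_mem hq
  refine isClosed_of_closure_subset fun y hy => ?_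
  set M := (‖y - x‖ + 1) / δ
  have hc : IsCompact ((fun r : ℝ × E3 => x + r.1 • (r.2 - x)) '' (Icc 0 M ×ˢ L)) := 
    (isCompact_Icc.prod hL).image (by fun_prop)
  have hsub : (fun r : ℝ × E3 => x + r.1 • (r.2 - x)) '' (Icc 0 M ×ˢ L) ⊆ coneGen L x := by
    rintro _ ⟨⟨l, q⟩, ⟨h1, h2⟩, rfl⟩
    exact ⟨q, h2, l, h1.1, rfl⟩
  apply hsub
  rw [← hc.isClosed.closure_eq]
  have h1 : y ∈ closure (coneGen L x ∩ ball y 1) := by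
    rw [mem_closure_iff_nhds] at hy ⊢
    intro t ht
    obtain ⟨z, hz1, hz2⟩ := hy (t ∩ ball y 1) (inter_mem ht (ball_mem_nhds y one_pos))
    exact ⟨z, hz1.1, hz2, hz1.2⟩
  refine closure_mono ?_ h1
  rintro z ⟨⟨q, hq, l, hl, rfl⟩, hz⟩
  refine ⟨(l, q), ⟨⟨hl, ?_⟩, hq⟩, rfl⟩
  rw [le_div_iff₀ hδ]
  have h2 : ‖l • (q - x)‖ ≤ ‖y - x‖ + 1 := by
    have e : l • (q - x) = (x + l • (q - x) - y) + (y - x) := by abel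
    rw [e]
    refine (norm_add_le _ _).trans ?_
    rw [mem_ball, dist_eq_norm] at hz
    linarith
  rw [norm_smul, Real.norm_of_nonneg hl] at h2
  nlinarith [hd q hq]

lemma coneGen_convex {L : Set E3} {x : E3} (hL : Convex ℝ L) : Convex ℝ (coneGen L x) := by
  rintro _ ⟨q, hq, l, hl, rfl⟩ _ ⟨q', hq', l', hl', rfl⟩ a b ha hb hab
  have hal : 0 ≤ a * l := by positivity
  have hbl : 0 ≤ b * l' := by positivity
  rcases (add_nonneg hal hbl).eq_or_lt with h | h
  · have h1 : a * l = 0 := by linarith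
    have h2 : b * l' = 0 := by linarith
    refine ⟨q, hq, 0, le_rfl, ?_⟩
    have e : a • (x + l • (q - x)) + b • (x + l' • (q' - x)) = (a + b) • x + (a * l) • (q - x) + (b * l') • (q' - x) := by
      module
    rw [e, h1, h2, hab]; module
  · refine ⟨(a * l / (a * l + b * l')) • q + (b * l' / (a * l + b * l')) • q', 
      hL hq hq' (by positivity) (by positivity) (by field_simp), a * l + b * l', h.le, ?_⟩
    have e : a • (x + l • (q - x)) + b • (x + l' • (q' - x)) = (a + b) • x + (a * l) • (q - x) + (b * l') • (q' - x) := by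
      module
    have e2 : (a * l + b * l') • ((a * l / (a * l + b * l')) • q + (b * l' / (a * l + b * l')) • q' - x) = 
      ((a * l + b * l') * (a * l / (a * l + b * l'))) • q + ((a * l + b * l') * (b * l' / (a * l + b * l'))) • q' - (a * l + b * l') • x := by
      module
    rw [e, e2, mul_div_cancel₀ _ h.ne', mul_div_cancel₀ _ h.ne', hab]
    module

lemma coneGen_smul {L : Set E3} {x q : E3} {l : ℝ} (hl : 0 ≤ l) (h : q ∈ coneGen L x) : x + l • (q - x) ∈ coneGen L x := by
  obtain ⟨p, hp, s, hs, rfl⟩ := h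
  exact ⟨p, hp, l * s, by positivity, by module⟩

lemma coneGen_int {L : Set E3} {x q : E3} {l : ℝ} (hl : 0 < l) (h : q ∈ interior (coneGen L x)) : 
    x + l • (q - x) ∈ interior (coneGen L x) := by
  rw [mem_interior_iff_mem_nhds] at h ⊢
  have hc : ContinuousAt (fun y : E3 => x + l⁻¹ • (y - x)) (x + l • (q - x)) := by fun_prop
  have e : x + l⁻¹ • (x + l • (q - x) - x) = q := by
    rw [add_sub_cancel_left, smul_smul, inv_mul_cancel₀ hl.ne']; module
  have := hc.preimage_mem_nhds (t := coneGen L x) (by rw [e]; exact h)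
  filter_upwards [this] with y hy
  have h2 := coneGen_smul hl.le (show x + l⁻¹ • (y - x) ∈ coneGen L x from hy)
  rw [add_sub_cancel_left, smul_smul, mul_inv_cancel₀ hl.ne'] at h2
  simpa using h2

lemma homot_inv {x q : E3} {l : ℝ} (hl : 0 < l) : x + l⁻¹ • (x + l • (q - x) - x) = q := by
  rw [add_sub_cancel_left, smul_smul, inv_mul_cancel₀ hl.ne']; module

lemma suppCone_iff {L : Set E3} {x z : E3} (hL : IsCompact L) (hx : x ∉ L) : 
    z ∈ suppCone L x ↔ z ∈ coneGen L x ∧ z ∉ interior (coneGen L x) := by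
  unfold suppCone
  rw [(coneGen_closed hL hx).frontier_eq]; rfl

lemma suppCone_homot {L : Set E3} {x z : E3} {l : ℝ} (hL : IsCompact L) (hx : x ∉ L) (hl : 0 < l) 
    (h : z ∈ suppCone L x) : x + l • (z - x) ∈ suppCone L x := by
  rw [suppCone_iff hL hx] at h ⊢
  refine ⟨coneGen_smul hl.le h.1, fun h2 => h.2 ?_⟩
  have := coneGen_int (inv_pos.2 hl) h2
  rwa [homot_inv hl] at this

lemma coneGen_neg {L : Set E3} {x z : E3} (hL : ∀ p ∈ L, -p ∈ L) (h : z ∈ coneGen L x) : -z ∈ coneGen L (-x) := by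
  obtain ⟨p, hp, l, hl, rfl⟩ := h
  exact ⟨-p, hL p hp, l, hl, by module⟩

lemma suppCone_neg {L : Set E3} {x z : E3} (hL : ∀ p ∈ L, -p ∈ L) : z ∈ suppCone L (-x) ↔ -z ∈ suppCone L x := by
  have e : coneGen L (-x) = (Homeomorph.neg E3) ⁻¹' (coneGen L x) := by
    ext y
    constructor
    · intro h
      have := coneGen_neg hL h
      rw [neg_neg] at this
      exact this
    · intro h
      have := coneGen_neg hL (show -y ∈ coneGen L x from h)
      rw [neg_neg] at this
      exact this
  unfold suppCone
  rw [e, ← (Homeomorph.neg E3).preimage_frontier]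
  rfl

lemma graze_iff {L : Set E3} {x z : E3} (hL : IsCompact L) (hx : x ∉ L) : 
    z ∈ graze L x ↔ z ∈ L ∧ z ∈ suppCone L x := by
  unfold graze
  constructor
  · rintro ⟨h1, h2⟩
    exact ⟨hL.isClosed.frontier_subset h2, h1⟩
  · rintro ⟨h1, h2⟩
    refine ⟨h2, ?_⟩
    rw [hL.isClosed.frontier_eq]
    refine ⟨h1, fun h3 => ?_⟩
    rw [suppCone_iff hL hx] at h2
    exact h2.2 (interior_mono (fun q hq => coneGen_mem hq) h3)

lemma lt_of_interior {C : Set E3} {m : E3 →L[ℝ] ℝ} {e : ℝ} (hm : m ≠ 0) (h : ∀ q ∈ C, m q ≤ e) {p : E3} 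
    (hp : p ∈ interior C) : m p < e := by
  obtain ⟨v, hv⟩ : ∃ v, m v ≠ 0 := by
    by_contra hc; push Not at hc; exact hm (by ext v; simpa using hc v)
  obtain ⟨v, hv⟩ : ∃ v, 0 < m v := by
    rcases lt_or_gt_of_ne hv with h | h
    · exact ⟨-v, by simpa using h⟩
    · exact ⟨v, h⟩
  have hc : Tendsto (fun s : ℝ => p + s • v) (𝓝[>] 0) (𝓝 p) := by
    have : Continuous (fun s : ℝ => p + s • v) := by fun_prop
    have := this.tendsto 0
    simp only [zero_smul, add_zero] at this
    exact tendsto_nhdsWithin_of_tendsto_nhds this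
  have h1 := hc.eventually (mem_interior_iff_mem_nhds.1 hp)
  obtain ⟨s, hs, hs0⟩ := (h1.and self_mem_nhdsWithin).exists
  have := h _ hs
  have hs0' : 0 < s := hs0
  simp only [map_add, map_smul, smul_eq_mul] at this
  nlinarith [mul_pos hs0' hv]

lemma contact_graze {L : Set E3} {x p : E3} (hL : IsCompact L) (hx : x ∉ L) (hp : p ∈ L) {m : E3 →L[ℝ] ℝ} (hm : m ≠ 0) 
    (h : ∀ q ∈ L, m q ≤ m x) (he : m p = m x) : p ∈ graze L x := by
  rw [graze_iff hL hx, suppCone_iff hL hx]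
  refine ⟨hp, coneGen_mem hp, fun h2 => ?_⟩
  have := lt_of_interior hm (e := m x) (fun q hq => ?_) h2
  · linarith
  · obtain ⟨y, hy, l, hl, rfl⟩ := hq
    have := h y hy
    simp only [map_add, map_smul, map_sub, smul_eq_mul]
    nlinarith

lemma supp_graze {L : Set E3} {x z : E3} (hL : IsCompact L) (hx : x ∉ L) (hz : z ∈ suppCone L x) (hzx : z ≠ x) : 
    ∃ y ∈ graze L x, ∃ l : ℝ, 0 < l ∧ z = x + l • (y - x) := by
  have hz' := hz
  rw [suppCone_iff hL hx] at hz
  obtain ⟨y, hy, l, hl, e⟩ := hz.1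
  have hl' : 0 < l := by
    rcases hl.eq_or_lt with h | h
    · exfalso; apply hzx; rw [e, ← h]; simp
    · exact h
  refine ⟨y, ?_, l, hl', e⟩
  rw [graze_iff hL hx]
  refine ⟨hy, ?_⟩
  have := suppCone_homot hL hx (inv_pos.2 hl') hz'
  rwa [e, homot_inv hl'] at this

/-- dual frames -/
structure Frame (x w d : E3) (p1 p2 p3 : E3 →L[ℝ] ℝ) : Prop where
  rep : ∀ q, q = p1 q • x + p2 q • w + p3 q • d
  h11 : p1 x = 1
  h12 : p1 w = 0
  h13 : p1 d = 0
  h21 : p2 x = 0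
  h22 : p2 w = 1
  h23 : p2 d = 0
  h31 : p3 x = 0
  h32 : p3 w = 0
  h33 : p3 d = 1

lemma exists_frame (W : Submodule ℝ E3) (hW : Module.finrank ℝ W = 2) (x : E3) (hx : x ∉ W) : 
    ∃ e0 ∈ W, ∃ e1 ∈ W, ∃ p1 p2 p3, Frame x e0 e1 p1 p2 p3 := by
  let b := Module.finBasisOfFinrankEq ℝ W hW
  have li : LinearIndependent ℝ ![x, (b 0 : E3), (b 1 : E3)] := by
    have h0 : LinearIndependent ℝ (fun i => (b i : E3)) := b.linearIndependent.map' W.subtype W.ker_subtype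
    have h1 : LinearIndependent ℝ (Fin.cons x (fun i => (b i : E3)) : Fin 3 → E3) := by
      rw [linearIndependent_finCons]
      refine ⟨h0, fun h => hx ?_⟩
      refine Submodule.span_le.2 ?_ h
      rintro _ ⟨i, rfl⟩
      exact (b i).2
    convert h1 using 1
    ext i : 1
    fin_cases i <;> rfl
  let B := basisOfLinearIndependentOfCardEqFinrank li (by simp)
  have hB : ∀ i, B i = ![x, (b 0 : E3), (b 1 : E3)] i := fun i => by
    simp [B]
  have B0 : B 0 = x := hB 0
  have B1 : B 1 = (b 0 : E3) := hB 1
  have B2 : B 2 = (b 1 : E3) := hB 2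
  have hco : ∀ i j, LinearMap.toContinuousLinearMap (B.coord i) (B j) = if j = i then 1 else 0 := by
    intro i j
    simp [Finsupp.single_apply]
  refine ⟨b 0, (b 0).2, b 1, (b 1).2, LinearMap.toContinuousLinearMap (B.coord 0), 
    LinearMap.toContinuousLinearMap (B.coord 1), LinearMap.toContinuousLinearMap (B.coord 2), ?_⟩
  rw [← B0, ← B1, ← B2]
  refine ⟨fun q => ?_, ?_, ?_, ?_, ?_, ?_, ?_, ?_, ?_, ?_⟩
  · have := B.sum_repr q
    rw [Fin.sum_univ_three] at this
    exact this.symm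
  all_goals rw [hco]; simp
end Part5b


section Part5c
open Filter Topology

lemma Frame.change {x e0 e1 : E3} {πx π0 π1 : E3 →L[ℝ] ℝ} (F : Frame x e0 e1 πx π0 π1) {κ : ℝ} (hκ : 0 < κ) (t : ℝ) : 
    Frame x (κ⁻¹ • (e0 + t • e1)) e1 πx (κ • π0) (π1 - t • π0) := by
  have h2 : ∀ q, (κ • π0) q = κ * π0 q := fun q => rfl
  have h3 : ∀ q, (π1 - t • π0) q = π1 q - t * π0 q := fun q => rfl
  have hk : κ * κ⁻¹ = 1 := mul_inv_cancel₀ hκ.ne'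
  constructor
  · intro q
    rw [h2, h3]
    have e : πx q • x + (κ * π0 q) • κ⁻¹ • (e0 + t • e1) + (π1 q - t * π0 q) • e1 = 
      πx q • x + (κ * κ⁻¹ * π0 q) • (e0 + t • e1) + (π1 q - t * π0 q) • e1 := by module
    rw [e, hk]
    conv_lhs => rw [F.rep q]
    module
  all_goals simp [h2, h3, F.h11, F.h12, F.h13, F.h21, F.h22, F.h23, F.h31, F.h32, F.h33, hk]
  all_goals ring

lemma comb_ne {x w d : E3} {p1 p2 p3 : E3 →L[ℝ] ℝ} (F : Frame x w d p1 p2 p3) {m1 m2 m3 : ℝ}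
    (h : m1 ≠ 0 ∨ m2 ≠ 0 ∨ m3 ≠ 0) : m1 • p1 + m2 • p2 + m3 • p3 ≠ 0 := by
  intro h0
  have e1 := congrArg (fun f : E3 →L[ℝ] ℝ => f x) h0
  have e2 := congrArg (fun f : E3 →L[ℝ] ℝ => f w) h0
  have e3 := congrArg (fun f : E3 →L[ℝ] ℝ => f d) h0
  simp [F.h11, F.h21, F.h31] at e1
  simp [F.h12, F.h22, F.h32] at e2
  simp [F.h13, F.h23, F.h33] at e3
  tauto

lemma planeAt_of {L : Set E3} {x w d : E3} {p1 p2 p3 : E3 →L[ℝ] ℝ} (F : Frame x w d p1 p2 p3) (hL : IsCompact L)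
    {z1 z2 : ℝ} (hz : z1 • x + z2 • w ∉ L) {y : E3 →L[ℝ] ℝ} {b : ℝ} (hy : y (z1 • x + z2 • w) - b = 1) 
    (hg : ∀ p ∈ graze L (z1 • x + z2 • w), y p = b) : PlaneAt L p1 p2 p3 z1 z2 (y x) (y w) (y d) b := by
  refine ⟨?_, ?_⟩
  · simp only [map_add, map_smul, smul_eq_mul] at hy; linarith
  · intro p hp m1 m2 m3 hm h1 h2
    have hmz : (m1 • p1 + m2 • p2 + m3 • p3) (z1 • x + z2 • w) = m1 * z1 + m2 * z2 := by
      simp [F.h11, F.h12, F.h21, F.h22, F.h31, F.h32]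
    have hmq : ∀ q, (m1 • p1 + m2 • p2 + m3 • p3) q = m1 * p1 q + m2 * p2 q + m3 * p3 q := fun q => rfl
    have hgr := contact_graze hL hz hp (comb_ne F hm) (fun q hq => by rw [hmz, hmq]; exact h1 q hq) (by rw [hmz, hmq]; exact h2)
    have e := hg p hgr
    rw [F.rep p] at e
    simp only [map_add, map_smul, smul_eq_mul] at e
    linarith

lemma zero_mem_int {K : Set E3} (hc : Convex ℝ K) (hi : (interior K).Nonempty) (hs : ∀ p ∈ K, -p ∈ K) : 
    (0 : E3) ∈ interior K := by
  obtain ⟨p, hp⟩ := hi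
  have h := hc.combo_interior_self_mem_interior hp (hs p (interior_subset hp)) (a := 1 / 2) (b := 1 / 2) 
    (by norm_num) (by norm_num) (by norm_num)
  have e : (1 / 2 : ℝ) • p + (1 / 2 : ℝ) • (-p) = 0 := by module
  rwa [e] at h

lemma small_mem {L : Set E3} (h0 : (0 : E3) ∈ interior L) (v : E3) : ∃ ε > (0 : ℝ), ε • v ∈ L := by
  have hc : Tendsto (fun s : ℝ => s • v) (𝓝[>] 0) (𝓝 0) := by
    have : Continuous (fun s : ℝ => s • v) := by fun_prop
    have := this.tendsto 0
    simp only [zero_smul] at this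
    exact tendsto_nhdsWithin_of_tendsto_nhds this
  have h1 := hc.eventually (mem_interior_iff_mem_nhds.1 h0)
  obtain ⟨s, hs, hs0⟩ := (h1.and self_mem_nhdsWithin).exists
  exact ⟨s, hs0, hs⟩

lemma frame_surj {L : Set E3} (h0 : (0 : E3) ∈ interior L) {x w d : E3} {p1 p2 p3 : E3 →L[ℝ] ℝ} (F : Frame x w d p1 p2 p3)
    (a b c : ℝ) : ∃ ε > 0, ∃ p ∈ L, p1 p = ε * a ∧ p2 p = ε * b ∧ p3 p = ε * c := by
  obtain ⟨ε, hε, h⟩ := small_mem h0 (a • x + b • w + c • d)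
  refine ⟨ε, hε, _, h, ?_, ?_, ?_⟩ <;> 
  simp [F.h11, F.h12, F.h13, F.h21, F.h22, F.h23, F.h31, F.h32, F.h33]

lemma mkPData {K L : Set E3} (hKcomp : IsCompact K) (hKconv : Convex ℝ K) (hK0 : (0 : E3) ∈ interior K)
    (hKs : ∀ p ∈ K, -p ∈ K) (hLcomp : IsCompact L) (hLconv : Convex ℝ L) (hL0 : (0 : E3) ∈ interior L)
    (hLs : ∀ p ∈ L, -p ∈ L) (hLstrict : StrictConvex ℝ L) (hLK : L ⊆ interior K) 
    (hPl : ∀ z ∈ frontier K, ∃ y : E3 →L[ℝ] ℝ, ∃ b, y z - b = 1 ∧ ∀ p ∈ graze L z, y p = b)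
    {x w d : E3} {p1 p2 p3 : E3 →L[ℝ] ℝ} (F : Frame x w d p1 p2 p3) : 
    PData L p1 p2 p3 (fun a b => gauge K (a • x + b • w)) := by
  have hKn : K ∈ 𝓝 (0 : E3) := mem_interior_iff_mem_nhds.1 hK0
  have habs : Absorbent ℝ K := absorbent_nhds_zero hKn
  refine ⟨hLcomp, hLconv, hLs, ?_, frame_surj hL0 F, ?_, ?_, ?_, ?_, ?_, ?_⟩
  · intro m1 m2 m3 e hm p hp p' hp' h1 h2 h3
    by_contra hne
    have hmid := hLstrict hp hp' hne (show (0 : ℝ) < 1 / 2 by norm_num) (show (0 : ℝ) < 1 / 2 by norm_num) (by norm_num)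
    have := lt_of_interior (comb_ne F hm) (e := e) h1 hmid
    have hmq : ∀ q, (m1 • p1 + m2 • p2 + m3 • p3) q = m1 * p1 q + m2 * p2 q + m3 * p3 q := fun q => rfl
    rw [map_add, map_smul, map_smul, hmq, hmq, h2, h3] at this
    simp only [smul_eq_mul] at this
    linarith
  · intro a a' b b'
    have := gauge_add_le hKconv habs (a • x + b • w) (a' • x + b' • w)
    convert this using 2
    module
  · intro l a b hl
    have := gauge_smul_of_nonneg hl (s := K) (a • x + b • w)
    rw [smul_eq_mul] at this
    rw [← this]
    congr 1
    module
  · intro a b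
    have := gauge_neg (s := K) hKs (a • x + b • w)
    rw [← this]
    congr 1
    module
  · intro a b hab
    rw [gauge_pos habs ((NormedSpace.isVonNBounded_iff ℝ).2 hKcomp.isBounded)]
    intro h
    have e1 := congrArg p1 h
    have e2 := congrArg p2 h
    simp [F.h11, F.h12] at e1
    simp [F.h21, F.h22] at e2
    tauto
  · intro p hp h3
    rw [gauge_lt_one_iff_mem_interior hKconv hKn]
    apply hLK
    have := F.rep p
    rw [h3, zero_smul, add_zero] at this
    rwa [← this]
  · intro z1 z2 hz
    rw [gauge_eq_one_iff_mem_frontier hKconv hKn] at hz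
    obtain ⟨y, b, h1, h2⟩ := hPl _ hz
    exact ⟨_, _, _, _, planeAt_of F hLcomp (fun h => hz.2 (hLK h)) h1 h2⟩

lemma sym_point {L : Set E3} (hLconv : Convex ℝ L) {x w d : E3} {p1 p2 p3 : E3 →L[ℝ] ℝ} (F : Frame x w d p1 p2 p3) 
    {h : ℝ} (hh : 0 < h) (h1 : ∀ q ∈ LQ L p3, p1 q + h * p2 q ≤ 1) (h2 : ∀ q ∈ LQ L p3, p1 q - h * p2 q ≤ 1)
    (h3 : ∃ q ∈ LQ L p3, p1 q + h * p2 q = 1 ∧ 0 < p2 q) (h4 : ∃ q ∈ LQ L p3, p1 q - h * p2 q = 1 ∧ p2 q < 0) 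
    (s : ℝ) (hs : s • w ∈ coneGen L x) : -(s • w) ∈ coneGen L x := by
  obtain ⟨q, hq, l, hl, e⟩ := hs
  have e1 := congrArg p1 e
  have e2 := congrArg p2 e
  have e3 := congrArg p3 e
  simp [F.h11, F.h12] at e1
  simp [F.h21, F.h22] at e2
  simp [F.h31, F.h32] at e3
  have hl0 : l ≠ 0 := by rintro rfl; simp at e1
  have hq3 : p3 q = 0 := by tauto
  have i1 := mul_le_mul_of_nonneg_left (h1 q ⟨hq, hq3⟩) hl
  have i2 := mul_le_mul_of_nonneg_left (h2 q ⟨hq, hq3⟩) hl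
  have b1 : h * s ≤ 1 := by rw [e2]; linarith
  have b2 : -(h * s) ≤ 1 := by rw [e2]; linarith
  have m1 : h⁻¹ • w ∈ coneGen L x := by
    obtain ⟨P, hP, P1, P2⟩ := h3
    have hp : 0 < 1 - p1 P := by nlinarith
    refine ⟨P, hP.1, (1 - p1 P)⁻¹, by positivity, ?_⟩
    have hr := F.rep P
    rw [hP.2, zero_smul, add_zero] at hr
    have e5 : p2 P = (1 - p1 P) * h⁻¹ := by field_simp; linarith
    have e6 : P - x = (1 - p1 P) • (h⁻¹ • w - x) := by
      conv_lhs => rw [hr, e5]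
      module
    rw [e6, smul_smul, inv_mul_cancel₀ hp.ne']; module
  have m2 : -(h⁻¹ • w) ∈ coneGen L x := by
    obtain ⟨P, hP, P1, P2⟩ := h4
    have hp : 0 < 1 - p1 P := by nlinarith
    refine ⟨P, hP.1, (1 - p1 P)⁻¹, by positivity, ?_⟩
    have hr := F.rep P
    rw [hP.2, zero_smul, add_zero] at hr
    have e5 : p2 P = -((1 - p1 P) * h⁻¹) := by field_simp; linarith
    have e6 : P - x = (1 - p1 P) • (-(h⁻¹ • w) - x) := by
      conv_lhs => rw [hr, e5]
      module
    rw [e6, smul_smul, inv_mul_cancel₀ hp.ne']; module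
  have := coneGen_convex hLconv m1 m2 (a := (1 - h * s) / 2) (b := (1 + h * s) / 2) (by linarith) (by linarith) (by ring)
  convert this using 1
  have e7 : ((1 - h * s) / 2) • h⁻¹ • w + ((1 + h * s) / 2) • -(h⁻¹ • w) = -((h * h⁻¹ * s) • w) := by module
  rw [e7, mul_inv_cancel₀ hh.ne', one_mul]

lemma gauge_normalize {K : Set E3} (hKcomp : IsCompact K) (hKconv : Convex ℝ K) (hK0 : (0 : E3) ∈ interior K) {u : E3} 
    (hu : u ≠ 0) : 0 < gauge K u ∧ (gauge K u)⁻¹ • u ∈ frontier K := by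
  have hKn : K ∈ 𝓝 (0 : E3) := mem_interior_iff_mem_nhds.1 hK0
  have habs : Absorbent ℝ K := absorbent_nhds_zero hKn
  have hp : 0 < gauge K u := (gauge_pos habs ((NormedSpace.isVonNBounded_iff ℝ).2 hKcomp.isBounded)).2 hu
  refine ⟨hp, ?_⟩
  rw [← gauge_eq_one_iff_mem_frontier hKconv hKn, gauge_smul_of_nonneg (by positivity), smul_eq_mul, 
    inv_mul_cancel₀ hp.ne']

lemma line_mem {a b q : E3} (s : ℝ) (h : q = a + s • (b - a)) : q ∈ lineThrough a b := by
  unfold lineThrough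
  have := AffineMap.lineMap_mem_affineSpan_pair s a b
  rw [h]
  convert this using 1
  simp [AffineMap.lineMap_apply, add_comm]

lemma frontier_neg_mem {K : Set E3} (hK : K = -K) {z : E3} (hz : z ∈ frontier K) : -z ∈ frontier K := by
  have e : K = (Homeomorph.neg E3) ⁻¹' K := hK
  rw [e, ← (Homeomorph.neg E3).preimage_frontier]
  show - -z ∈ frontier K
  rwa [neg_neg]

lemma exists_func {K L : Set E3} (hKcomp : IsCompact K) (hKconv : Convex ℝ K) (hK0 : (0 : E3) ∈ interior K)
    (hKsym : K = -K) (hLcomp : IsCompact L) (hL0 : (0 : E3) ∈ interior L)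
    (hLK : L ⊆ interior K) (Δ : E3 → AffineSubspace ℝ E3)
    (hΔ : ∀ z ∈ frontier K, IsPlane (Δ z) ∧ graze L z ⊆ (Δ z : Set E3))
    (hAF : AlmostFree K L Δ) (z : E3) (hz : z ∈ frontier K) : 
    ∃ e0 ∈ (Δ z).direction, ∃ e1 ∈ (Δ z).direction, ∃ v π0 π1, Frame z e0 e1 v π0 π1 ∧ 
      ∃ a < 1, ∀ p ∈ graze L z, v p = a := by
  have hzL : z ∉ L := fun h => hz.2 (hLK h)
  have hzW : z ∉ (Δ z).direction := by
    intro h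
    have h1 := hAF z hz (-z) ⟨(Δ z).direction.neg_mem h, frontier_neg_mem hKsym hz⟩
    refine Set.disjoint_left.1 h1 ?_ (interior_subset hL0)
    exact line_mem (1 / 2) (by module)
  obtain ⟨e0, he0, e1, he1, v, π0, π1, F⟩ := exists_frame _ (hΔ z hz).1 z hzW
  refine ⟨e0, he0, e1, he1, v, π0, π1, F, ?_⟩
  have hvW : ∀ q ∈ (Δ z).direction, v q = 0 := by
    intro q hq
    by_contra hne
    apply hzW
    have hr := F.rep q
    have h2 : v q • z ∈ (Δ z).direction := by
      have : v q • z = q - (π0 q • e0 + π1 q • e1) := by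
        conv_rhs => rw [hr]
        simp [F.h11, F.h12, F.h13, F.h21, F.h22, F.h23, F.h31, F.h32, F.h33]
      rw [this]
      exact Submodule.sub_mem _ hq (Submodule.add_mem _ (Submodule.smul_mem _ _ he0) (Submodule.smul_mem _ _ he1))
    exact (Submodule.smul_mem_iff _ hne).1 h2
  have he0' : e0 ≠ 0 := by
    intro h; have := F.h22; rw [h] at this; simp at this
  obtain ⟨hκ, hw⟩ := gauge_normalize hKcomp hKconv hK0 he0'
  set w := (gauge K e0)⁻¹ • e0
  have hwW : w ∈ (Δ z).direction := Submodule.smul_mem _ _ he0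
  have hwC : w ∉ coneGen L z := by
    rintro ⟨q, hq, l, hl, e⟩
    have hl0 : l ≠ 0 := by
      rintro rfl
      apply hzW
      have : w = z := by rw [e]; simp
      exact (congrArg (· ∈ (Δ z).direction) this).mp hwW
    refine Set.disjoint_left.1 (hAF z hz w ⟨hwW, hw⟩) ?_ hq
    refine line_mem l⁻¹ ?_
    rw [e, add_sub_cancel_left, smul_smul, inv_mul_cancel₀ hl0]; module
  obtain ⟨z0, hz0, hz0C⟩ : ∃ z0 ∈ segment ℝ (0 : E3) w, z0 ∈ suppCone L z := by
    by_contra hcon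
    push Not at hcon
    have hp : IsPreconnected (segment ℝ (0 : E3) w) := (convex_segment (𝕜 := ℝ) (0 : E3) w).isPreconnected
    have hcl := coneGen_closed hLcomp hzL
    obtain ⟨u, -, hu1, hu2⟩ := hp (interior (coneGen L z)) (coneGen L z)ᶜ isOpen_interior hcl.isOpen_compl
      (fun u hu => by
        by_cases h1 : u ∈ coneGen L z
        · left
          by_contra h2
          exact hcon u hu ((suppCone_iff hLcomp hzL).2 ⟨h1, h2⟩)
        · right; exact h1)
      ⟨0, left_mem_segment _ _ _, interior_mono (fun q hq => coneGen_mem hq) hL0⟩ ⟨w, right_mem_segment _ _ _, hwC⟩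
    exact hu2 (interior_subset hu1)
  have hz0W : z0 ∈ (Δ z).direction := by
    obtain ⟨a, b, -, -, -, rfl⟩ := hz0
    simpa using Submodule.smul_mem _ b hwW
  obtain ⟨y, hy, l, hl, e⟩ := supp_graze hLcomp hzL hz0C (by rintro rfl; exact hzW hz0W)
  refine ⟨v y, ?_, fun p hp => ?_⟩
  · have := hvW z0 hz0W
    rw [e] at this
    simp [F.h11] at this
    by_contra hc; push Not at hc; nlinarith
  · have := hvW _ (AffineSubspace.vsub_mem_direction ((hΔ z hz).2 hp) ((hΔ z hz).2 hy))
    rw [vsub_eq_sub, map_sub] at this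
    linarith
end Part5c


section Part5d
open Filter Topology

lemma scale_lt {L : Set E3} (hLconv : Convex ℝ L) (h0 : (0 : E3) ∈ L) {p3 m : E3 →L[ℝ] ℝ} 
    (h : ∀ q ∈ LQ L p3, m q ≠ 1) : ∀ q ∈ LQ L p3, m q < 1 := by
  intro q hq
  by_contra hc
  push Not at hc
  have hp : 0 < m q := by linarith
  have hm : (m q)⁻¹ • q ∈ L := by
    have := hLconv.smul_mem_of_zero_mem h0 hq.1 (t := (m q)⁻¹) ⟨by positivity, inv_le_one_of_one_le₀ hc⟩
    exact this
  refine h ((m q)⁻¹ • q) ⟨hm, ?_⟩ ?_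
  · rw [map_smul, hq.2, smul_zero]
  · rw [map_smul, smul_eq_mul, inv_mul_cancel₀ hp.ne']

lemma sym_good {K L : Set E3} (hKcomp : IsCompact K) (hKconv : Convex ℝ K) (hK0 : (0 : E3) ∈ interior K)
    (hKs : ∀ p ∈ K, -p ∈ K) (hKsym : K = -K) (hLcomp : IsCompact L) (hLconv : Convex ℝ L) (hL0 : (0 : E3) ∈ interior L)
    (hLs : ∀ p ∈ L, -p ∈ L) (hLstrict : StrictConvex ℝ L) (hLK : L ⊆ interior K) 
    (hPl : ∀ z ∈ frontier K, ∃ y : E3 →L[ℝ] ℝ, ∃ b, y z - b = 1 ∧ ∀ p ∈ graze L z, y p = b)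
    (W : Submodule ℝ E3) {x : E3} (hx : x ∈ frontier K)
    (hAF : ∀ w ∈ W, w ∈ frontier K → Disjoint (lineThrough x w) L)
    {e0 e1 : E3} (he0 : e0 ∈ W) (he1 : e1 ∈ W) {πx π0 π1 : E3 →L[ℝ] ℝ} (F : Frame x e0 e1 πx π0 π1) 
    {a : ℝ} (ha : a < 1) (hag : ∀ p ∈ graze L x, πx p = a) {t : ℝ} 
    (good1 : GoodSlope (Z2 L πx π0 π1) t) (good2 : GoodSlope (negZ (Z2 L πx π0 π1)) t) (s : ℝ)
    (hs : s • (e0 + t • e1) ∈ coneGen L x) : -(s • (e0 + t • e1)) ∈ coneGen L x := by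
  have hKn : K ∈ 𝓝 (0 : E3) := mem_interior_iff_mem_nhds.1 hK0
  have hu : e0 + t • e1 ≠ 0 := by
    intro h
    have := congrArg π0 h
    simp [F.h22, F.h23] at this
  obtain ⟨hκ, hw⟩ := gauge_normalize hKcomp hKconv hK0 hu
  have F' := F.change hκ t
  generalize gauge K (e0 + t • e1) = κ at *
  have hwW : κ⁻¹ • (e0 + t • e1) ∈ W := W.smul_mem _ (W.add_mem he0 (W.smul_mem _ he1))
  have D := mkPData hKcomp hKconv hK0 hKs hLcomp hLconv hL0 hLs hLstrict hLK hPl F'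
  have ew : κ • (κ⁻¹ • (e0 + t • e1)) = e0 + t • e1 := by
    rw [smul_smul, mul_inv_cancel₀ hκ.ne', one_smul]
  rw [← ew] at hs ⊢
  generalize κ⁻¹ • (e0 + t • e1) = w at *
  have h1a : 0 < 1 - a := by linarith
  have hxL : x ∉ L := fun h => hx.2 (hLK h)
  have ex : (1 : ℝ) • x + (0 : ℝ) • w = x := by module
  have hy : PlaneAt L πx (κ • π0) (π1 - t • π0) 1 0 (((1 - a)⁻¹ • πx) x) (((1 - a)⁻¹ • πx) w) (((1 - a)⁻¹ • πx) e1) (a * (1 - a)⁻¹) := by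
    apply planeAt_of F' hLcomp
    · rw [ex]; exact hxL
    · rw [ex]
      simp only [_root_.smul_apply, F.h11, smul_eq_mul]
      field_simp
    · rw [ex]
      intro p hp
      simp only [_root_.smul_apply, hag p hp, smul_eq_mul]
      ring
  have e0' : ((1 - a)⁻¹ • πx) w = 0 := by
    simp [F'.h12]
  rw [e0'] at hy
  have a1 : ∀ q ∈ LQ L (π1 - t • π0), (πx + (κ • π0)) q < 1 := by
    refine scale_lt hLconv (interior_subset hL0) ?_
    intro q hq h1
    refine Set.disjoint_left.1 (hAF w hwW hw) ?_ hq.1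
    refine line_mem ((κ • π0) q) ?_
    have hr := F'.rep q
    have h1' : πx q = 1 - (κ • π0) q := by
      rw [_root_.add_apply] at h1; linarith
    rw [hq.2, h1'] at hr
    conv_lhs => rw [hr]
    module
  have a2 : ∀ q ∈ LQ L (π1 - t • π0), (πx - (κ • π0)) q < 1 := by
    refine scale_lt hLconv (interior_subset hL0) ?_
    intro q hq h1
    refine Set.disjoint_left.1 (hAF (-w) (W.neg_mem hwW) (frontier_neg_mem hKsym hw)) ?_ hq.1
    refine line_mem (-((κ • π0) q)) ?_
    have hr := F'.rep q
    have h1' : πx q = 1 + (κ • π0) q := by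
      rw [_root_.sub_apply] at h1; linarith
    rw [hq.2, h1'] at hr
    conv_lhs => rw [hr]
    module
  obtain ⟨h, hh, b1, b2, b3, b4⟩ := sym_dir hκ D 
    (by show gauge K ((1 : ℝ) • x + (0 : ℝ) • w) = 1
        rw [ex]; exact (gauge_eq_one_iff_mem_frontier hKconv hKn).2 hx) 
    (by show gauge K ((0 : ℝ) • x + (1 : ℝ) • w) = 1
        rw [zero_smul, one_smul, zero_add]; exact (gauge_eq_one_iff_mem_frontier hKconv hKn).2 hw)
    hy a1 a2 good1 good2
  rw [smul_smul] at hs ⊢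
  exact sym_point hLconv F' hh b1 b2 b3 b4 _ hs

lemma Z2_ne {L : Set E3} (hLcomp : IsCompact L) (hLconv : Convex ℝ L) (h0 : (0 : E3) ∈ L) {x e0 e1 : E3} (hx : x ∉ L)
    {πx π0 π1 : E3 →L[ℝ] ℝ} (F : Frame x e0 e1 πx π0 π1) : (Z2 L πx π0 π1).Nonempty := by
  obtain ⟨f, u, h1, h2⟩ := geometric_hahn_banach_closed_point hLconv hLcomp.isClosed hx
  have hu : 0 < u := by simpa using h1 0 h0
  have hf : 0 < f x := by linarith
  refine ⟨(f e0 / f x, f e1 / f x), fun p hp => ?_⟩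
  have h3 := h1 p hp
  have hr := congrArg f (F.rep p)
  simp only [map_add, map_smul, smul_eq_mul] at hr
  have e : πx p + f e0 / f x * π0 p + f e1 / f x * π1 p = f p / f x := by
    rw [hr]; field_simp
  show πx p + f e0 / f x * π0 p + f e1 / f x * π1 p ≤ 1
  rw [e, div_le_one hf]; linarith

lemma shrink_int {C : Set E3} (hC : Convex ℝ C) (h0 : (0 : E3) ∈ interior C) {u : E3} (hu : u ∈ C) {θ : ℝ} (h1 : 0 ≤ θ) 
    (h2 : θ < 1) : θ • u ∈ interior C := by
  have := hC.combo_interior_self_mem_interior h0 hu (a := 1 - θ) (b := θ) (by linarith) h1 (by ring)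
  simpa using this

lemma sym_all {C : Set E3} (hC : Convex ℝ C) (hcl : IsClosed C) (h0 : (0 : E3) ∈ interior C) 
    {x e0 e1 : E3} {πx π0 π1 : E3 →L[ℝ] ℝ} (F : Frame x e0 e1 πx π0 π1) {T : Set ℝ} (hT : Dense T) 
    (hgood : ∀ t ∈ T, ∀ s : ℝ, s • (e0 + t • e1) ∈ C → -(s • (e0 + t • e1)) ∈ C) {u : E3} (hu0 : πx u = 0) 
    (hu : u ∈ C) : -u ∈ C := by
  by_contra hn
  have hO : IsOpen {v : E3 | v ∈ interior C ∧ -v ∈ Cᶜ} := 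
    isOpen_interior.inter (hcl.isOpen_compl.preimage continuous_neg)
  -- shrink
  obtain ⟨θ, hθ⟩ : ∃ θ : ℝ, θ • u ∈ {v : E3 | v ∈ interior C ∧ -v ∈ Cᶜ} := by
    have hc : Continuous (fun θ : ℝ => -(θ • u)) := by fun_prop
    have h1 : ∀ᶠ θ : ℝ in 𝓝[<] 1, -(θ • u) ∈ Cᶜ := by
      refine (hc.tendsto 1).mono_left nhdsWithin_le_nhds |>.eventually (hcl.isOpen_compl.mem_nhds ?_)
      simpa using hn
    have h2 : ∀ᶠ θ : ℝ in 𝓝[<] 1, 0 < θ := nhdsWithin_le_nhds (lt_mem_nhds one_pos)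
    obtain ⟨θ, ⟨h3, h4⟩, h5⟩ := ((h1.and h2).and self_mem_nhdsWithin).exists
    exact ⟨θ, shrink_int hC h0 hu h4.le h5, h3⟩
  have hr := F.rep u
  rw [hu0, zero_smul, zero_add] at hr
  obtain ⟨α, β, hα, hαβ⟩ : ∃ α β : ℝ, α ≠ 0 ∧ α • e0 + β • e1 ∈ {v : E3 | v ∈ interior C ∧ -v ∈ Cᶜ} := by
    have hc : Continuous (fun α : ℝ => α • e0 + (θ * π1 u) • e1) := by fun_prop
    have h1 : ∀ᶠ α : ℝ in 𝓝[≠] (θ * π0 u), α • e0 + (θ * π1 u) • e1 ∈ {v : E3 | v ∈ interior C ∧ -v ∈ Cᶜ} := by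
      refine (hc.tendsto (θ * π0 u)).mono_left nhdsWithin_le_nhds |>.eventually (hO.mem_nhds ?_)
      have e : (θ * π0 u) • e0 + (θ * π1 u) • e1 = θ • u := by
        conv_rhs => rw [hr]
        module
      rw [e]; exact hθ
    by_cases h0' : θ * π0 u = 0
    · obtain ⟨α, h2, h3⟩ := (h1.and self_mem_nhdsWithin).exists
      rw [h0'] at h3
      exact ⟨α, _, h3, h2⟩
    · refine ⟨_, _, h0', (?_ : (θ * π0 u) • e0 + (θ * π1 u) • e1 ∈ _)⟩
      have e : (θ * π0 u) • e0 + (θ * π1 u) • e1 = θ • u := by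
        conv_rhs => rw [hr]
        module
      rw [e]; exact hθ
  have hc : Continuous (fun t : ℝ => α • (e0 + t • e1)) := by fun_prop
  obtain ⟨t, ht1, ht2⟩ := hT.inter_open_nonempty _ (hO.preimage hc) ⟨β / α, by
    show α • (e0 + (β / α) • e1) ∈ {v : E3 | v ∈ interior C ∧ -v ∈ Cᶜ}
    rw [smul_add, smul_smul, mul_div_cancel₀ _ hα]
    exact hαβ⟩
  exact ht1.2 (hgood t ht2 α (interior_subset ht1.1))

lemma final_step {L : Set E3} (hLcomp : IsCompact L) (hLconv : Convex ℝ L) (hL0 : (0 : E3) ∈ interior L)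
    (hLs : ∀ p ∈ L, -p ∈ L) {x : E3} (hx : x ∉ L) {πx : E3 →L[ℝ] ℝ} (hπ : πx x = 1) {a : ℝ} (ha : a < 1)
    (hag : ∀ p ∈ graze L x, πx p = a) (hsym : ∀ u, πx u = 0 → u ∈ coneGen L x → -u ∈ coneGen L x) : 
    ∃ l : ℝ, 0 < l ∧ suppCone L x ∩ suppCone L (-x) = (fun p => x + l • (p - x)) '' graze L x := by
  have hC := coneGen_convex (x := x) hLconv
  have h0 : (0 : E3) ∈ interior (coneGen L x) := interior_mono (fun q hq => coneGen_mem hq) hL0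
  have h1a : 0 < 1 - a := by linarith
  have hinv : (1 - a) * (1 - a)⁻¹ = 1 := mul_inv_cancel₀ h1a.ne'
  have hSneg : ∀ u, πx u = 0 → u ∈ suppCone L x → -u ∈ suppCone L x := by
    intro u hu hS
    rw [suppCone_iff hLcomp hx] at hS ⊢
    refine ⟨hsym u hu hS.1, fun hi => hS.2 ?_⟩
    have hc : Continuous (fun θ : ℝ => θ • (-u)) := by fun_prop
    have h1 : ∀ᶠ θ : ℝ in 𝓝[>] 1, θ • (-u) ∈ interior (coneGen L x) := by
      refine (hc.tendsto 1).mono_left nhdsWithin_le_nhds |>.eventually (isOpen_interior.mem_nhds ?_)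
      simpa using hi
    obtain ⟨θ, h3, h4⟩ := (h1.and self_mem_nhdsWithin).exists
    have h4' : (1 : ℝ) < θ := h4
    have h5 := hsym _ (by rw [map_smul, map_neg, hu]; simp) (interior_subset h3)
    have h6 := shrink_int hC h0 h5 (θ := θ⁻¹) (by positivity) (inv_lt_one_of_one_lt₀ h4')
    have e : θ⁻¹ • -(θ • -u) = u := by
      rw [smul_neg θ u, neg_neg, smul_smul, inv_mul_cancel₀ (by positivity), one_smul]
    rwa [e] at h6
  -- no two points of the support cone on the same ray from the origin, inside the plane
  have hray : ∀ u, u ∈ suppCone L x → ∀ θ : ℝ, 0 ≤ θ → θ < 1 → θ • u ∉ suppCone L x := by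
    intro u hu θ h1 h2 hS
    rw [suppCone_iff hLcomp hx] at hu hS
    exact hS.2 (shrink_int hC h0 hu.1 h1 h2)
  have hmx : -x ∉ suppCone L x := by
    intro h
    rw [suppCone_iff hLcomp hx] at h
    apply h.2
    have := coneGen_int (l := 2) (by norm_num) h0
    convert this using 1
    module
  refine ⟨(1 - a)⁻¹, by positivity, ?_⟩
  ext z
  constructor
  · rintro ⟨hz, hz'⟩
    rw [suppCone_neg hLs] at hz'
    have hzx : z ≠ x := by rintro rfl; exact hmx hz'
    have hzx' : -z ≠ x := by
      intro h
      apply hmx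
      have e : -x = z := by rw [← h, neg_neg]
      rw [e]; exact hz
    obtain ⟨y, hy, l, hl, e⟩ := supp_graze hLcomp hx hz hzx
    obtain ⟨y', hy', l', hl', e'⟩ := supp_graze hLcomp hx hz' hzx'
    have E1 := congrArg πx e
    have E2 := congrArg πx e'
    simp only [map_add, map_smul, map_sub, map_neg, hπ, hag y hy, hag y' hy', smul_eq_mul] at E1 E2
    have hh1 : 0 < 1 - πx z := by nlinarith
    have hh2 : 0 < 1 + πx z := by nlinarith
    obtain ⟨h, hh⟩ : ∃ h, h = πx z := ⟨_, rfl⟩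
    rw [← hh] at E1 E2 hh1 hh2
    have s1 := suppCone_homot hLcomp hx (inv_pos.2 hh1) hz
    have s2 := suppCone_homot hLcomp hx (inv_pos.2 hh2) hz'
    have i1 : (1 - h) * (1 - h)⁻¹ = 1 := mul_inv_cancel₀ hh1.ne'
    have i2 : (1 + h) * (1 + h)⁻¹ = 1 := mul_inv_cancel₀ hh2.ne'
    have t1 : x + (1 - h)⁻¹ • (z - x) = (1 - h)⁻¹ • (z - h • x) := by
      have : x + (1 - h)⁻¹ • (z - x) = (1 - h)⁻¹ • (z - h • x) + (1 - (1 - h) * (1 - h)⁻¹) • x := by module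
      rw [this, i1]; module
    have t2 : x + (1 + h)⁻¹ • (-z - x) = -((1 + h)⁻¹ • (z - h • x)) := by
      have : x + (1 + h)⁻¹ • (-z - x) = -((1 + h)⁻¹ • (z - h • x)) + (1 - (1 + h) * (1 + h)⁻¹) • x := by module
      rw [this, i2]; module
    rw [t1] at s1
    rw [t2] at s2
    have hζ : πx (z - h • x) = 0 := by simp [hπ, hh]
    have s3 := hSneg _ (by simp [hζ]) s2
    rw [neg_neg] at s3
    have hzero : h = 0 := by
      rcases lt_trichotomy h 0 with hneg | h' | hpos
      · exfalso
        refine hray _ s3 ((1 + h) * (1 - h)⁻¹) (by positivity) ?_ ?_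
        · rw [← div_eq_mul_inv, div_lt_one hh1]; linarith
        · rw [smul_smul]
          have : (1 + h) * (1 - h)⁻¹ * (1 + h)⁻¹ = (1 - h)⁻¹ := by field_simp
          rw [this]; exact s1
      · exact h'
      · exfalso
        refine hray _ s1 ((1 - h) * (1 + h)⁻¹) (by positivity) ?_ ?_
        · rw [← div_eq_mul_inv, div_lt_one hh2]; linarith
        · rw [smul_smul]
          have : (1 - h) * (1 + h)⁻¹ * (1 - h)⁻¹ = (1 + h)⁻¹ := by field_simp
          rw [this]; exact s3
    refine ⟨y, hy, ?_⟩
    have : l = (1 - a)⁻¹ := by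
      refine eq_inv_of_mul_eq_one_left ?_; linarith
    rw [← this]; exact e.symm
  · rintro ⟨p, hp, rfl⟩
    have hS := suppCone_homot hLcomp hx (inv_pos.2 h1a) ((graze_iff hLcomp hx).1 hp).2
    refine ⟨hS, ?_⟩
    rw [suppCone_neg hLs]
    apply hSneg _ _ hS
    simp only [map_add, map_smul, map_sub, hπ, hag p hp, smul_eq_mul]
    linarith

end Part5d

theorem statement4
    (K L : Set E3)
    (hKcomp : IsCompact K) (hKconv : Convex ℝ K) (hKint : (interior K).Nonempty)
    (hKsym : K = -K)
    (hLcomp : IsCompact L) (hLconv : Convex ℝ L) (hLint : (interior L).Nonempty)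
    (hLsym : L = -L) (hLstrict : StrictConvex ℝ L)
    (hLK : L ⊆ interior K)
    (Δ : E3 → AffineSubspace ℝ E3)
    (hΔ : ∀ z ∈ frontier K, IsPlane (Δ z) ∧ graze L z ⊆ (Δ z : Set E3))
    (hAF : AlmostFree K L Δ) :
    ∀ x ∈ frontier K, ∃ l : ℝ, 0 < l ∧
      suppCone L x ∩ suppCone L (-x) =
        (fun p => x + l • (p - x)) '' graze L x := by
  have hLs : ∀ p ∈ L, -p ∈ L := fun p hp => by rw [hLsym] at hp; exact hp
  have hKs : ∀ p ∈ K, -p ∈ K := fun p hp => by rw [hKsym] at hp; exact hp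
  have hK0 := zero_mem_int hKconv hKint hKs
  have hL0 := zero_mem_int hLconv hLint hLs
  have hfun := exists_func hKcomp hKconv hK0 hKsym hLcomp hL0 hLK Δ hΔ hAF
  have hPl : ∀ z ∈ frontier K, ∃ y : E3 →L[ℝ] ℝ, ∃ b, y z - b = 1 ∧ ∀ p ∈ graze L z, y p = b := by
    intro z hz
    obtain ⟨e0, -, e1, -, v, π0, π1, F, a, ha, hag⟩ := hfun z hz
    have h1a : 0 < 1 - a := by linarith
    refine ⟨(1 - a)⁻¹ • v, (1 - a)⁻¹ * a, ?_, ?_⟩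
    · show (1 - a)⁻¹ * v z - (1 - a)⁻¹ * a = 1
      rw [F.h11]; field_simp
    · intro p hp
      show (1 - a)⁻¹ * v p = (1 - a)⁻¹ * a
      rw [hag p hp]
  intro x hx
  obtain ⟨e0, he0, e1, he1, πx, π0, π1, F, a, ha, hag⟩ := hfun x hx
  have hxL : x ∉ L := fun h => hx.2 (hLK h)
  have hd := good_dense (frame_surj hL0 F) (Z2_ne hLcomp hLconv (interior_subset hL0) hxL F)
  refine final_step hLcomp hLconv hL0 hLs hxL F.h11 ha hag (fun u hu0 hu => ?_)
  refine sym_all (coneGen_convex hLconv) (coneGen_closed hLcomp hxL)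
    (interior_mono (fun q hq => coneGen_mem hq) hL0) F hd (fun t ht s hs => ?_) hu0 hu
  exact sym_good hKcomp hKconv hK0 hKs hKsym hLcomp hLconv hL0 hLs hLstrict hLK hPl _ hx
    (fun w hw1 hw2 => hAF x hx w ⟨hw1, hw2⟩) he0 he1 F ha hag ht.1 ht.2 s hs

end
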